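/- Let n ≥ 2, k ≥ 1, d ≥ 2. There exists a finite set S of elements of RFA(ℤ^d,n,k) such that the torsion problem of the subgroup ⟨S⟩ is undecidable: no algorithm decides, given a word w over S ∪ S^{-1}, whether the element of RFA(ℤ^d,n,k) represented by w has finite order. -/

import Mathlib

open Function

/-- `ℤ^d`. -/
abbrev V (d : ℕ) : Type := Fin d → ℤ

/-- A head configuration is valid if it carries at most one head. -/
def headOk {d k : ℕ} (y : V d → Option (Fin k)) : Prop :=
  ∀ u v : V d, (y u).isSome → (y v).isSome → u = v

/-- The space `X_{n,k}`: a tape in `Σ^{ℤ^d}` together with at most one head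
carrying a state in `Q = Fin k`. -/
abbrev X (d n k : ℕ) : Type :=
  { c : (V d → Fin n) × (V d → Option (Fin k)) // headOk c.2 }

/-- `DefinedBy F F' f T` : `T` is the moving-head Turing machine defined by the
local rule `f`, reading the tape on the window `F`, writing on the window `F'`,
changing the state and moving the head. -/
def DefinedBy {d n k : ℕ} (F F' : Finset (V d))
    (f : (V d → Fin n) → Fin k → (V d → Fin n) × Fin k × V d)
    (T : X d n k → X d n k) : Prop :=
  -- `f` only depends on the restriction of the tape to `F`, and only the
  -- restriction of its tape output to `F'` matters:
  (∀ x x' q, (∀ v ∈ F, x v = x' v) →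
      (∀ v ∈ F', (f x q).1 v = (f x' q).1 v) ∧ (f x q).2 = (f x' q).2) ∧
  -- a configuration with no head is fixed:
  (∀ c : X d n k, (∀ v, c.val.2 v = none) → T c = c) ∧
  -- if the head is at `v` in state `q`, apply the local rule there:
  (∀ (c : X d n k) (v : V d) (q : Fin k), c.val.2 v = some q →
    (∀ t, (T c).val.1 t =
      if t - v ∈ F' then (f (fun u => c.val.1 (u + v)) q).1 (t - v) else c.val.1 t) ∧
    (∀ t, (T c).val.2 t =
      if t = v + (f (fun u => c.val.1 (u + v)) q).2.2
      then some (f (fun u => c.val.1 (u + v)) q).2.1 else none))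

/-- A moving-head `(d,n,k)`-Turing machine. -/
def IsTM {d n k : ℕ} (T : X d n k → X d n k) : Prop :=
  ∃ F F' f, DefinedBy F F' f T

/-- A reversible moving-head Turing machine: a Turing machine admitting a
Turing machine inverse. -/
def IsRTM {d n k : ℕ} (T : X d n k → X d n k) : Prop :=
  IsTM T ∧ ∃ S : X d n k → X d n k, IsTM S ∧ S ∘ T = id ∧ T ∘ S = id

/-- The set of reversible Turing machines, viewed as permutations of `X_{n,k}`. -/
def RTMset (d n k : ℕ) : Set (Equiv.Perm (X d n k)) :=
  {π | IsTM (⇑π) ∧ IsTM (⇑π.symm)}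

/-- The group `RTM(ℤ^d,n,k)` of reversible Turing machines (a subgroup of the
permutation group of `X_{n,k}`; the set of reversible Turing machines is closed
under composition and inversion, so it coincides with the subgroup it generates). -/
def RTMgrp (d n k : ℕ) : Subgroup (Equiv.Perm (X d n k)) :=
  Subgroup.closure (RTMset d n k)

/-- Local permutations: reversible Turing machines that never move the head. -/
def LPset (d n k : ℕ) : Set (Equiv.Perm (X d n k)) :=
  {π | π ∈ RTMset d n k ∧
    ∀ (c : X d n k) (v : V d), ((π c).val.2 v).isSome = (c.val.2 v).isSome}

/-- The group `LP(ℤ^d,n,k)` of local permutations. -/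
def LPgrp (d n k : ℕ) : Subgroup (Equiv.Perm (X d n k)) :=
  Subgroup.closure (LPset d n k)

/-- Reversible finite-state automata: reversible Turing machines that never
change the tape. -/
def RFAset (d n k : ℕ) : Set (Equiv.Perm (X d n k)) :=
  {π | π ∈ RTMset d n k ∧ ∀ c : X d n k, (π c).val.1 = c.val.1}

/-- The group `RFA(ℤ^d,n,k)` of reversible finite-state automata. -/
def RFAgrp (d n k : ℕ) : Subgroup (Equiv.Perm (X d n k)) :=
  Subgroup.closure (RFAset d n k)

/-- State-permutations: reversible machines that never move the head and never
change the tape, only permuting the state as a function of the tape. -/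
def SPset (d n k : ℕ) : Set (Equiv.Perm (X d n k)) :=
  {π | π ∈ RTMset d n k ∧ (∀ c : X d n k, (π c).val.1 = c.val.1) ∧
    ∀ (c : X d n k) (v : V d), ((π c).val.2 v).isSome = (c.val.2 v).isSome}

/-- The group `SP(ℤ^d,n,k)` of state-permutations. -/
def SPgrp (d n k : ℕ) : Subgroup (Equiv.Perm (X d n k)) :=
  Subgroup.closure (SPset d n k)

/-- The machines `T_u` that move the head by `u ∈ ℤ^d` without changing the
tape or the state. -/
def Shiftset (d n k : ℕ) : Set (Equiv.Perm (X d n k)) :=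
  {π | ∃ u : V d, ∀ c : X d n k,
    (π c).val.1 = c.val.1 ∧ ∀ t, (π c).val.2 t = c.val.2 (t - u)}

/-- The group `Shift(ℤ^d,n,k)`. -/
def Shiftgrp (d n k : ℕ) : Subgroup (Equiv.Perm (X d n k)) :=
  Subgroup.closure (Shiftset d n k)

/-- The group `OB(ℤ^d,n,k) = ⟨Shift(ℤ^d,n,k), LP(ℤ^d,n,k)⟩` of oblivious Turing
machines. -/
def OBgrp (d n k : ℕ) : Subgroup (Equiv.Perm (X d n k)) :=
  Subgroup.closure (Shiftset d n k ∪ LPset d n k)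

/-- The group `EL(ℤ^d,n,k) = ⟨RFA(ℤ^d,n,k), LP(ℤ^d,n,k)⟩` of elementary Turing
machines. -/
def ELgrp (d n k : ℕ) : Subgroup (Equiv.Perm (X d n k)) :=
  Subgroup.closure (RFAset d n k ∪ LPset d n k)

/-- Evaluation of a word over a finite set `S ∪ S⁻¹` of generators (given by
`π : Fin m → Equiv.Perm (X d n k)`): each letter is a generator or its inverse. -/
def evalWord {d n k : ℕ} {m : ℕ} (π : Fin m → Equiv.Perm (X d n k))
    (w : List (Fin m × Bool)) : Equiv.Perm (X d n k) :=
  (w.map fun p => if p.2 then π p.1 else (π p.1)⁻¹).prod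

namespace Rfa

inductive W5 | a0 | a1 | ab | eq | be

abbrev Lab (G : Type) := G × Bool

structure Col (G : Type) where
  l : Lab G
  u : W5
  gs : Option (Lab G)
  w : W5
  g : Option (Lab G)
  kA : ZMod 3
  kB : ZMod 3
  pb : Bool
  pf : Bool
  k : ZMod 3
  dg : Bool
  hs : Option (W5 × G × G)

inductive Ty | E | RU | CU

structure Tile (G : Type) where
  w : Col G
  e : Col G
  s : Col G
  n : Col G
  ty : Ty

/-- The cellular automaton data. -/
structure CA (G : Type) where
  f : G → G → G → G
  b : G
  hb : f b b b = b
  bad : G → Prop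
  hbad : ¬ bad b

variable {G : Type}

def last (o : Option (Lab G)) : Bool := o.elim false Prod.snd

@[simp] theorem last_none : last (none : Option (Lab G)) = false := rfl
@[simp] theorem last_some (L : Lab G) : last (some L) = L.2 := rfl

def stepw : W5 → W5 → Prop
  | .a0, y => y = .a1
  | .a1, y => y = .eq ∨ y = .ab
  | .ab, y => y = .eq ∨ y = .ab
  | .eq, y => y = .be
  | .be, y => y = .be

def chk (K : CA G) (g : Option (Lab G)) : Option (W5 × G × G) → G → W5 → Option (W5 × G × G) → Prop
  | none, c, u, h => h = some (u, c, K.b) ∧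
      match u with
      | .a0 => g = none
      | .a1 => g = some (K.f K.b K.b c, false)
      | .eq => True
      | .be => True
      | .ab => False
  | some (u0, c0, cm), c, u, h => h = some (u, c, c0) ∧
      match u0 with
      | .a0 => u = .a0
      | .a1 => u = .a1
      | .be => u = .be ∨ u = .eq
      | .eq => u = .ab ∧ g = some (K.f cm c0 c, false)
      | .ab => u = .ab

def fin (K : CA G) (g : Option (Lab G)) : Option (W5 × G × G) → Prop
  | none => False
  | some (u0, c0, cm) =>
      match u0 with
      | .eq => g = some (K.f cm c0 K.b, false)
      | .be => g = some (K.f c0 K.b K.b, true)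
      | _ => True

structure Under (K : CA G) (w e x : Col G) : Prop where
  wpf : w.pf = true
  wpb : w.pb = false
  epb : e.pb = true
  epf : e.pf = false
  wk : w.k = x.k + 1
  ek : e.k = x.k + 1
  l : e.l = w.l
  u : e.u = w.u
  gs : e.gs = w.gs
  dg : e.dg = false
  hs : e.hs = none
  fin : fin K w.g w.hs
  wlast : Rfa.last w.g = true → e.g = none ∧ e.w = .a0
  nlast : Rfa.last w.g = false → e.g = some x.l ∧ stepw w.w e.w ∧ x.pf = Rfa.last w.gs ∧ x.pb = w.gs.isNone

structure Same (r r' : Col G) : Prop where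
  l : r'.l = r.l
  u : r'.u = r.u
  gs : r'.gs = r.gs
  w : r'.w = r.w
  g : r'.g = r.g
  kA : r'.kA = r.kA
  kB : r'.kB = r.kB

structure Half (K : CA G) (r r' c c' : Col G) : Prop where
  pf : r.pf = false
  pb : r'.pb = false
  same : Same r r'
  g : r.g = c.gs
  kA : c.k = r.kA
  kB : c'.k = r.kB
  chk : chk K r.g r.hs c.l.1 c.u r'.hs
  bad : ¬ K.bad r.l.1
  dff : r.dg = false → c.dg = false → r'.dg = true ∧ r.w = c.u
  dft : r.dg = false → c.dg = true → r'.dg = false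
  dtf : r.dg = true → c.dg = false ∧ r'.dg = true

def Rloc (K : CA G) (t : Tile G) : Prop :=
  match t.ty with
  | .E => Half K t.w t.e t.s t.n ∧ Half K t.s t.n t.w t.e
  | .RU => t.s = t.n ∧ Under K t.w t.e t.n
  | .CU => t.w = t.e ∧ Under K t.s t.n t.e

structure FaceV (K : CA G) (sw se nw ne : Tile G) (oi oj : Option (Lab G)) : Prop where
  r1 : Rloc K sw
  r2 : Rloc K se
  r3 : Rloc K nw
  r4 : Rloc K ne
  mS : sw.e = se.w
  mN : nw.e = ne.w
  mW : sw.n = nw.s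
  mE : se.n = ne.s
  W : ∀ L, oi = some L → sw.n.l = L ∧ sw.n.pf = last oj ∧ sw.n.pb = oj.isNone
  E : last oi = false → se.n.pf = last oj ∧ se.n.pb = oj.isNone
  S : ∀ L, oj = some L → sw.e.l = L ∧ sw.e.pf = last oi ∧ sw.e.pb = oi.isNone
  N : last oj = false → nw.e.pf = last oi ∧ nw.e.pb = oi.isNone

def Ty.tr : Ty → Ty | .E => .E | .RU => .CU | .CU => .RU

def Tile.tr (t : Tile G) : Tile G := ⟨t.s, t.n, t.w, t.e, t.ty.tr⟩

theorem Rloc.tr {K : CA G} {t : Tile G} (h : Rloc K t) : Rloc K t.tr := by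
  rcases t with ⟨w, e, s, n, ty⟩
  cases ty <;> simp only [Rloc, Tile.tr, Ty.tr] at h ⊢
  · exact h.symm
  · exact h
  · exact h

theorem FaceV.tr {K : CA G} {sw se nw ne : Tile G} {oi oj} (h : FaceV K sw se nw ne oi oj) :
    FaceV K sw.tr nw.tr se.tr ne.tr oj oi :=
  ⟨h.r1.tr, h.r3.tr, h.r2.tr, h.r4.tr, h.mW, h.mE, h.mS, h.mN, h.S, h.N, h.W, h.E⟩

/-- index labels -/
noncomputable def olab (m : ℤ) (γ : ℤ → G) (i : ℤ) : Option (Lab G) :=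
  if i = 0 then none else some (γ i, decide (i = m))

theorem olab_zero {m : ℤ} {γ : ℤ → G} : olab m γ 0 = none := by simp [olab]
theorem olab_pos {m : ℤ} {γ : ℤ → G} {i : ℤ} (h : i ≠ 0) :
    olab m γ i = some (γ i, decide (i = m)) := by simp [olab, h]
theorem last_olab {m : ℤ} {γ : ℤ → G} {i : ℤ} (hm : m ≠ 0) : last (olab m γ i) = decide (i = m) := by
  unfold olab; split_ifs with h
  · simp [last]; omega
  · simp [last]
theorem isNone_olab {m : ℤ} {γ : ℤ → G} {i : ℤ} : (olab m γ i).isNone = decide (i = 0) := by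
  unfold olab; split_ifs with h <;> simp [h]

def CA.step (K : CA G) (γ : ℤ → G) (i : ℤ) : G := K.f (γ (i - 2)) (γ (i - 1)) (γ i)

noncomputable def pat (i a : ℤ) : W5 :=
  if i = 0 then .a0 else if i = 1 then .a1 else
    if a < i - 1 then .be else if a = i - 1 then .eq else .ab

end Rfa

namespace Rfa
variable {G : Type}

structure Block (K : CA G) (m : ℤ) (γ : ℤ → G) (x : ℤ → ℤ → Tile G) : Prop where
  hm : 2 ≤ m
  hγ : ∀ i, i < 1 ∨ m < i → γ i = K.b
  F : ∀ i j, 0 ≤ i → i ≤ m → 0 ≤ j → j ≤ m →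
    FaceV K (x i j) (x (i+1) j) (x i (j+1)) (x (i+1) (j+1)) (olab m γ i) (olab m γ j)

def trx (x : ℤ → ℤ → Tile G) : ℤ → ℤ → Tile G := fun a b => (x b a).tr

variable {K : CA G} {m : ℤ} {γ : ℤ → G} {x : ℤ → ℤ → Tile G}

theorem Block.tr (h : Block K m γ x) : Block K m γ (trx x) :=
  ⟨h.hm, h.hγ, fun i j a b c d => (h.F j i c d a b).tr⟩

/-- row edges -/
theorem Block.row (h : Block K m γ x) {a b : ℤ} (ha : 0 ≤ a) (ha' : a ≤ m) (hb : 1 ≤ b) (hb' : b ≤ m) :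
    (x a b).e.l = (γ b, decide (b = m)) ∧ (x a b).e.pf = decide (a = m) ∧
    (x a b).e.pb = decide (a = 0) ∧ (x (a+1) b).w = (x a b).e := by
  have hm := h.hm
  have F := h.F a b ha ha' (by omega) hb'
  have := F.S _ (olab_pos (by omega))
  rw [last_olab (by omega), isNone_olab] at this
  exact ⟨this.1, this.2.1, this.2.2, F.mS.symm⟩

theorem Block.rloc (h : Block K m γ x) {a b : ℤ} (ha : 0 ≤ a) (ha' : a ≤ m + 1) (hb : 0 ≤ b) (hb' : b ≤ m + 1) :
    Rloc K (x a b) := by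
  have hm := h.hm
  rcases (show a ≤ m ∨ a = (a-1)+1 ∧ 0 ≤ a-1 ∧ a - 1 ≤ m by omega) with ha2 | ⟨ha2, h1, h2⟩ <;>
  rcases (show b ≤ m ∨ b = (b-1)+1 ∧ 0 ≤ b-1 ∧ b - 1 ≤ m by omega) with hb2 | ⟨hb2, h3, h4⟩
  · exact (h.F a b ha ha2 hb hb2).r1
  · rw [hb2]; exact (h.F a (b-1) ha ha2 h3 h4).r3
  · rw [ha2]; exact (h.F (a-1) b h1 h2 hb hb2).r2
  · rw [ha2, hb2]; exact (h.F (a-1) (b-1) h1 h2 h3 h4).r4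

theorem Block.tyRU (h : Block K m γ x) {a b : ℤ} (ha : 1 ≤ a) (ha' : a ≤ m) (hb : 1 ≤ b) (hb' : b ≤ m) :
    (x a b).ty ≠ .RU := by
  intro ht
  have R := h.rloc (a := a) (b := b) (by omega) (by omega) (by omega) (by omega)
  simp only [Rloc, ht] at R
  have r := h.row (a := a-1) (b := b) (by omega) (by omega) hb hb'
  have := R.2.wpf
  rw [sub_add_cancel] at r
  rw [r.2.2.2, r.2.1] at this
  have := of_decide_eq_true this; omega

theorem Block.half (h : Block K m γ x) {a b : ℤ} (ha : 1 ≤ a) (ha' : a ≤ m) (hb : 1 ≤ b) (hb' : b ≤ m) :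
    Half K (x (a-1) b).e (x a b).e (x a (b-1)).n (x a b).n := by
  have R := h.rloc (a := a) (b := b) (by omega) (by omega) (by omega) (by omega)
  have h1 := h.tyRU ha ha' hb hb'
  have h2 := h.tr.tyRU hb hb' ha ha'
  have r := (h.row (a := a-1) (b := b) (by omega) (by omega) hb hb').2.2.2
  have c := (h.tr.row (a := b-1) (b := a) (by omega) (by omega) ha ha').2.2.2
  rw [sub_add_cancel] at r c
  simp only [trx, Tile.tr] at c h2
  cases ht : (x a b).ty
  · simp only [Rloc, ht] at R
    rw [← r, ← c]; exact R.1
  · exact absurd ht h1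
  · rw [ht] at h2; exact absurd rfl h2

theorem Same.trans' {a b c : Col G} (h : Same a b) (h' : Same b c) : Same a c :=
  ⟨h'.l.trans h.l, h'.u.trans h.u, h'.gs.trans h.gs, h'.w.trans h.w, h'.g.trans h.g,
    h'.kA.trans h.kA, h'.kB.trans h.kB⟩

theorem Block.same (h : Block K m γ x) {b : ℤ} (hb : 1 ≤ b) (hb' : b ≤ m) (a : ℕ) (ha : (a : ℤ) ≤ m) :
    Same (x 0 b).e (x a b).e := by
  induction a with
  | zero => exact ⟨rfl, rfl, rfl, rfl, rfl, rfl, rfl⟩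
  | succ a ih =>
    have := (h.half (a := (a+1 : ℕ)) (b := b) (by push_cast; omega) ha hb hb').same
    push_cast at this ha ⊢
    rw [add_sub_cancel_right] at this
    exact (ih (by omega)).trans' this

theorem Block.same' (h : Block K m γ x) {a b : ℤ} (hb : 1 ≤ b) (hb' : b ≤ m) (h0 : 0 ≤ a) (ha : a ≤ m) :
    Same (x 0 b).e (x a b).e := by
  lift a to ℕ using h0; exact h.same hb hb' a ha

theorem Block.kL (h : Block K m γ x) {b : ℤ} (hb : 1 ≤ b) (hb' : b ≤ m) :
    (x 0 b).e.k = (x 1 0).n.kA := by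
  have hm := h.hm
  have H := h.tr.half (a := b) (b := 1) hb hb' (by omega) (by omega)
  have S := h.tr.same' (a := b-1) (b := 1) (by omega) (by omega) (by omega) (by omega)
  have := H.kA
  simp only [trx, Tile.tr, sub_self] at this S
  rw [this, S.kA]

theorem Block.kR (h : Block K m γ x) {b : ℤ} (hb : 1 ≤ b) (hb' : b ≤ m) :
    (x m b).e.k = (x m 0).n.kB := by
  have hm := h.hm
  have H := h.tr.half (a := b) (b := m) hb hb' (by omega) (by omega)
  have S := h.tr.same' (a := b-1) (b := m) (by omega) (by omega) (by omega) (by omega)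
  have := H.kB
  simp only [trx, Tile.tr] at this S
  rw [this, S.kB]

theorem z3 (κ a : ZMod 3) (h : κ = a + 1) (h' : a = κ + 1) : False := by
  revert κ a; decide

/-- no wrong ties -/
theorem noTie (hm : 2 ≤ m) (t : ℤ → Tile G) (κ : ZMod 3)
    (hmat : ∀ b, 1 ≤ b → b + 1 ≤ m → (t b).n = (t (b+1)).s)
    (hR : ∀ b, 1 ≤ b → b ≤ m → Rloc K (t b))
    (hE : ∀ b, 1 ≤ b → b ≤ m → (t b).ty ≠ .E)
    (hk : ∀ b, 1 ≤ b → b ≤ m → (t b).e.k = κ ∨ (t b).w.k = κ) {b : ℤ} (hb : 1 ≤ b) (hb' : b ≤ m) :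
    (t b).ty = .RU := by
  have key : ∀ b, 1 ≤ b → b ≤ m →
      ((t b).s = (t b).n ∧ κ = (t b).n.k + 1 ∧ (t b).ty = .RU) ∨ ((t b).s.k = κ + 1 ∧ (t b).n.k = κ + 1
        ∧ (t b).s.pb = false ∧ (t b).n.pb = true) := by
    intro b h1 h2
    have R := hR b h1 h2
    have k := hk b h1 h2
    cases ht : (t b).ty
    · exact absurd ht (hE b h1 h2)
    · simp only [Rloc, ht] at R
      left
      refine ⟨R.1, ?_, rfl⟩
      rcases k with k | k
      · rw [← k, R.2.ek]
      · rw [← k, R.2.wk]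
    · simp only [Rloc, ht] at R
      right
      have : (t b).e.k = κ := by
        rcases k with k | k
        · exact k
        · rw [← R.1, k]
      exact ⟨by rw [R.2.wk, this], by rw [R.2.ek, this], R.2.wpb, R.2.epb⟩
  have two : ∀ b, 1 ≤ b → b + 1 ≤ m → (t b).ty = .RU ∧ (t (b+1)).ty = .RU := by
    intro b h1 h2
    have e := hmat b h1 h2
    rcases key b h1 (by omega) with ⟨p1, p2, p3⟩ | ⟨p1, p2, p3, p4⟩ <;>
    rcases key (b+1) (by omega) h2 with ⟨q1, q2, q3⟩ | ⟨q1, q2, q3, q4⟩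
    · exact ⟨p3, q3⟩
    · rw [e] at p2; exact (z3 _ _ p2 q1).elim
    · rw [e, q1] at p2; exact (z3 _ _ q2 p2).elim
    · rw [e, q3] at p4; exact absurd p4 (by decide)
  rcases (show b + 1 ≤ m ∨ b = (b-1)+1 ∧ 1 ≤ b - 1 by omega) with h1 | ⟨h1, h2⟩
  · exact (two b hb h1).1
  · have := (two (b-1) h2 (by omega)).2
    rwa [← h1] at this

theorem Block.ruL (h : Block K m γ x) {b : ℤ} (hb : 1 ≤ b) (hb' : b ≤ m) : (x 0 b).ty = .RU := by
  have hm := h.hm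
  refine noTie (K := K) hm (fun b => x 0 b) (x 1 0).n.kA ?_ ?_ ?_ ?_ hb hb'
  · intro b h1 h2
    exact (h.F 0 b le_rfl (by omega) (by omega) (by omega)).mW
  · intro b h1 h2; exact h.rloc le_rfl (by omega) (by omega) (by omega)
  · intro b h1 h2 ht
    have R := h.rloc (a := 0) (b := b) le_rfl (by omega) (by omega) (by omega)
    simp only [Rloc, ht] at R
    have := R.1.pb
    rw [(h.row le_rfl (by omega) h1 h2).2.2.1] at this
    simp at this
  · intro b h1 h2; left; exact h.kL h1 h2

theorem Block.ruR (h : Block K m γ x) {b : ℤ} (hb : 1 ≤ b) (hb' : b ≤ m) : (x (m+1) b).ty = .RU := by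
  have hm := h.hm
  refine noTie (K := K) hm (fun b => x (m+1) b) (x m 0).n.kB ?_ ?_ ?_ ?_ hb hb'
  · intro b h1 h2
    exact (h.F m b (by omega) (by omega) (by omega) (by omega)).mE
  · intro b h1 h2; exact h.rloc (by omega) (by omega) (by omega) (by omega)
  · intro b h1 h2 ht
    have R := h.rloc (a := m+1) (b := b) (by omega) (by omega) (by omega) (by omega)
    simp only [Rloc, ht] at R
    have := R.1.pf
    have r := h.row (a := m) (b := b) (by omega) (by omega) h1 h2
    rw [r.2.2.2, r.2.1] at this
    simp at this
  · intro b h1 h2; right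
    rw [(h.row (a := m) (b := b) (by omega) (by omega) h1 h2).2.2.2]; exact h.kR h1 h2

theorem Block.uL (h : Block K m γ x) {b : ℤ} (hb : 1 ≤ b) (hb' : b ≤ m) :
    (x 0 b).s = (x 0 b).n ∧ Under K (x 0 b).w (x 0 b).e (x 0 b).n := by
  have hm := h.hm
  have R := h.rloc (a := 0) (b := b) le_rfl (by omega) (by omega) (by omega)
  simpa only [Rloc, h.ruL hb hb'] using R

theorem Block.uR (h : Block K m γ x) {b : ℤ} (hb : 1 ≤ b) (hb' : b ≤ m) :
    (x (m+1) b).s = (x (m+1) b).n ∧ Under K (x (m+1) b).w (x (m+1) b).e (x (m+1) b).n := by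
  have hm := h.hm
  have R := h.rloc (a := m+1) (b := b) (by omega) (by omega) (by omega) (by omega)
  simpa only [Rloc, h.ruR hb hb'] using R

theorem constEdge (t : ℤ → Tile G) (hm : 0 ≤ m) (hmat : ∀ b, 0 ≤ b → b ≤ m → (t b).n = (t (b+1)).s)
    (hs : ∀ b, 1 ≤ b → b ≤ m → (t b).s = (t b).n) : (t 0).n = (t (m+1)).s ∧
      ∀ b, 0 ≤ b → b ≤ m → (t b).n = (t 0).n := by
  have : ∀ b : ℕ, (b : ℤ) ≤ m → (t b).n = (t 0).n := by
    intro b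
    induction b with
    | zero => intro _; rfl
    | succ b ih =>
      intro hb; push_cast at hb ⊢
      rw [← hs _ (by omega) (by omega), ← hmat _ (by omega) (by omega)]
      exact ih (by omega)
  have this : ∀ b, 0 ≤ b → b ≤ m → (t b).n = (t 0).n := by
    intro b h0 h; lift b to ℕ using h0; exact this b h
  exact ⟨by rw [← hmat _ hm le_rfl, this _ hm le_rfl], this⟩

theorem Block.cL (h : Block K m γ x) : (x 0 0).n = (x 0 (m+1)).s ∧
      ∀ b, 0 ≤ b → b ≤ m → (x 0 b).n = (x 0 0).n := by
  have hm := h.hm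
  exact constEdge (fun b => x 0 b) (by omega)
    (fun b h1 h2 => (h.F 0 b le_rfl (by omega) (by omega) (by omega)).mW) (fun b h1 h2 => (h.uL h1 h2).1)

theorem Block.cR (h : Block K m γ x) : (x (m+1) 0).n = (x (m+1) (m+1)).s ∧
      ∀ b, 0 ≤ b → b ≤ m → (x (m+1) b).n = (x (m+1) 0).n := by
  have hm := h.hm
  exact constEdge (fun b => x (m+1) b) (by omega)
    (fun b h1 h2 => (h.F m b (by omega) (by omega) (by omega) (by omega)).mE) (fun b h1 h2 => (h.uR h1 h2).1)

end Rfa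

namespace Rfa
variable {G : Type}
variable {K : CA G} {m : ℤ} {γ : ℤ → G} {x : ℤ → ℤ → Tile G}

theorem Block.diag0 (h : Block K m γ x) (N : ℕ) : ∀ a b : ℤ, 1 ≤ a → a ≤ m → 1 ≤ b → b ≤ m →
    a + b = N → (x (a-1) b).e.dg = decide (b < a) ∧ (x a (b-1)).n.dg = decide (a < b) := by
  have hm := h.hm
  induction N using Nat.strong_induction_on with
  | _ N ih =>
  -- one direction for arbitrary blocks
  have one : ∀ (y : ℤ → ℤ → Tile G), Block K m γ y → (∀ M < N, ∀ a b : ℤ, 1 ≤ a → a ≤ m → 1 ≤ b → b ≤ m →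
      a + b = M → (y (a-1) b).e.dg = decide (b < a) ∧ (y a (b-1)).n.dg = decide (a < b)) →
      ∀ a b : ℤ, 1 ≤ a → a ≤ m → 1 ≤ b → b ≤ m → a + b = N → (y (a-1) b).e.dg = decide (b < a) := by
    intro y hy ihy a b ha ha' hb hb' hN
    rcases (show a = 1 ∨ 1 ≤ a - 1 by omega) with rfl | h1
    · rw [sub_self, (hy.uL hb hb').2.dg]; symm; simp; omega
    · have I := ihy (N-1) (by omega) (a-1) b h1 (by omega) hb hb' (by omega)
      have H := hy.half h1 (by omega) hb hb'
      rcases lt_trichotomy b (a-1) with hl | hl | hl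
      · rw [(H.dtf (by rw [I.1]; simpa using hl)).2]; symm; simp; omega
      · rw [(H.dff (by rw [I.1]; simp; omega) (by rw [I.2]; simp; omega)).1]; symm; simp; omega
      · rw [(H.dft (by rw [I.1]; simp; omega) (by rw [I.2]; simp; omega))]; symm; simp; omega
  intro a b ha ha' hb hb' hN
  refine ⟨one x h ih a b ha ha' hb hb' hN, ?_⟩
  exact one (trx x) h.tr (fun M hM a b ha ha' hb hb' hN =>
    (ih M hM b a hb hb' ha ha' (by omega)).symm) b a hb hb' ha ha' (by omega)

/-- The row's `w` equals the column's `u`. -/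
theorem Block.diag (h : Block K m γ x) {b : ℤ} (hb : 1 ≤ b) (hb' : b ≤ m) :
    (x 0 b).e.w = (x b 0).n.u := by
  have D := h.diag0 (b+b).toNat b b hb hb' hb hb' (by omega)
  have H := h.half hb hb' hb hb'
  rw [← (h.same' hb hb' (a := b-1) (by omega) (by omega)).w]
  exact (H.dff (by rw [D.1]; simp) (by rw [D.2]; simp)).2.trans
    (h.tr.same' hb hb' (a := b-1) (by omega) (by omega)).u

theorem decode (hm : 2 ≤ m) (hγ : ∀ i, i < 1 ∨ m < i → γ i = K.b) (g : Option (Lab G))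
    (u : ℤ → W5) (hs : ℤ → Option (W5 × G × G)) (h0 : hs 0 = none)
    (hc : ∀ a, 1 ≤ a → a ≤ m → chk K g (hs (a-1)) (γ a) (u a) (hs a)) (hf : fin K g (hs m)) :
    ∃ i, 0 ≤ i ∧ i ≤ m + 2 ∧ g = olab (m+2) (K.step γ) i ∧ ∀ a, 1 ≤ a → a ≤ m → u a = pat i a := by
  have inv : ∀ a : ℕ, 1 ≤ a → (a : ℤ) ≤ m → hs a = some (u a, γ a, γ (a-1)) ∧
     ((g = none ∧ ∀ c, 1 ≤ c → c ≤ (a:ℤ) → u c = .a0) ∨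
      (g = some (K.f K.b K.b (γ 1), false) ∧ ∀ c, 1 ≤ c → c ≤ (a:ℤ) → u c = .a1) ∨
      (∀ c, 1 ≤ c → c ≤ (a:ℤ) → u c = .be) ∨
      (∃ e, 1 ≤ e ∧ e ≤ (a:ℤ) ∧ (∀ c, 1 ≤ c → c < e → u c = .be) ∧ u e = .eq ∧
        (∀ c, e < c → c ≤ a → u c = .ab) ∧ (e < a → g = some (K.f (γ (e-1)) (γ e) (γ (e+1)), false)))) := by
    intro a h1
    induction a, h1 using Nat.le_induction with
    | base =>
      intro _
      have c := hc 1 le_rfl (by omega)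
      have hu : ∀ v, u 1 = v → ∀ c : ℤ, 1 ≤ c → c ≤ ((1:ℕ):ℤ) → u c = v := by
        intro v hv c h1 h2; rw [show c = 1 by push_cast at h2; omega, hv]
      rw [sub_self, h0] at c
      have hb0 := hγ 0 (by omega)
      refine ⟨by simpa [hb0] using c.1, ?_⟩
      have c2 := c.2
      cases hu1 : u 1 <;> rw [hu1] at c2 <;> simp only at c2
      · exact Or.inl ⟨c2, hu _ hu1⟩
      · exact Or.inr (Or.inl ⟨c2, hu _ hu1⟩)
      · exact Or.inr (Or.inr (Or.inr ⟨1, le_rfl, by simp, by intro c; omega, hu1,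
          by intro c h1 h2; push_cast at h2; omega, by simp⟩))
      · exact Or.inr (Or.inr (Or.inl (hu _ hu1)))
    | succ a h1 ih =>
      intro ha
      push_cast at ha ⊢
      obtain ⟨hh, I⟩ := ih (by omega)
      have c := hc (a+1) (by omega) ha
      rw [add_sub_cancel_right, hh] at c
      refine ⟨by rw [add_sub_cancel_right]; exact c.1, ?_⟩
      have c2 := c.2
      have ext : ∀ v, (∀ c, 1 ≤ c → c ≤ (a:ℤ) → u c = v) → u (a+1) = v →
          ∀ c, 1 ≤ c → c ≤ (a:ℤ)+1 → u c = v := by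
        intro v hv hv2 c h1 h2
        rcases (show c ≤ a ∨ c = a+1 by omega) with h | h
        · exact hv c h1 h
        · rw [h, hv2]
      rcases I with ⟨I1, I2⟩ | ⟨I1, I2⟩ | I2 | ⟨e, e1, e2, e3, e4, e5, e6⟩
      · rw [I2 a (by omega) le_rfl] at c2
        exact Or.inl ⟨I1, ext _ I2 c2⟩
      · rw [I2 a (by omega) le_rfl] at c2
        exact Or.inr (Or.inl ⟨I1, ext _ I2 c2⟩)
      · rw [I2 a (by omega) le_rfl] at c2
        rcases c2 with c2 | c2
        · exact Or.inr (Or.inr (Or.inl (ext _ I2 c2)))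
        · exact Or.inr (Or.inr (Or.inr ⟨a+1, by omega, le_rfl, fun c h h' => I2 c h (by omega), c2,
            by intro c; omega, by omega⟩))
      · refine Or.inr (Or.inr (Or.inr ⟨e, e1, by omega, e3, e4, ?_⟩))
        rcases (show e < a ∨ e = a by omega) with h | h
        · rw [e5 a h le_rfl] at c2
          refine ⟨?_, fun _ => e6 h⟩
          intro c h1 h2
          rcases (show c ≤ a ∨ c = a+1 by omega) with h | h
          · exact e5 c h1 h
          · rw [h]; exact c2
        · subst h
          rw [e4] at c2
          refine ⟨?_, fun _ => c2.2⟩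
          intro c h1 h2
          rw [show c = a+1 by omega]; exact c2.1
  have hmm : ((m.toNat : ℕ) : ℤ) = m := by omega
  obtain ⟨hh, I⟩ := inv m.toNat (by omega) (by omega)
  rw [hmm] at hh I
  rw [hh] at hf
  rcases I with ⟨I1, I2⟩ | ⟨I1, I2⟩ | I2 | ⟨e, e1, e2, e3, e4, e5, e6⟩
  · exact ⟨0, le_rfl, by omega, by rw [I1, olab_zero], fun a h h' => by rw [I2 a h h']; simp [pat]⟩
  · refine ⟨1, by omega, by omega, ?_, fun a h h' => by rw [I2 a h h']; simp [pat]⟩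
    rw [I1, olab_pos (by omega), CA.step, hγ (1-2) (by omega), hγ (1-1) (by omega)]
    simp; omega
  · refine ⟨m+2, by omega, le_rfl, ?_, fun a h h' => ?_⟩
    · rw [I2 m (by omega) le_rfl] at hf
      simp only [fin] at hf
      rw [hf, olab_pos (by omega), CA.step, hγ (m+2-1) (by omega), hγ (m+2) (by omega)]
      simp
    · rw [I2 a h h', pat, if_neg (by omega), if_neg (by omega), if_pos (by omega)]
  · refine ⟨e+1, by omega, by omega, ?_, fun a h h' => ?_⟩
    · rw [olab_pos (by omega), CA.step]
      have hd : decide (e + 1 = m + 2) = false := by simp; omega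
      rw [hd]
      have ee : e + 1 - 2 = e - 1 := by omega
      rw [ee, add_sub_cancel_right]
      rcases (show e < m ∨ e = m by omega) with h | h
      · rw [e6 h]
      · subst h; rw [e4] at hf; simp only [fin] at hf
        rw [hf, hγ (e+1) (by omega)]
    · rw [pat, if_neg (by omega), if_neg (by omega), add_sub_cancel_right]
      rcases lt_trichotomy a e with h1 | h1 | h1
      · rw [if_pos h1, e3 a h h1]
      · rw [if_neg (by omega), if_pos h1, h1, e4]
      · rw [if_neg (by omega), if_neg (by omega), e5 a h1 h']

/-- decoded data of a block, horizontal half -/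
structure Dec (K : CA G) (m : ℤ) (γ : ℤ → G) (x : ℤ → ℤ → Tile G) (i j : ℤ) : Prop where
  i0 : 0 ≤ i
  im : i ≤ m + 2
  g : ∀ b, 1 ≤ b → b ≤ m → (x 0 b).e.g = olab (m+2) (K.step γ) i
  gs : ∀ b, 1 ≤ b → b ≤ m → (x 0 b).e.gs = olab (m+2) (K.step γ) j
  w : ∀ b, 1 ≤ b → b ≤ m → (x 0 b).e.w = pat i b
  u : ∀ b, 1 ≤ b → b ≤ m → (x 0 b).e.u = pat j b

theorem Block.gg (h : Block K m γ x) {a b : ℤ} (ha : 1 ≤ a) (ha' : a ≤ m) (hb : 1 ≤ b) (hb' : b ≤ m) :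
    (x 0 b).e.g = (x a 0).n.gs := by
  rw [← (h.same' hb hb' (a := a-1) (by omega) (by omega)).g]
  exact (h.half ha ha' hb hb').g.trans (h.tr.same' ha ha' (a := b-1) (by omega) (by omega)).gs

theorem Block.dec1 (h : Block K m γ x) : ∃ i, 0 ≤ i ∧ i ≤ m + 2 ∧ (x 0 1).e.g = olab (m+2) (K.step γ) i ∧
    ∀ a, 1 ≤ a → a ≤ m → (x a 0).n.u = pat i a := by
  have hm := h.hm
  refine decode hm h.hγ _ (fun a => (x a 0).n.u) (fun a => (x a 1).e.hs)
    (h.uL le_rfl (by omega)).2.hs ?_ ?_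
  · intro a h1 h2
    have H := (h.half h1 h2 (b := 1) le_rfl (by omega)).chk
    rw [(h.same' (a := a-1) (b := 1) (by omega) (by omega) (by omega) (by omega)).g] at H
    rw [sub_self] at H
    have L := (h.tr.row (a := 0) (b := a) (by omega) (by omega) h1 h2).1
    simp only [trx, Tile.tr] at L
    rw [L] at H
    exact H
  · have := (h.uR (b := 1) le_rfl (by omega)).2.fin
    rw [(h.row (a := m) (b := 1) (by omega) le_rfl le_rfl (by omega)).2.2.2] at this
    rwa [(h.same' (a := m) (b := 1) (by omega) (by omega) (by omega) (by omega)).g] at this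

theorem Block.dec (h : Block K m γ x) : ∃ i j, Dec K m γ x i j ∧ Dec K m γ (trx x) j i := by
  have hm := h.hm
  obtain ⟨i, i0, im, ig, iu⟩ := h.dec1
  obtain ⟨j, j0, jm, jg, ju⟩ := h.tr.dec1
  simp only [trx, Tile.tr] at jg ju
  have A : ∀ b, 1 ≤ b → b ≤ m → (x 0 b).e.g = olab (m+2) (K.step γ) i := fun b h1 h2 => by
    rw [h.gg (a := 1) le_rfl (by omega) h1 h2, ← h.gg (a := 1) le_rfl (by omega) le_rfl (by omega), ig]
  have B : ∀ b, 1 ≤ b → b ≤ m → (x b 0).n.g = olab (m+2) (K.step γ) j := fun b h1 h2 =>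
    (h.tr.gg (a := 1) le_rfl (by omega) h1 h2).trans
      (((h.tr.gg (a := 1) le_rfl (by omega) le_rfl (by omega)).symm).trans jg)
  refine ⟨i, j, ⟨i0, im, A, ?_, ?_, ju⟩, ⟨j0, jm, B, ?_, ?_, iu⟩⟩
  · intro b h1 h2; exact (h.tr.gg h1 h2 (b := 1) le_rfl (by omega)).symm.trans jg
  · intro b h1 h2; rw [h.diag h1 h2, iu b h1 h2]
  · intro b h1 h2; exact (h.gg h1 h2 (b := 1) le_rfl (by omega)).symm.trans ig
  · intro b h1 h2; exact (h.tr.diag h1 h2).trans (ju b h1 h2)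

theorem Block.bigstep1 (h : Block K m γ x) {i j : ℤ} (D : Dec K m γ x i j) :
    (∀ L, olab (m+2) (K.step γ) i = some L → (x 0 0).n.l = L ∧
      (x 0 0).n.pf = last (olab (m+2) (K.step γ) j) ∧ (x 0 0).n.pb = (olab (m+2) (K.step γ) j).isNone) ∧
    (last (olab (m+2) (K.step γ) i) = false → (x (m+1) 0).n.pf = last (olab (m+2) (K.step γ) j) ∧
      (x (m+1) 0).n.pb = (olab (m+2) (K.step γ) j).isNone) := by
  have hm := h.hm
  constructor
  · intro L hL
    have U := (h.uL (b := 1) le_rfl (by omega)).2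
    rw [h.cL.2 1 (by omega) (by omega)] at U
    have g := D.g 1 le_rfl (by omega)
    have gs := D.gs 1 le_rfl (by omega)
    cases hl : last (x 0 1).w.g
    · have N := U.nlast hl
      rw [← U.gs, gs, g, hL] at N
      exact ⟨(Option.some.inj N.1).symm, N.2.2⟩
    · have N := U.wlast hl
      rw [g, hL] at N; exact absurd N.1 (by simp)
  · intro hl
    have U := (h.uR (b := 1) le_rfl (by omega)).2
    rw [h.cR.2 1 (by omega) (by omega), (h.row (a := m) (b := 1) (by omega) le_rfl le_rfl (by omega)).2.2.2] at U
    have S := h.same' (a := m) (b := 1) (by omega) (by omega) (by omega) (by omega)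
    have N := U.nlast (by rw [S.g, D.g 1 le_rfl (by omega)]; exact hl)
    rw [S.gs, D.gs 1 le_rfl (by omega)] at N
    exact N.2.2

theorem Block.bigstep (h : Block K m γ x) {i j : ℤ} (D : Dec K m γ x i j) (D' : Dec K m γ (trx x) j i) :
    FaceV K (x 0 0) (x (m+1) 0) (x 0 (m+1)) (x (m+1) (m+1))
      (olab (m+2) (K.step γ) i) (olab (m+2) (K.step γ) j) := by
  have hm := h.hm
  have A := h.bigstep1 D
  have B := h.tr.bigstep1 D'
  refine ⟨h.rloc le_rfl (by omega) le_rfl (by omega), h.rloc (by omega) (by omega) le_rfl (by omega),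
    h.rloc le_rfl (by omega) (by omega) (by omega), h.rloc (by omega) (by omega) (by omega) (by omega),
    h.tr.cL.1, h.tr.cR.1, h.cL.1, h.cR.1, A.1, A.2, B.1, B.2⟩

theorem pat_inj (hm : 2 ≤ m) {i j : ℤ} (hi : 0 ≤ i) (hi' : i ≤ m + 2) (hj : 0 ≤ j) (hj' : j ≤ m + 2)
    (h : ∀ a, 1 ≤ a → a ≤ m → pat i a = pat j a) : i = j := by
  by_contra hne
  wlog hl : i < j generalizing i j
  · exact this hj hj' hi hi' (fun a h1 h2 => (h a h1 h2).symm) (Ne.symm hne) (by omega)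
  have h1 := h 1 le_rfl (by omega)
  by_cases hi1 : i ≤ 1
  · unfold pat at h1; split_ifs at h1 <;> omega
  · have h1 := h (i-1) (by omega) (by omega)
    unfold pat at h1; split_ifs at h1 <;> omega

theorem pat_step (hm : 2 ≤ m) {i j : ℤ} (hi : 0 ≤ i) (hi' : i < m + 2) (hj : 0 ≤ j) (hj' : j ≤ m + 2)
    (h : ∀ a, 1 ≤ a → a ≤ m → stepw (pat i a) (pat j a)) : j = i + 1 := by
  have h1 := h 1 le_rfl (by omega)
  by_cases hi1 : i ≤ 1
  · unfold pat at h1; split_ifs at h1 <;> simp [stepw] at h1 <;> omega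
  · have h2 := h (i-1) (by omega) (by omega)
    by_cases him : i ≤ m
    · have h3 := h i (by omega) (by omega)
      unfold pat at h2 h3
      split_ifs at h2 h3 <;> simp [stepw] at h2 h3 <;> omega
    · unfold pat at h2
      split_ifs at h2 <;> simp [stepw] at h2 <;> omega

/-- horizontal crossing -/
theorem Block.cross {y : ℤ → ℤ → Tile G} (h : Block K m γ x) (_ : Block K m γ y)
    (hxy : ∀ b, x (m+1) b = y 0 b) {i j i' j' : ℤ} (D : Dec K m γ x i j) (D1 : Dec K m γ (trx x) j i)
    (D' : Dec K m γ y i' j') (D1' : Dec K m γ (trx y) j' i') :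
    j' = j ∧ i' = (if i = m + 2 then 0 else i + 1) := by
  have hm := h.hm
  have U : ∀ b, 1 ≤ b → b ≤ m → Under K (x m b).e (y 0 b).e (y 0 b).n := fun b h1 h2 => by
    have := (h.uR h1 h2).2
    rwa [(h.row (a := m) (b := b) (by omega) le_rfl h1 h2).2.2.2, hxy] at this
  have S := fun b (h1 : 1 ≤ b) (h2 : b ≤ m) => h.same' (a := m) h1 h2 (by omega) le_rfl
  refine ⟨?_, ?_⟩
  · refine pat_inj hm D1'.i0 D1'.im D1.i0 D1.im fun a h1 h2 => ?_
    rw [← D'.u a h1 h2, ← D.u a h1 h2, (U a h1 h2).u, (S a h1 h2).u]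
  · have L : ∀ b, 1 ≤ b → b ≤ m → last (x m b).e.g = decide (i = m+2) := fun b h1 h2 => by
      rw [(S b h1 h2).g, D.g b h1 h2, last_olab (by omega)]
    split_ifs with hi
    · refine pat_inj hm D'.i0 D'.im le_rfl (by omega) fun a h1 h2 => ?_
      rw [← D'.w a h1 h2, ((U a h1 h2).wlast (by rw [L a h1 h2]; simpa using hi)).2]; simp [pat]
    · have := D.im
      refine pat_step hm D.i0 (by omega) D'.i0 D'.im fun a h1 h2 => ?_
      have N := ((U a h1 h2).nlast (by rw [L a h1 h2]; simpa using hi)).2.1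
      rwa [(S a h1 h2).w, D.w a h1 h2, D'.w a h1 h2] at N

theorem Block.notbad (h : Block K m γ x) {a : ℤ} (ha : 1 ≤ a) (ha' : a ≤ m) : ¬ K.bad (γ a) := by
  have := (h.half (a := 1) (b := a) le_rfl (by omega) ha ha').bad
  rwa [(h.row (a := 1 - 1) (b := a) (by omega) (by omega) ha ha').1] at this

end Rfa

namespace Rfa
variable {G : Type}
variable {K : CA G} {m : ℤ} {γ : ℤ → G} {x : ℤ → ℤ → Tile G}

@[ext] structure St where
  X : ℤ
  Y : ℤ
  s : Bool
  t : Bool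

def sg (s : Bool) : ℤ := if s then 1 else -1
def on1 (s : Bool) : ℤ := if s then 1 else 0
def top (p : ℤ) (s : Bool) : ℤ := if s then p - 1 else 0

open Classical in
noncomputable def nx (cu : ℤ → ℤ → Prop) (σ : St) : St :=
  if cu (σ.X + on1 σ.s) (σ.Y + on1 σ.t) then ⟨σ.X + sg σ.s, σ.Y, σ.s, !σ.t⟩
  else ⟨σ.X, σ.Y + sg σ.t, !σ.s, σ.t⟩

def cuOf (x : ℤ → ℤ → Tile G) : ℤ → ℤ → Prop := fun a b => (x a b).ty = .CU

def Val (K : CA G) (m : ℤ) (γ : ℤ → G) (x : ℤ → ℤ → Tile G) (X Y : ℤ) : Prop :=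
  FaceV K (x X Y) (x (X+1) Y) (x X (Y+1)) (x (X+1) (Y+1))
    (olab m γ (X % (m+1))) (olab m γ (Y % (m+1)))

def Mv (p : ℤ) (cu : ℤ → ℤ → Prop) (σ : St) : Prop :=
  (cu (σ.X + on1 σ.s) (σ.Y + on1 σ.t) → σ.Y % p = top p σ.t) ∧
  (¬ cu (σ.X + on1 σ.s) (σ.Y + on1 σ.t) → σ.Y % p = top p σ.t → σ.X % p = top p σ.s)

theorem emod_succ {p : ℤ} (hp : 1 < p) (X : ℤ) : (X + 1) % p = if X % p = p - 1 then 0 else X % p + 1 := by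
  have h1 := Int.emod_nonneg X (show p ≠ 0 by omega)
  have h2 := Int.emod_lt_of_pos X (show 0 < p by omega)
  rw [Int.add_emod, Int.emod_eq_of_lt (a := 1) (by omega) hp]
  split_ifs with h
  · rw [h]; simp
  · rw [Int.emod_eq_of_lt (by omega) (by omega)]

theorem emod_pred {p : ℤ} (hp : 1 < p) (X : ℤ) : (X - 1) % p = if X % p = 0 then p - 1 else X % p - 1 := by
  have h1 := Int.emod_nonneg X (show p ≠ 0 by omega)
  have h2 := Int.emod_lt_of_pos X (show 0 < p by omega)
  rw [Int.sub_emod, Int.emod_eq_of_lt (a := 1) (by omega) hp]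
  split_ifs with h
  · rw [h, ← Int.add_emod_right, Int.emod_eq_of_lt] <;> omega
  · rw [Int.emod_eq_of_lt (by omega) (by omega)]

theorem Val.h1 {X Y : ℤ} (hm : 2 ≤ m) (V : Val K m γ x X Y) (V' : Val K m γ x (X+1) Y)
    (hi : X % (m+1) = m) (j1 : Y % (m+1) ≠ m) (hc : (x (X+1) (Y+1)).w = (x (X+1) (Y+1)).e) : False := by
  have h := V.N (by rw [last_olab (by omega)]; simpa using j1)
  have h' := V'.N (by rw [last_olab (by omega)]; simpa using j1)
  rw [V.mN, hc, last_olab (by omega), hi] at h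
  rw [h.1, emod_succ (by omega), hi, if_pos (by ring), last_olab (by omega)] at h'
  simp at h'; omega

theorem Val.h2 {X Y : ℤ} (hm : 2 ≤ m) (V : Val K m γ x X Y) (V' : Val K m γ x (X-1) Y)
    (hi : X % (m+1) = 0) (j1 : Y % (m+1) ≠ m) (hc : (x X (Y+1)).w = (x X (Y+1)).e) : False := by
  have h := V.N (by rw [last_olab (by omega)]; simpa using j1)
  have h' := V'.N (by rw [last_olab (by omega)]; simpa using j1)
  rw [isNone_olab, hi] at h
  rw [V'.mN, sub_add_cancel, hc, h.2, emod_pred (by omega), hi, if_pos rfl, isNone_olab] at h'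
  simp at h'; omega

theorem Val.h3 {X Y : ℤ} (hm : 2 ≤ m) (V : Val K m γ x X Y) (V' : Val K m γ x (X+1) Y)
    (hi : X % (m+1) = m) (j1 : Y % (m+1) ≠ 0) (hc : (x (X+1) Y).w = (x (X+1) Y).e) : False := by
  have h := V.S _ (olab_pos j1)
  have h' := V'.S _ (olab_pos j1)
  rw [V.mS, hc, last_olab (by omega), hi] at h
  rw [h.2.1, emod_succ (by omega), hi, if_pos (by ring), last_olab (by omega)] at h'
  simp at h'; omega

theorem Val.h4 {X Y : ℤ} (hm : 2 ≤ m) (V : Val K m γ x X Y) (V' : Val K m γ x (X-1) Y)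
    (hi : X % (m+1) = 0) (j1 : Y % (m+1) ≠ 0) (hc : (x X Y).w = (x X Y).e) : False := by
  have h := V.S _ (olab_pos j1)
  have h' := V'.S _ (olab_pos j1)
  rw [isNone_olab, hi] at h
  rw [V'.mS, sub_add_cancel, hc, h.2.2, emod_pred (by omega), hi, if_pos rfl, isNone_olab] at h'
  simp at h'; omega

theorem rloc_s {t : Tile G} (h : Rloc K t) (hc : t.ty ≠ .CU) : (t.s.pf = true → t.n.pf = true) ∧
    (t.n.pb = true → t.s.pb = true) := by
  cases ht : t.ty <;> simp only [Rloc, ht] at h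
  · exact ⟨fun h' => by rw [h.2.pf] at h'; simp at h', fun h' => by rw [h.2.pb] at h'; simp at h'⟩
  · rw [h.1]; exact ⟨id, id⟩
  · exact absurd ht hc

theorem Val.moves {σ : St} (hm : 2 ≤ m) (V : Val K m γ x σ.X σ.Y)
    (V' : Val K m γ x (nx (cuOf x) σ).X (nx (cuOf x) σ).Y) : Mv (m+1) (cuOf x) σ := by
  have hm0 : m ≠ 0 := by omega
  rcases σ with ⟨X, Y, s, t⟩
  constructor
  · intro hc
    have hc' := hc
    simp only [nx, hc, if_true] at V'
    simp only [cuOf] at hc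
    by_contra hj
    cases s <;> cases t <;> simp only [on1, sg, top, if_true, add_zero, Bool.false_eq_true, if_false,
      add_sub_cancel_right] at V V' hc hj
    · have R := V.r1
      simp only [Rloc, hc] at R
      by_cases hi : X % (m+1) = 0
      · exact V.h4 hm V' hi hj R.1
      · have := R.2.epb; rw [(V.W _ (olab_pos hi)).2.2, isNone_olab] at this; simp [hj] at this
    · have R := V.r3
      simp only [Rloc, hc] at R
      by_cases hi : X % (m+1) = 0
      · exact V.h2 hm V' hi hj R.1
      · have := R.2.wpf; rw [← V.mW, (V.W _ (olab_pos hi)).2.1, last_olab hm0] at this; simp [hj] at this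
    · have R := V.r2
      simp only [Rloc, hc] at R
      by_cases hi : X % (m+1) = m
      · exact V.h3 hm V' hi hj R.1
      · have := R.2.epb
        rw [(V.E (by rw [last_olab hm0]; simpa using hi)).2, isNone_olab] at this; simp [hj] at this
    · have R := V.r4
      simp only [Rloc, hc] at R
      by_cases hi : X % (m+1) = m
      · exact V.h1 hm V' hi hj R.1
      · have := R.2.wpf
        rw [← V.mE, (V.E (by rw [last_olab hm0]; simpa using hi)).1, last_olab hm0] at this
        simp [hj] at this
  · intro hc hj
    simp only [nx, hc, if_false] at V'
    simp only [cuOf] at hc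
    by_contra hi
    cases s <;> cases t <;> simp only [on1, sg, top, if_true, add_zero, Bool.false_eq_true, if_false,
      add_sub_cancel_right] at V V' hc hj hi
    · have h := (rloc_s V.r1 hc).2 (by rw [(V.W _ (olab_pos hi)).2.2, hj, isNone_olab]; simp)
      have h' := (V'.W _ (olab_pos hi)).2.2
      rw [V'.mW, show Y + -1 + 1 = Y by ring, h, ← sub_eq_add_neg, emod_pred (by omega), hj, if_pos rfl, isNone_olab] at h'
      simp at h'; omega
    · have h := (rloc_s V.r3 hc).1 (by rw [← V.mW, (V.W _ (olab_pos hi)).2.1, hj, last_olab hm0]; simp)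
      have h' := (V'.W _ (olab_pos hi)).2.1
      rw [h, emod_succ (by omega), hj, if_pos (by ring), last_olab hm0] at h'
      simp at h'; omega
    · have hi' : last (olab m γ (X % (m+1))) = false := by rw [last_olab hm0]; simpa using hi
      have h := (rloc_s V.r2 hc).2 (by rw [(V.E hi').2, hj, isNone_olab]; simp)
      have h' := (V'.E hi').2
      rw [V'.mE, show Y + -1 + 1 = Y by ring, h, ← sub_eq_add_neg, emod_pred (by omega), hj, if_pos rfl, isNone_olab] at h'
      simp at h'; omega
    · have hi' : last (olab m γ (X % (m+1))) = false := by rw [last_olab hm0]; simpa using hi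
      have h := (rloc_s V.r4 hc).1 (by rw [← V.mE, (V.E hi').1, hj, last_olab hm0]; simp)
      have h' := (V'.E hi').1
      rw [h, emod_succ (by omega), hj, if_pos (by ring), last_olab hm0] at h'
      simp at h'; omega

end Rfa

namespace Rfa
variable {m : ℤ} {cu : ℤ → ℤ → Prop}

def pos (m : ℤ) (S : St) (c e : ℕ) : St :=
  ⟨(m+1) * S.X + (if S.s then (c:ℤ) else m - c), (m+1) * S.Y + (if (S.t ^^ c.bodd) then (e:ℤ) else m - e),
    S.s ^^ e.bodd, S.t ^^ c.bodd⟩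

theorem emod_blk {A i : ℤ} (h0 : 0 ≤ i) (h : i ≤ m) : ((m+1) * A + i) % (m+1) = i := by
  rw [Int.mul_add_emod_self_left, Int.emod_eq_of_lt h0 (by omega)]

theorem pos_modX {S : St} {c e : ℕ} (hc : (c:ℤ) ≤ m) :
    (pos m S c e).X % (m+1) = if S.s then (c:ℤ) else m - c := by
  simp only [pos]
  split_ifs <;> rw [emod_blk] <;> omega

theorem pos_modY {S : St} {c e : ℕ} (he : (e:ℤ) ≤ m) :
    (pos m S c e).Y % (m+1) = if (S.t ^^ c.bodd) then (e:ℤ) else m - e := by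
  simp only [pos]
  split_ifs <;> rw [emod_blk] <;> omega

theorem pos_step1 {S : St} {c e : ℕ} (he : (e:ℤ) < m) (h : Mv (m+1) cu (pos m S c e)) :
    nx cu (pos m S c e) = pos m S c (e+1) := by
  have hn : ¬ cu ((pos m S c e).X + on1 (pos m S c e).s) ((pos m S c e).Y + on1 (pos m S c e).t) := by
    intro hc
    have := h.1 hc
    rw [pos_modY (by omega)] at this
    simp only [pos, top] at this
    by_cases hb : (S.t ^^ c.bodd) = true <;> simp only [hb] at this <;> simp at this <;> omega
  rw [nx, if_neg hn]
  ext <;> simp only [pos]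
  · by_cases ht : (S.t ^^ c.bodd) = true <;> simp only [ht, sg] <;> simp <;> omega
  · simp [Nat.bodd_succ]

theorem pos_step2 {S : St} {c e : ℕ} (hc : (c:ℤ) < m) (he : (e:ℤ) = m) (hev : e.bodd = false)
    (h : Mv (m+1) cu (pos m S c e)) :
    nx cu (pos m S c e) = pos m S (c+1) 0 := by
  have hn : cu ((pos m S c e).X + on1 (pos m S c e).s) ((pos m S c e).Y + on1 (pos m S c e).t) := by
    by_contra hcu
    have := h.2 hcu (by rw [pos_modY (by omega)]; simp only [pos, top]; by_cases hb : (S.t ^^ c.bodd) = true <;> simp only [hb] <;> simp <;> omega)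
    rw [pos_modX (by omega)] at this
    simp only [pos, top, hev, Bool.xor_false] at this
    split_ifs at this <;> omega
  rw [nx, if_pos hn]
  ext <;> simp only [pos, hev]
  · by_cases ht : S.s = true <;> simp only [ht, sg] <;> simp <;> omega
  · rw [Nat.bodd_succ]; cases S.t <;> cases c.bodd <;> simp <;> omega
  · simp
  · rw [Nat.bodd_succ]; simp

theorem pos_step3 {S : St} {e : ℕ} (he : (e:ℤ) = m) (hev : e.bodd = false) :
    nx cu (pos m S e e) = pos m (nx (fun a b => cu ((m+1)*a) ((m+1)*b)) S) 0 0 := by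
  have h1 : (pos m S e e).X + on1 (pos m S e e).s = (m+1) * (S.X + on1 S.s) := by
    simp only [pos, hev, Bool.xor_false, on1]; split_ifs <;> rw [← he] <;> ring
  have h2 : (pos m S e e).Y + on1 (pos m S e e).t = (m+1) * (S.Y + on1 S.t) := by
    simp only [pos, hev, Bool.xor_false, on1]; split_ifs <;> rw [← he] <;> ring
  rw [nx, h1, h2]
  rcases S with ⟨A, B, s, t⟩
  by_cases h : cu ((m+1) * (A + on1 s)) ((m+1) * (B + on1 t))
  · rw [if_pos h, nx, if_pos h]
    ext <;> simp only [pos, hev]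
    · cases s <;> simp [sg, ← he] <;> ring
    · cases t <;> simp [← he]
    · simp
    · simp
  · rw [if_neg h, nx, if_neg h]
    ext <;> simp only [pos, hev]
    · cases s <;> simp [← he]
    · cases t <;> simp [sg, ← he] <;> ring
    · simp
    · simp

/-- full traversal of a block -/
theorem pass {M : ℕ} (hM : (M:ℤ) = m) (hev : M.bodd = false) {S : St}
    (h : ∀ r, r + 1 < (M+1)*(M+1) → Mv (m+1) cu ((nx cu)^[r] (pos m S 0 0))) :
    (∀ c e : ℕ, c ≤ M → e ≤ M → (nx cu)^[c*(M+1)+e] (pos m S 0 0) = pos m S c e) ∧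
    (nx cu)^[(M+1)*(M+1)] (pos m S 0 0) = pos m (nx (fun a b => cu ((m+1)*a) ((m+1)*b)) S) 0 0 := by
  have bound : ∀ c e : ℕ, c ≤ M → e ≤ M → (c < M ∨ e < M) → c*(M+1)+e + 1 < (M+1)*(M+1) := by
    intro c e h1 h2 h3
    rcases h3 with h3 | h3 <;> nlinarith
  have A : ∀ c e : ℕ, c ≤ M → e ≤ M → (nx cu)^[c*(M+1)+e] (pos m S 0 0) = pos m S c e := by
    intro c
    induction c with
    | zero =>
      intro e _ he
      induction e with
      | zero => simp
      | succ e ih =>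
        have I := ih (by omega)
        have b := h _ (bound 0 e (by omega) (by omega) (by omega))
        rw [I] at b
        rw [← add_assoc, iterate_succ_apply', I, pos_step1 (by omega) b]
    | succ c ihc =>
      intro e hc he
      induction e with
      | zero =>
        have I := ihc M (by omega) le_rfl
        have b := h _ (bound c M (by omega) (by omega) (by omega))
        rw [I] at b
        rw [show (c+1)*(M+1)+0 = (c*(M+1)+M)+1 by ring, iterate_succ_apply', I, pos_step2 (by omega) hM hev b]
      | succ e ih =>
        have I := ih (by omega)
        have b := h _ (bound (c+1) e (by omega) (by omega) (by omega))
        rw [I] at b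
        rw [← add_assoc, iterate_succ_apply', I, pos_step1 (by omega) b]
  refine ⟨A, ?_⟩
  rw [show (M+1)*(M+1) = (M*(M+1)+M)+1 by ring, iterate_succ_apply', A M M le_rfl le_rfl, pos_step3 hM hev]

/-- eventual alignment -/
theorem exists_pos {M : ℕ} (hM : (M:ℤ) = m) (σ : St) :
    ∃ S c e, c ≤ M ∧ e ≤ M ∧ σ = pos m S c e := by
  rcases σ with ⟨X, Y, s, t⟩
  have h1 := Int.emod_nonneg X (show m+1 ≠ 0 by omega)
  have h2 := Int.emod_lt_of_pos X (show 0 < m+1 by omega)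
  have h3 := Int.emod_nonneg Y (show m+1 ≠ 0 by omega)
  have h4 := Int.emod_lt_of_pos Y (show 0 < m+1 by omega)
  have h5 := Int.mul_ediv_add_emod X (m+1)
  have h6 := Int.mul_ediv_add_emod Y (m+1)
  let e : ℕ := if t then (Y % (m+1)).toNat else (m - Y % (m+1)).toNat
  let s' : Bool := s ^^ e.bodd
  let c : ℕ := if s' then (X % (m+1)).toNat else (m - X % (m+1)).toNat
  refine ⟨⟨X / (m+1), Y / (m+1), s', t ^^ c.bodd⟩, c, e, ?_, ?_, ?_⟩
  · simp only [c]; split_ifs <;> omega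
  · simp only [e]; split_ifs <;> omega
  · ext
    · simp only [pos]
      by_cases hs : s' = true <;> simp only [c, hs] <;> simp <;> omega
    · simp only [pos, Bool.xor_assoc, Bool.xor_self, Bool.xor_false]
      cases t <;> simp only [e] <;> simp <;> omega
    · simp [pos, s']
    · simp [pos]

theorem align {M : ℕ} (hM : (M:ℤ) = m) (hev : M.bodd = false) (S : St) (c e : ℕ) (hc : c ≤ M) (he : e ≤ M)
    (h : ∀ r, r ≤ (M+1)*(M+1) → Mv (m+1) cu ((nx cu)^[r] (pos m S c e))) :
    ∃ r S', r ≤ (M+1)*(M+1) ∧ (nx cu)^[r] (pos m S c e) = pos m S' 0 0 := by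
  have key : ∀ k c e : ℕ, c ≤ M → e ≤ M → (M - c)*(M+1) + (M - e) = k →
      (∀ r, r ≤ k → Mv (m+1) cu ((nx cu)^[r] (pos m S c e))) →
      ∃ S', (nx cu)^[k+1] (pos m S c e) = pos m S' 0 0 := by
    intro k
    induction k with
    | zero =>
      intro c e hc he hk _
      have h1 : (M - c)*(M+1) = 0 := by omega
      have h1 : c = M := by
        rcases Nat.mul_eq_zero.1 h1 with h | h <;> omega
      have h2 : e = M := by omega
      subst h1 h2
      exact ⟨_, pos_step3 hM hev⟩
    | succ k ih =>
      intro c e hc he hk hmv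
      have b := hmv 0 (by omega)
      rcases (show e < M ∨ e = M by omega) with h1 | h1
      · obtain ⟨S', h'⟩ := ih c (e+1) hc (by omega) (by omega) (fun r hr => by
          have := hmv (r+1) (by omega)
          rwa [iterate_succ_apply, pos_step1 (by omega) b] at this)
        exact ⟨S', by rw [iterate_succ_apply, pos_step1 (by omega) b, h']⟩
      · subst h1
        have h2 : c < e := by
          rcases (show c < e ∨ c = e by omega) with h | h
          · exact h
          · subst h; simp at hk
        obtain ⟨d, hd⟩ : ∃ d, e - c = d + 1 := ⟨e - c - 1, by omega⟩
        have hd' : e - (c+1) = d := by omega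
        obtain ⟨S', h'⟩ := ih (c+1) 0 (by omega) (by omega) (by rw [hd]  at hk; rw [hd']; simp at hk ⊢; linarith) (fun r hr => by
          have := hmv (r+1) (by omega)
          rwa [iterate_succ_apply, pos_step2 (by omega) hM hev b] at this)
        exact ⟨S', by rw [iterate_succ_apply, pos_step2 (by omega) hM hev b, h']⟩
  have b1 : (M - c)*(M+1) + (M - e) + 1 ≤ (M+1)*(M+1) := by
    have : (M - c)*(M+1) ≤ M * (M+1) := Nat.mul_le_mul_right _ (by omega)
    nlinarith [Nat.sub_le M e]
  obtain ⟨S', h'⟩ := key _ c e hc he rfl (fun r hr => h r (by omega))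
  exact ⟨_, S', b1, h'⟩

end Rfa

namespace Rfa
variable {G : Type}
variable {K : CA G} {m : ℤ} {γ : ℤ → G} {x : ℤ → ℤ → Tile G}

def Path (K : CA G) (m : ℤ) (γ : ℤ → G) (x : ℤ → ℤ → Tile G) (σ : St) (N : ℕ) : Prop :=
  ∀ r < N, Val K m γ x ((nx (cuOf x))^[r] σ).X ((nx (cuOf x))^[r] σ).Y

theorem Path.mv {σ : St} {N : ℕ} (hm : 2 ≤ m) (h : Path K m γ x σ N) (r : ℕ) (hr : r + 1 < N) :
    Mv (m+1) (cuOf x) ((nx (cuOf x))^[r] σ) := by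
  have h2 := h (r+1) hr
  rw [iterate_succ_apply'] at h2
  exact (h r (by omega)).moves hm h2

theorem Path.drop {σ : St} {N : ℕ} (h : Path K m γ x σ N) (a M : ℕ) (ha : a + M ≤ N) :
    Path K m γ x ((nx (cuOf x))^[a] σ) M := by
  intro r hr
  rw [← iterate_add_apply]
  exact h _ (by omega)

def blk (m : ℤ) (x : ℤ → ℤ → Tile G) (A B : ℤ) : ℤ → ℤ → Tile G :=
  fun a b => x ((m+1)*A + a) ((m+1)*B + b)

theorem Path.block {M : ℕ} (hM : (M:ℤ) = m) (hev : M.bodd = false) (hm : 2 ≤ m)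
    (hγ : ∀ i, i < 1 ∨ m < i → γ i = K.b) {S : St}
    (h : Path K m γ x (pos m S 0 0) ((M+1)*(M+1))) : Block K m γ (blk m x S.X S.Y) := by
  refine ⟨hm, hγ, fun i j h0 hi h0' hj => ?_⟩
  have P := (pass hM hev (fun r hr => h.mv hm r hr)).1
  let c : ℕ := if S.s then i.toNat else (m - i).toNat
  let e : ℕ := if (S.t ^^ c.bodd) then j.toNat else (m - j).toNat
  have hc : c ≤ M := by simp only [c]; split_ifs <;> omega
  have he : e ≤ M := by simp only [e]; split_ifs <;> omega
  have V := h (c*(M+1)+e) (by nlinarith)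
  rw [P c e hc he] at V
  have hX : (pos m S c e).X = (m+1) * S.X + i := by
    simp only [pos]; by_cases hs : S.s = true <;> simp only [c, hs] <;> simp <;> omega
  have hY : (pos m S c e).Y = (m+1) * S.Y + j := by
    simp only [pos]; by_cases hs : (S.t ^^ c.bodd) = true <;> simp only [e, hs] <;> simp <;> omega
  rw [hX, hY] at V
  unfold Val at V
  rw [emod_blk h0 hi, emod_blk h0' hj] at V
  simpa only [blk, add_assoc] using V

theorem Path.bigstep {M : ℕ} (hM : (M:ℤ) = m) (hev : M.bodd = false) (hm : 2 ≤ m) {S : St} {n : ℕ}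
    (h : Path K m γ x (pos m S 0 0) (n * ((M+1)*(M+1)))) (q : ℕ) (hq : q ≤ n) :
    (nx (cuOf x))^[q * ((M+1)*(M+1))] (pos m S 0 0) =
      pos m ((nx (fun a b => cuOf x ((m+1)*a) ((m+1)*b)))^[q] S) 0 0 := by
  induction q with
  | zero => simp
  | succ q ih =>
    have I := ih (by omega)
    have D := h.drop (q * ((M+1)*(M+1))) ((M+1)*(M+1)) (by
      calc _ = (q+1) * ((M+1)*(M+1)) := by ring
        _ ≤ _ := Nat.mul_le_mul_right _ hq)
    rw [I] at D
    rw [Nat.succ_mul, add_comm, iterate_add_apply, I, (pass hM hev (fun r hr => D.mv hm r hr)).2,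
      iterate_succ_apply']

structure BD (K : CA G) (m : ℤ) (γ : ℤ → G) (x : ℤ → ℤ → Tile G) (i j : ℤ) : Prop where
  b : Block K m γ x
  d : Dec K m γ x i j
  d' : Dec K m γ (trx x) j i

theorem trx_trx (x : ℤ → ℤ → Tile G) : trx (trx x) = x := by
  funext a b
  simp only [trx]
  rcases x a b with ⟨w, e, s, n, ty⟩
  cases ty <;> rfl

theorem BD.tr {i j : ℤ} (h : BD K m γ x i j) : BD K m γ (trx x) j i :=
  ⟨h.b.tr, h.d', by rw [trx_trx]; exact h.d⟩

theorem BD.cross {y : ℤ → ℤ → Tile G} {i j i' j' : ℤ} (h : BD K m γ x i j) (h' : BD K m γ y i' j')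
    (hxy : ∀ b, x (m+1) b = y 0 b) : j' = j ∧ i' = (if i = m + 2 then 0 else i + 1) :=
  h.b.cross h'.b hxy h.d h.d' h'.d h'.d'

theorem BD.next {S : St} {α β : ℤ} {cu : ℤ → ℤ → Prop} (hm : 2 ≤ m)
    (h : BD K m γ (blk m x S.X S.Y) ((S.X + α) % (m+3)) ((S.Y + β) % (m+3)))
    (hb : Block K m γ (blk m x (nx cu S).X (nx cu S).Y)) :
    BD K m γ (blk m x (nx cu S).X (nx cu S).Y) (((nx cu S).X + α) % (m+3)) (((nx cu S).Y + β) % (m+3)) := by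
  obtain ⟨i', j', D, D'⟩ := hb.dec
  have B : BD K m γ (blk m x (nx cu S).X (nx cu S).Y) i' j' := ⟨hb, D, D'⟩
  suffices h2 : i' = ((nx cu S).X + α) % (m+3) ∧ j' = ((nx cu S).Y + β) % (m+3) by
    rw [← h2.1, ← h2.2]; exact B
  rcases S with ⟨X, Y, s, t⟩
  have i0 := D.i0
  have im := D.im
  have j0 := D'.i0
  have jm := D'.im
  by_cases hc : cu (X + on1 s) (Y + on1 t)
  · simp only [nx, hc, if_true] at B h ⊢
    cases s
    · have := B.cross h (fun b => by simp only [blk, sg]; congr 1; simp; ring)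
      simp only [sg, Bool.false_eq_true, if_false]
      rw [this.1, show X + -1 + α = X + α - 1 by ring, emod_pred (by omega), this.2]
      refine ⟨?_, rfl⟩
      split_ifs <;> omega
    · have := h.cross B (fun b => by simp only [blk, sg]; congr 1; simp; ring)
      simp only [sg, if_true]
      rw [this.1, show X + 1 + α = X + α + 1 by ring, emod_succ (by omega), this.2]
      refine ⟨?_, rfl⟩
      split_ifs <;> omega
  · simp only [nx, hc, if_false] at B h ⊢
    cases t
    · have := B.tr.cross h.tr (fun b => by simp only [trx, blk, sg]; congr 2; simp; ring)
      simp only [sg, Bool.false_eq_true, if_false]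
      rw [this.1, show Y + -1 + β = Y + β - 1 by ring, emod_pred (by omega), this.2]
      refine ⟨rfl, ?_⟩
      split_ifs <;> omega
    · have := h.tr.cross B.tr (fun b => by simp only [trx, blk, sg]; congr 2; simp; ring)
      simp only [sg, if_true]
      rw [this.1, show Y + 1 + β = Y + β + 1 by ring, emod_succ (by omega), this.2]
      refine ⟨rfl, ?_⟩
      split_ifs <;> omega

theorem BD.face {A B i j : ℤ} (h : BD K m γ (blk m x A B) i j) :
    FaceV K (x ((m+1)*A) ((m+1)*B)) (x ((m+1)*(A+1)) ((m+1)*B)) (x ((m+1)*A) ((m+1)*(B+1)))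
      (x ((m+1)*(A+1)) ((m+1)*(B+1))) (olab (m+2) (K.step γ) i) (olab (m+2) (K.step γ) j) := by
  have := h.b.bigstep h.d h.d'
  simpa only [blk, add_zero, ← mul_add_one] using this

def St.shift (α β : ℤ) (S : St) : St := ⟨S.X + α, S.Y + β, S.s, S.t⟩

theorem nx_shift (α β : ℤ) (cu : ℤ → ℤ → Prop) (S : St) (q : ℕ) :
    (nx (fun a b => cu (a - α) (b - β)))^[q] (S.shift α β) = ((nx cu)^[q] S).shift α β := by
  have one : ∀ S : St, nx (fun a b => cu (a - α) (b - β)) (S.shift α β) = (nx cu S).shift α β := by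
    intro S
    have e1 : S.X + α + on1 S.s - α = S.X + on1 S.s := by ring
    have e2 : S.Y + β + on1 S.t - β = S.Y + on1 S.t := by ring
    by_cases h : cu (S.X + on1 S.s) (S.Y + on1 S.t)
    · simp only [nx, St.shift, e1, e2, h, if_true]; ext <;> simp; ring
    · simp only [nx, St.shift, e1, e2, h, if_false]; ext <;> simp; ring
  induction q with
  | zero => rfl
  | succ q ih => rw [iterate_succ_apply', iterate_succ_apply', ih, one]

theorem Path.sound {M : ℕ} (hM : (M:ℤ) = m) (hev : M.bodd = false) (hm : 2 ≤ m)
    (hγ : ∀ i, i < 1 ∨ m < i → γ i = K.b) {σ : St} {n : ℕ}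
    (h : Path K m γ x σ ((n+3) * ((M+1)*(M+1)))) :
    (∀ a, 1 ≤ a → a ≤ m → ¬ K.bad (γ a)) ∧ ∃ x' σ', Path K (m+2) (K.step γ) x' σ' n := by
  obtain ⟨S0, c, e, hc, he, rfl⟩ := exists_pos hM σ
  set P := (M+1)*(M+1) with hP
  have hP1 : 1 ≤ P := Nat.mul_pos (by omega) (by omega)
  obtain ⟨r, S, hr, hS⟩ := align (cu := cuOf x) hM hev S0 c e hc he
    (fun r hr => h.mv hm r (by nlinarith))
  have h1 := h.drop r ((n+1) * P) (by nlinarith)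
  rw [hS] at h1
  clear h hS
  set x0 : ℤ → ℤ → Tile G := fun a b => x ((m+1)*a) ((m+1)*b) with hx0
  have hB : ∀ q ≤ n, Block K m γ (blk m x ((nx (cuOf x0))^[q] S).X ((nx (cuOf x0))^[q] S).Y) := by
    intro q hq
    have D := h1.drop (q * P) P (by nlinarith)
    rw [h1.bigstep hM hev hm q (by omega)] at D
    exact D.block hM hev hm hγ
  refine ⟨fun a h1 h2 => (hB 0 (by omega)).notbad h1 h2, ?_⟩
  obtain ⟨i, j, D, D'⟩ := (hB 0 (by omega)).dec
  have i0 := D.i0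
  have im := D.im
  have j0 := D'.i0
  have jm := D'.im
  let α := i - S.X
  let β := j - S.Y
  have hBD : ∀ q ≤ n, BD K m γ (blk m x ((nx (cuOf x0))^[q] S).X ((nx (cuOf x0))^[q] S).Y)
      ((((nx (cuOf x0))^[q] S).X + α) % (m+3)) ((((nx (cuOf x0))^[q] S).Y + β) % (m+3)) := by
    intro q
    induction q with
    | zero =>
      intro _
      have e1 : (S.X + α) % (m+3) = i := by
        rw [show S.X + α = i by simp [α], Int.emod_eq_of_lt] <;> omega
      have e2 : (S.Y + β) % (m+3) = j := by
        rw [show S.Y + β = j by simp [β], Int.emod_eq_of_lt] <;> omega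
      simp only [iterate_zero, id, e1, e2]
      exact ⟨hB 0 (by omega), D, D'⟩
    | succ q ih =>
      intro hq
      have := hB (q+1) hq
      rw [iterate_succ_apply'] at this ⊢
      exact (ih (by omega)).next hm this
  refine ⟨fun a b => x0 (a - α) (b - β), S.shift α β, fun q hq => ?_⟩
  have e := nx_shift α β (cuOf x0) S q
  change Val K (m+2) (K.step γ) _ (((nx fun a b => cuOf x0 (a - α) (b - β))^[q] (S.shift α β)).X)
    (((nx fun a b => cuOf x0 (a - α) (b - β))^[q] (S.shift α β)).Y)
  rw [e]
  have F := (hBD q (by omega)).face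
  simp only [Val, St.shift]
  rw [show m + 2 + 1 = m + 3 by ring]
  simp only [add_sub_cancel_right, show ∀ a b : ℤ, a + b + 1 - b = a + 1 by intros; ring]
  exact F

/-- Main soundness: if a bad content occurs, all paths are bounded. -/
theorem sound_main (K : CA G) (T : ℕ) : ∀ (M : ℕ) (γ : ℤ → G), 2 ≤ M → M.bodd = false →
    (∀ i : ℤ, i < 1 ∨ M < i → γ i = K.b) → (∃ i, K.bad (K.step^[T] γ i)) →
    ∃ N, ∀ x σ, ¬ Path K M γ x σ N := by
  induction T with
  | zero =>
    intro M γ hM hev hγ ⟨i, hi⟩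
    refine ⟨3 * ((M+1)*(M+1)), fun x σ h => ?_⟩
    have := (Path.sound (n := 0) rfl hev (by exact_mod_cast hM) hγ (by simpa using h)).1
    by_cases hh : i < 1 ∨ (M:ℤ) < i
    · have := hγ i hh
      simp only [iterate_zero, id] at hi
      rw [this] at hi; exact K.hbad hi
    · exact this i (by omega) (by omega) hi
  | succ T ih =>
    intro M γ hM hev hγ hbad
    obtain ⟨N, hN⟩ := ih (M+2) (K.step γ) (by omega) (by simpa using hev) (by
      intro i hi
      push_cast at hi
      rw [CA.step, hγ (i-2) (by omega), hγ (i-1) (by omega), hγ i (by omega), K.hb]) (by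
      simpa [iterate_succ_apply] using hbad)
    refine ⟨(N+3) * ((M+1)*(M+1)), fun x σ h => ?_⟩
    obtain ⟨x', σ', h'⟩ := (Path.sound rfl hev (by exact_mod_cast hM) hγ h).2
    exact hN x' σ' (by simpa using h')

end Rfa

namespace Rfa
variable {G : Type}

structure Wd (G : Type) where
  H : ℤ → ℤ → Col G
  Vt : ℤ → ℤ → Col G
  ty : ℤ → ℤ → Ty

def Wd.tile (w : Wd G) (X Y : ℤ) : Tile G := ⟨w.H (X-1) Y, w.H X Y, w.Vt X (Y-1), w.Vt X Y, w.ty X Y⟩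

def Wd.tr (w : Wd G) : Wd G := ⟨fun X Y => w.Vt Y X, fun X Y => w.H Y X, fun X Y => (w.ty Y X).tr⟩

def VOk (m : ℤ) (γ : ℤ → G) (f : ℤ → ℤ → Col G) : Prop :=
  ∀ X Y, X % (m+1) ≠ 0 → (f X Y).l = (γ (X % (m+1)), decide (X % (m+1) = m)) ∧
    (f X Y).pf = decide (Y % (m+1) = m) ∧ (f X Y).pb = decide (Y % (m+1) = 0)

structure RV (K : CA G) (m : ℤ) (γ : ℤ → G) (M : ℤ) (w : Wd G) : Prop where
  r : ∀ X Y, 0 ≤ X → X < M → 0 ≤ Y → Y < M → Rloc K (w.tile X Y)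
  v : VOk m γ w.Vt
  h : VOk m γ (fun X Y => w.H Y X)

variable {K : CA G} {m M : ℤ} {γ : ℤ → G} {w : Wd G}

theorem RV.val (hm : 2 ≤ m) (R : RV K m γ M w) {X Y : ℤ} (h0 : 0 ≤ X) (hX : X + 1 < M) (h1 : 0 ≤ Y) (hY : Y + 1 < M) :
    Val K m γ w.tile X Y := by
  have hm0 : m ≠ 0 := by omega
  have key : ∀ f : ℤ → ℤ → Col G, VOk m γ f → ∀ X Y,
      (∀ L, olab m γ (X % (m+1)) = some L → (f X Y).l = L ∧ (f X Y).pf = last (olab m γ (Y % (m+1))) ∧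
        (f X Y).pb = (olab m γ (Y % (m+1))).isNone) ∧
      (last (olab m γ (X % (m+1))) = false → (f (X+1) Y).pf = last (olab m γ (Y % (m+1))) ∧
        (f (X+1) Y).pb = (olab m γ (Y % (m+1))).isNone) := by
    intro f hf X Y
    rw [last_olab hm0, last_olab hm0, isNone_olab]
    constructor
    · intro L hL
      by_cases h : X % (m+1) = 0
      · rw [h, olab_zero] at hL; simp at hL
      · rw [olab_pos h] at hL
        obtain ⟨a, b, c⟩ := hf X Y h
        exact ⟨a.trans (by simpa using hL), b, c⟩
    · intro hl
      have := Int.emod_nonneg X (show m+1 ≠ 0 by omega)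
      refine (hf (X+1) Y ?_).2
      rw [emod_succ (by omega), if_neg (by simpa using hl)]
      omega
  obtain ⟨k1, k2⟩ := key _ R.v X Y
  obtain ⟨k3, k4⟩ := key _ R.h Y X
  refine ⟨R.r _ _ h0 (by omega) h1 (by omega), R.r _ _ (by omega) hX h1 (by omega), R.r _ _ h0 (by omega) (by omega) hY,
    R.r _ _ (by omega) hX (by omega) hY, ?_, ?_, ?_, ?_, k1, k2, k3, k4⟩ <;> simp [Wd.tile]

/-- the inductive construction -/
noncomputable def ecol (K : CA G) (m : ℤ) (γ : ℤ → G) (w : Wd G) (X Y : ℤ) : Col G :=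
  let p := m + 1
  let a := X % p
  let b := Y % p
  let A := X / p
  let B := Y / p
  let i := A % (m+3)
  let j := B % (m+3)
  let kc : ℤ → ZMod 3 := fun b => if b = 0 then (w.H A B).k + 1 else if b = m then (w.H A (B+1)).k + 1 else 0
  let kr : ℤ → ZMod 3 := fun a => if a = 0 then (w.Vt A B).k + 1 else if a = m then (w.Vt (A+1) B).k + 1 else 0
  if b = 0 then w.H A B else
    { l := (γ b, decide (b = m))
      u := pat j b
      gs := olab (m+2) (K.step γ) j
      w := pat i b
      g := olab (m+2) (K.step γ) i
      kA := kc (b-1)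
      kB := kc b
      pb := decide (a = 0)
      pf := decide (a = m)
      k := kr a
      dg := decide (b ≤ a)
      hs := if a = 0 then none else some (pat i a, γ a, γ (a-1)) }

open Classical in
noncomputable def up (K : CA G) (m : ℤ) (γ : ℤ → G) (w : Wd G) : Wd G where
  H := ecol K m γ w
  Vt := fun X Y => ecol K m γ w.tr Y X
  ty := fun X Y => if X % (m+1) = 0 then (if Y % (m+1) = 0 then w.ty (X/(m+1)) (Y/(m+1)) else .RU)
    else (if Y % (m+1) = 0 then .CU else .E)

theorem up_tr : (up K m γ w).tr = up K m γ w.tr := by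
  simp only [up, Wd.tr, Wd.mk.injEq, true_and]
  refine ⟨by funext; rfl, ?_⟩
  funext X Y
  split_ifs <;> simp_all [Ty.tr]

theorem chk_pat (hm : 2 ≤ m) (hγ : ∀ i, i < 1 ∨ m < i → γ i = K.b) {i a : ℤ} (hi : 0 ≤ i) (ha : 1 ≤ a) (ha' : a ≤ m) :
    chk K (olab (m+2) (K.step γ) i) (if a - 1 = 0 then none else some (pat i (a-1), γ (a-1), γ (a-1-1))) (γ a) (pat i a)
      (some (pat i a, γ a, γ (a-1))) := by
  by_cases h1 : a = 1
  · subst h1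
    simp only [sub_self, if_true, chk, hγ 0 (by omega), true_and]
    by_cases h0 : i = 0
    · simp [h0, pat, olab]
    by_cases h0 : i = 1
    · subst h0
      have : ¬ (1 = m + 2) := by omega
      simp [pat, olab, CA.step, hγ 0 (by omega), hγ (-1) (by omega), this]
    by_cases h2 : i = 2
    · simp [h2, pat]
    · have : 1 < i - 1 := by omega
      simp [pat, *]
  · have h1' : ¬ (a - 1 = 0) := by omega
    simp only [h1', if_false, chk, true_and]
    by_cases h0 : i = 0
    · simp [h0, pat]
    by_cases h0 : i = 1
    · simp [h0, pat]
    rcases lt_trichotomy a i with h | h | h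
    · have e1 : a - 1 < i - 1 := by omega
      rcases (show a < i - 1 ∨ a = i - 1 by omega) with h' | h'
      · simp [pat, *]
      · have e2 : ¬ (a < i - 1) := by omega
        simp only [pat, *, if_true, if_false]; simp
    · have e2 : ¬ (a < a - 1) := by omega
      have e3 : ¬ (a = a - 1) := by omega
      have e4 : ¬ (a = m + 2) := by omega
      subst h
      simp [pat, olab, *, CA.step]
      congr 2; ring
    · have e1 : ¬ (a - 1 < i - 1) := by omega
      have e2 : ¬ (a - 1 = i - 1) := by omega
      have e3 : ¬ (a < i - 1) := by omega
      have e4 : ¬ (a = i - 1) := by omega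
      simp only [pat, *, if_false]

theorem fin_pat (hm : 2 ≤ m) (hγ : ∀ i, i < 1 ∨ m < i → γ i = K.b) {i : ℤ} (hi : i ≤ m + 2) :
    fin K (olab (m+2) (K.step γ) i) (some (pat i m, γ m, γ (m-1))) := by
  simp only [fin]
  by_cases h0 : i = 0
  · simp [h0, pat]
  by_cases h0 : i = 1
  · simp [h0, pat]
  rcases lt_trichotomy m (i-1) with h | h | h
  · have : i = m + 2 := by omega
    subst this
    have e : m + 2 - 1 = m + 1 := by ring
    simp [pat, olab, *, CA.step, hγ (m+1) (by omega), hγ (m+2) (by omega)]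
  · have : i = m + 1 := by omega
    subst this
    have e1 : ¬ (m + 1 = 0) := by omega
    have e2 : ¬ (m + 1 = 1) := by omega
    have e3 : ¬ (m + 1 = m + 2) := by omega
    simp only [pat, olab, e1, e2, e3, if_false, add_sub_cancel_right, lt_irrefl, if_true, CA.step, hγ (m+1) (by omega),
      decide_false]
    congr 3; ring_nf
  · have e1 : ¬ (m < i - 1) := by omega
    have e2 : ¬ (m = i - 1) := by omega
    simp [pat, *]

theorem stepw_pat {i b : ℤ} (hi : 0 ≤ i) (hb : 1 ≤ b) : stepw (pat i b) (pat (i+1) b) := by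
  by_cases h0 : i = 0
  · simp [h0, pat, stepw]
  by_cases h1 : i = 1
  · subst h1
    by_cases h2 : b = 1
    · simp [h2, pat, stepw]
    · have : ¬ (b < 1) := by omega
      simp [pat, stepw, *]
  have e1 : ¬ (i + 1 = 0) := by omega
  have e2 : ¬ (i + 1 = 1) := by omega
  rcases lt_trichotomy b (i-1) with h | h | h
  · have : b < i + 1 - 1 := by omega
    simp only [pat, h0, h1, e1, e2, h, this, if_false, if_true, stepw]
  · have : i - 1 < i + 1 - 1 := by omega
    subst h
    simp [pat, *, stepw, -add_sub_cancel_right]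
  · have e3 : ¬ (b < i - 1) := by omega
    have e4 : ¬ (b = i - 1) := by omega
    have e5 : ¬ (b < i) := by omega
    by_cases h2 : b = i
    · subst h2; simp [pat, *, stepw]
    · simp [pat, *, stepw]


theorem div_pred (hm : 2 ≤ m) (X : ℤ) : (X - 1) % (m+1) = (if X % (m+1) = 0 then m else X % (m+1) - 1) ∧
    (X - 1) / (m+1) = (if X % (m+1) = 0 then X / (m+1) - 1 else X / (m+1)) := by
  have e := emod_pred (p := m+1) (by omega) X
  rw [add_sub_cancel_right] at e
  refine ⟨e, ?_⟩
  have h1 := Int.mul_ediv_add_emod X (m+1)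
  have h2 := Int.mul_ediv_add_emod (X-1) (m+1)
  rw [e] at h2
  have hp : (m+1) ≠ 0 := by omega
  split_ifs at h2 ⊢ with h
  · rw [h] at h1
    apply mul_left_cancel₀ hp; linarith
  · apply mul_left_cancel₀ hp; linarith

theorem ecol_zero {X Y : ℤ} (h : Y % (m+1) = 0) : ecol K m γ w X Y = w.H (X/(m+1)) (Y/(m+1)) := by
  simp [ecol, h]

theorem up_half (hm : 2 ≤ m) (hγ : ∀ i, i < 1 ∨ m < i → γ i = K.b) (hb : ∀ i, ¬ K.bad (γ i)) (X Y : ℤ)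
    (hX : X % (m+1) ≠ 0) (hY : Y % (m+1) ≠ 0) :
    Half K (ecol K m γ w (X-1) Y) (ecol K m γ w X Y) (ecol K m γ w.tr (Y-1) X) (ecol K m γ w.tr Y X) := by
  obtain ⟨x1, x2⟩ := div_pred hm X
  obtain ⟨y1, y2⟩ := div_pred hm Y
  rw [if_neg hX] at x1 x2
  rw [if_neg hY] at y1 y2
  have a0 := Int.emod_nonneg X (show m+1 ≠ 0 by omega)
  have a1 := Int.emod_lt_of_pos X (show 0 < m+1 by omega)
  have b0 := Int.emod_nonneg Y (show m+1 ≠ 0 by omega)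
  have b1 := Int.emod_lt_of_pos Y (show 0 < m+1 by omega)
  have i0 := Int.emod_nonneg (X/(m+1)) (show m+3 ≠ 0 by omega)
  have C := chk_pat hm hγ i0 (show 1 ≤ X % (m+1) by omega) (by omega)
  simp only [ecol, x1, x2, y1, y2, hX, hY, if_false, Wd.tr]
  generalize X % (m+1) = a at *
  generalize Y % (m+1) = b at *
  constructor
  · simp; omega
  · simp
  · constructor <;> rfl
  · rfl
  · rfl
  · rfl
  · exact C
  · exact hb _
  · intro h h'
    simp only [decide_eq_false_iff_not] at h h'
    have : a = b := by omega
    subst this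
    simp
  · simp <;> omega
  · simp <;> omega

theorem up_under (hm : 2 ≤ m) (hγ : ∀ i, i < 1 ∨ m < i → γ i = K.b) (hv : VOk (m+2) (K.step γ) w.Vt) (X Y : ℤ)
    (hX : X % (m+1) = 0) (hY : Y % (m+1) ≠ 0) :
    Under K (ecol K m γ w (X-1) Y) (ecol K m γ w X Y) (w.Vt (X/(m+1)) (Y/(m+1))) := by
  obtain ⟨x1, x2⟩ := div_pred hm X
  rw [if_pos hX] at x1 x2
  have b0 := Int.emod_nonneg Y (show m+1 ≠ 0 by omega)
  have b1 := Int.emod_lt_of_pos Y (show 0 < m+1 by omega)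
  have i0 := Int.emod_nonneg (X/(m+1)-1) (show m+3 ≠ 0 by omega)
  have i1 := Int.emod_lt_of_pos (X/(m+1)-1) (show 0 < m+3 by omega)
  have F := fin_pat hm hγ (show (X/(m+1)-1) % (m+3) ≤ m + 2 by omega)
  have S := emod_succ (p := m+3) (by omega) (X/(m+1)-1)
  rw [sub_add_cancel] at S
  have hv' := hv (X/(m+1)) (Y/(m+1))
  simp only [ecol, x1, x2, hX, hY, if_false, if_true]
  rw [show m + 2 + 1 = m + 3 by ring] at hv'
  have m0 : m ≠ 0 := by omega
  have m0' : ¬ (0 = m) := by omega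
  have m20 : m + 2 ≠ 0 := by omega
  rw [S] at hv' ⊢
  generalize (X/(m+1)-1) % (m+3) = i at *
  generalize Y % (m+1) = b at *
  constructor <;> simp only [m0, m0', last_olab m20, isNone_olab, if_false, decide_true, decide_false,
    sub_add_cancel, decide_eq_true_eq, decide_eq_false_iff_not]
  · omega
  · exact F
  · intro h
    rw [if_pos (by omega)]
    simp [olab_zero, pat]
  · intro h
    rw [if_neg (by omega)] at hv' ⊢
    obtain ⟨h1, h2, h3⟩ := hv' (by omega)
    refine ⟨?_, stepw_pat i0 (by omega), h2, h3⟩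
    rw [olab_pos (by omega), h1]

theorem up_vok : VOk m γ (up K m γ w).Vt := by
  intro X Y hX
  simp only [up, ecol, hX, if_false, and_self]

theorem up_rv (hm : 2 ≤ m) (hγ : ∀ i, i < 1 ∨ m < i → γ i = K.b) (hb : ∀ i, ¬ K.bad (γ i))
    (R : RV K (m+2) (K.step γ) M w) : RV K m γ ((m+1)*M) (up K m γ w) := by
  refine ⟨fun X Y h0 h1 h2 h3 => ?_, up_vok, ?_⟩
  · obtain ⟨x1, x2⟩ := div_pred hm X
    obtain ⟨y1, y2⟩ := div_pred hm Y
    by_cases hX : X % (m+1) = 0 <;> by_cases hY : Y % (m+1) = 0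
    · have : (up K m γ w).tile X Y = w.tile (X/(m+1)) (Y/(m+1)) := by
        rw [if_pos hX] at x1 x2
        rw [if_pos hY] at y1 y2
        simp only [Wd.tile, up, ecol_zero hX, ecol_zero hY, x2, y2, Wd.tr, hX, hY, if_true]
      rw [this]
      refine R.r _ _ (Int.ediv_nonneg h0 (by omega)) ?_ (Int.ediv_nonneg h2 (by omega)) ?_ <;>
      apply Int.ediv_lt_of_lt_mul (by omega) <;> rwa [mul_comm]
    · simp only [Rloc, Wd.tile, up, hX, hY, if_true, if_false, ecol_zero hX]
      rw [if_neg hY] at y2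
      exact ⟨by rw [y2], up_under hm hγ R.v X Y hX hY⟩
    · simp only [Rloc, Wd.tile, up, hX, hY, if_true, if_false, ecol_zero hY]
      rw [if_neg hX] at x2
      exact ⟨by rw [x2], up_under (w := w.tr) hm hγ R.h Y X hY hX⟩
    · simp only [Rloc, Wd.tile, up, hX, hY, if_false]
      exact ⟨up_half hm hγ hb X Y hX hY, up_half (w := w.tr) hm hγ hb Y X hY hX⟩
  · exact up_vok (w := w.tr)

theorem up_mv (hm : 2 ≤ m) (σ : St) : Mv (m+1) (cuOf (up K m γ w).tile) σ := by
  rcases σ with ⟨X, Y, s, t⟩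
  have key : ∀ X s, (X + on1 s) % (m+1) = 0 ↔ X % (m+1) = top (m+1) s := by
    intro X s
    cases s
    · simp [on1, top]
    · have := Int.emod_nonneg X (show m+1 ≠ 0 by omega)
      simp only [on1, top, if_true]
      rw [emod_succ (by omega)]; split_ifs with h <;> omega
  simp only [Mv, cuOf, Wd.tile, up]
  rw [← key, ← key]
  constructor
  · split_ifs <;> simp_all
  · intro h h'
    by_contra h2
    simp [h', h2] at h

theorem up_cu (hm : 2 ≤ m) : (fun a b => cuOf (up K m γ w).tile ((m+1)*a) ((m+1)*b)) = cuOf w.tile := by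
  funext a b
  simp only [cuOf, Wd.tile, up, Int.mul_emod_right, if_true]
  rw [Int.mul_ediv_cancel_left _ (by omega), Int.mul_ediv_cancel_left _ (by omega)]

noncomputable def bcol (K : CA G) (m : ℤ) (γ : ℤ → G) (X Y : ℤ) : Col G where
  l := if Y % (m+1) = 0 then (K.b, false) else (γ (Y % (m+1)), decide (Y % (m+1) = m))
  u := .a0
  gs := none
  w := .a0
  g := none
  kA := 0
  kB := 0
  k := 0
  pb := if Y % (m+1) = 0 then false else decide (X % (m+1) = 0)
  pf := if Y % (m+1) = 0 then false else decide (X % (m+1) = m)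
  dg := decide (0 ≤ X)
  hs := if X < 0 then none else some (.a0, K.b, K.b)

theorem base_rv : RV K m γ 1 ⟨bcol K m γ, fun X Y => bcol K m γ Y X, fun _ _ => .E⟩ := by
  have H : Half K (bcol K m γ (-1) 0) (bcol K m γ 0 0) (bcol K m γ (-1) 0) (bcol K m γ 0 0) := by
    constructor <;> simp [bcol, chk, K.hbad]
    constructor <;> rfl
  refine ⟨fun X Y h0 h1 h2 h3 => ?_, ?_, ?_⟩
  · obtain rfl : X = 0 := by omega
    obtain rfl : Y = 0 := by omega
    simpa [Rloc, Wd.tile] using H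
  · intro X Y hX; simp [bcol, hX]
  · intro X Y hX; simp [bcol, hX]


def St0 : St := ⟨0, 0, true, true⟩

theorem comp_main (K : CA G) (T : ℕ) : ∀ (M : ℕ) (γ : ℤ → G), 2 ≤ M → M.bodd = false →
    (∀ i : ℤ, i < 1 ∨ M < i → γ i = K.b) → (∀ n i, ¬ K.bad (K.step^[n] γ i)) →
    ∃ w R, RV K M γ R w ∧ ∀ r < 9^T, ∀ σ, σ = (nx (cuOf w.tile))^[r] St0 →
      0 ≤ σ.X ∧ σ.X + 1 < R ∧ 0 ≤ σ.Y ∧ σ.Y + 1 < R ∧ (0 < r → σ.X = 0 → σ.Y ≠ 0) := by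
  induction T with
  | zero =>
    intro M γ hM hev hγ hb
    have B := base_rv (K := K) (m := (M:ℤ)+2) (γ := K.step γ)
    refine ⟨_, _, up_rv (by exact_mod_cast hM) hγ (hb 0) B, fun r hr σ hσ => ?_⟩
    obtain rfl : r = 0 := by simpa using hr
    simp only [iterate_zero, id] at hσ
    subst hσ
    simp only [St0]; omega
  | succ T ih =>
    intro M γ hM hev hγ hb
    obtain ⟨w, R, hR, hp⟩ := ih (M+2) (K.step γ) (by omega) (by simpa using hev) (by
      intro i hi
      push_cast at hi
      rw [CA.step, hγ (i-2) (by omega), hγ (i-1) (by omega), hγ i (by omega), K.hb]) (fun n i => by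
      simpa [iterate_succ_apply] using hb (n+1) i)
    have hm : (2:ℤ) ≤ M := by exact_mod_cast hM
    push_cast at hR
    refine ⟨_, _, up_rv hm hγ (hb 0) hR, fun r hr σ hσ => ?_⟩
    set cu := cuOf (up K M γ w).tile with hcu
    have P := fun S => pass (cu := cu) (M := M) rfl hev (S := S) (fun r _ => up_mv hm _)
    have hP9 : 9 ≤ (M+1)*(M+1) := by nlinarith
    set p := (M+1)*(M+1) with hpdef
    have P2 : ∀ q, (nx cu)^[q*p] (pos M St0 0 0) = pos M ((nx (cuOf w.tile))^[q] St0) 0 0 := by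
      intro q
      induction q with
      | zero => simp
      | succ q ih => rw [Nat.succ_mul, add_comm, iterate_add_apply, ih, (P _).2, iterate_succ_apply', up_cu hm]
    have hS : St0 = pos M St0 0 0 := by simp [St0, pos]
    have hp0 : 0 < p := by omega
    have hq : r / p < 9^T := by
      rw [Nat.div_lt_iff_lt_mul hp0]; rw [pow_succ] at hr
      exact lt_of_lt_of_le hr (Nat.mul_le_mul_left _ hP9)
    have hmod : r % p < (M+1)*(M+1) := Nat.mod_lt _ hp0
    have hc : r % p / (M+1) < M+1 := by rw [Nat.div_lt_iff_lt_mul (by omega)]; exact hmod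
    have he : r % p % (M+1) < M+1 := Nat.mod_lt _ (by omega)
    have hr' : r = (r % p / (M+1) * (M+1) + r % p % (M+1)) + r / p * p := by
      rw [Nat.div_add_mod', Nat.mod_add_div']
    rw [hr', iterate_add_apply, hS, P2, (P _).1 _ _ (by omega) (by omega)] at hσ
    obtain ⟨h1, h2, h3, h4, h5⟩ := hp _ hq _ rfl
    have hS0 : r / p = 0 → (nx (cuOf w.tile))^[r / p] St0 = St0 := fun h => by rw [h]; rfl
    have hr0 : r / p = 0 → r % p / (M+1) = 0 → r % p % (M+1) = 0 → r = 0 := fun a b c => by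
      rw [hr', a, b, c]; simp
    clear hr' P P2 hS hmod
    generalize (nx (cuOf w.tile))^[r / p] St0 = S at *
    generalize r % p / (M+1) = c at *
    generalize r % p % (M+1) = e at *
    have bd : ∀ A i : ℤ, 0 ≤ A → A + 1 < R → 0 ≤ i → i ≤ M → 0 ≤ ((M:ℤ)+1)*A + i ∧ ((M:ℤ)+1)*A + i + 1 < ((M:ℤ)+1)*R ∧
        (((M:ℤ)+1)*A + i = 0 → A = 0 ∧ i = 0) := by
      intro A i a1 a2 a3 a4
      refine ⟨by positivity, by nlinarith, fun h => ?_⟩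
      have : ((M:ℤ)+1)*A ≥ 0 := by positivity
      have h' : ((M:ℤ)+1)*A = 0 := by omega
      rcases mul_eq_zero.1 h' with h' | h' <;> omega
    obtain ⟨x1, x2, x3⟩ := bd S.X (if S.s then (c:ℤ) else M - c) h1 h2 (by split_ifs <;> omega) (by split_ifs <;> omega)
    obtain ⟨y1, y2, y3⟩ := bd S.Y (if (S.t ^^ c.bodd) then (e:ℤ) else M - e) h3 h4 (by split_ifs <;> omega) (by split_ifs <;> omega)
    subst hσ
    refine ⟨x1, x2, y1, y2, fun hr0' hx hy => ?_⟩
    obtain ⟨x3, x4⟩ := x3 hx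
    obtain ⟨y3, y4⟩ := y3 hy
    rcases Nat.eq_zero_or_pos (r / p) with h | h
    · have := hS0 h
      subst this
      simp only [St0, if_true] at x4
      have c0 : c = 0 := by omega
      subst c0
      simp [St0] at y4
      exact absurd (hr0 h rfl y4) (by omega)
    · exact h5 h x3 y3

end Rfa

namespace Rfa
section TMCA
open Turing
variable {Γ Λ : Type} [Inhabited Γ] [Inhabited Λ] (M : TM0.Machine Γ Λ) (S : Finset Λ)

abbrev CAG (Γ : Type) {Λ : Type} (S : Finset Λ) := Option S × Γ

/-- the transition at a cell -/
def tact (c : CAG Γ S) : Option (Λ × TM0.Stmt Γ) := c.1.bind fun q => M q.1 c.2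

open Classical in
noncomputable def toS (q : Λ) : Option S := if h : q ∈ S then some ⟨q, h⟩ else none

noncomputable def tmf (L C R : CAG Γ S) : CAG Γ S :=
  (match tact M S C, tact M S L, tact M S R with
    | some (q, .write _), _, _ => toS S q
    | _, some (q, .move .right), _ => toS S q
    | _, _, some (q, .move .left) => toS S q
    | _, _, _ => none,
   match tact M S C with
    | some (_, .write a) => a
    | _ => C.2)

noncomputable def tmCA : CA (CAG Γ S) where
  f := tmf M S
  b := (none, default)
  hb := by simp [tmf, tact]
  bad c := c.1 ≠ none ∧ tact M S c = none
  hbad := by simp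

open Classical in
noncomputable def tenc (c : TM0.Cfg Γ Λ) (p i : ℤ) : CAG Γ S :=
  (if i = p then toS S c.q else none, c.Tape.nth (i - p))

theorem tact_none (a : Γ) : tact M S (none, a) = none := rfl
theorem toS_mem {q : Λ} (h : q ∈ S) : toS S q = some ⟨q, h⟩ := by simp [toS, h]

theorem tact_enc {c : TM0.Cfg Γ Λ} (hc : c.q ∈ S) (p i : ℤ) :
    tact M S (tenc S c p i) = if i = p then M c.q c.Tape.head else none := by
  unfold tenc tact
  split_ifs with h
  · subst h; simp [toS, hc]
  · simp

theorem tm_step {c c' : TM0.Cfg Γ Λ} (hc : c.q ∈ S) (p : ℤ) (h : c' ∈ TM0.step M c) :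
    ∃ p', (tmCA M S).step (tenc S c p) = tenc S c' p' := by
  obtain ⟨q, T⟩ := c
  simp only [TM0.step, Option.mem_def, Option.map_eq_some_iff] at h
  obtain ⟨⟨q', a⟩, h1, rfl⟩ := h
  have ha := tact_enc M S hc p
  dsimp only at ha hc
  rw [h1] at ha
  rcases a with (_|_) | a
  · refine ⟨p, funext fun i => ?_⟩
    simp only [CA.step, tmCA, tmf, ha]
    by_cases h : i = p
    · subst h; simp [tenc]; rw [← Tape.nth_zero, Tape.move_left_nth]; rfl
    · simp [h, tenc]
      have e : (i - 1 - p) = i - p - 1 := by ring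
      by_cases h2 : i - 1 = p
      · have : i - p - 1 = 0 := by omega
        simp [h2, this]
      · by_cases h3 : i - 2 = p <;> simp [h2, h3, e]
  · refine ⟨p + 2, funext fun i => ?_⟩
    simp only [CA.step, tmCA, tmf, ha]
    by_cases h : i = p + 2
    · subst h; simp [tenc]; rw [← Tape.nth_zero, Tape.move_right_nth]; ring_nf
    · have e : (i - 1 - p) = i - (p + 2) + 1 := by ring
      simp [h, tenc, show i - 2 ≠ p by omega, e]
  · refine ⟨p + 1, funext fun i => ?_⟩
    simp only [CA.step, tmCA, tmf, ha]
    by_cases h : i = p + 1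
    · subst h; simp [tenc]; rw [← Tape.nth_zero, Tape.write_nth]; simp
    · have e : (i - 1 - p) = i - (p + 1) := by ring
      simp [h, tenc, Tape.write_nth, show i - 1 ≠ p by omega, e, show i - (p+1) ≠ 0 by omega]

theorem tm_halt (hS : TM0.Supports M ↑S) (c : TM0.Cfg Γ Λ) (hc : c.q ∈ S) (p : ℤ) :
    (∃ n i, (tmCA M S).bad ((tmCA M S).step^[n] (tenc S c p) i)) ↔
      (StateTransition.eval (TM0.step M) c).Dom := by
  constructor
  · rintro ⟨n, i, hn⟩
    induction n generalizing c p with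
    | zero =>
      obtain ⟨h1, h2⟩ := hn
      rw [iterate_zero_apply, tact_enc M S hc] at h2
      have : i = p := by
        by_contra h; apply h1; simp [tenc, h]
      rw [if_pos this] at h2
      refine Part.dom_iff_mem.2 ⟨c, StateTransition.mem_eval.2 ⟨Relation.ReflTransGen.refl, ?_⟩⟩
      rcases c with ⟨q, T⟩
      simpa [TM0.step] using h2
    | succ n ih =>
      rcases h : TM0.step M c with - | c'
      · exact Part.dom_iff_mem.2 ⟨c, StateTransition.mem_eval.2 ⟨Relation.ReflTransGen.refl, h⟩⟩
      · obtain ⟨p', hp⟩ := tm_step M S hc p h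
        rw [iterate_succ_apply, hp] at hn
        rw [StateTransition.reaches_eval (Relation.ReflTransGen.single h)]
        exact ih c' (TM0.step_supports M hS h hc) p' hn
  · intro h
    obtain ⟨d, hd⟩ := Part.dom_iff_mem.1 h
    obtain ⟨h1, h2⟩ := StateTransition.mem_eval.1 hd
    clear h hd
    induction h1 using Relation.ReflTransGen.head_induction_on generalizing p with
    | refl =>
      refine ⟨0, p, ?_, ?_⟩
      · simp [tenc, toS, hc]
      · rw [iterate_zero_apply, tact_enc M S hc]
        rcases d with ⟨q, T⟩
        simpa [TM0.step] using h2
    | head h _ ih =>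
      obtain ⟨p', hp⟩ := tm_step M S hc p h
      obtain ⟨n, i, hn⟩ := ih (TM0.step_supports M hS h hc) p'
      exact ⟨n+1, i, by rw [iterate_succ_apply, hp]; exact hn⟩

end TMCA

noncomputable def initc {G : Type} (b A B : G) (k : ℕ) (i : ℤ) : G :=
  if i = 1 then A else if 2 ≤ i ∧ i ≤ 2*k+1 then B else b

section
open Turing
variable {Γ Λ : Type} [Inhabited Γ] [Inhabited Λ] (M : TM0.Machine Γ Λ) (S : Finset Λ)
theorem tenc_init (a b : Γ) (k : ℕ) (hS : default ∈ S) :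
    tenc S (TM0.init (a :: List.replicate (2*k) b) : TM0.Cfg Γ Λ) 1 =
      initc (none, default) (some ⟨default, hS⟩, a) (none, b) k := by
  funext i
  have h0 : ∀ l : List Γ, ∀ n : ℕ, (Tape.mk₁ l).nth (n:ℤ) = l.getI n := by
    intro l n
    rw [Tape.mk₁, Tape.mk₂, Tape.mk'_nth_nat, ListBlank.nth_mk]
  have h1 : ∀ l : List Γ, ∀ n : ℕ, (Tape.mk₁ l).nth (Int.negSucc n) = default := by
    intro l n
    show ListBlank.nth (Tape.mk₁ l).left n = _
    simp [Tape.mk₁, Tape.mk₂, ListBlank.nth_mk]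
  unfold tenc initc TM0.init
  by_cases hi : i = 1
  · subst hi; simp [toS, hS]; exact h0 _ 0
  · rw [if_neg hi, if_neg hi]
    rcases lt_or_ge i 1 with h | h
    · obtain ⟨n, hn⟩ := Int.eq_negSucc_of_lt_zero (show i - 1 < 0 by omega)
      rw [hn, h1, if_neg (by omega)]
    · obtain ⟨n, hn⟩ := Int.eq_ofNat_of_zero_le (show 0 ≤ i - 2 by omega)
      have : i - 1 = ((n+1 : ℕ):ℤ) := by push_cast; omega
      rw [this, h0]
      split_ifs with h2
      · rw [List.getI_cons_succ, List.getI_eq_getElem _ (by simp; omega)]; simp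
      · rw [List.getI_cons_succ, List.getI_eq_default _ (by simp; omega)]

theorem tm_halt_init (hS : TM0.Supports M ↑S) (a b : Γ) (k : ℕ) (l : List Γ) (hl : l = a :: List.replicate (2*k) b) :
    (∃ n i, (tmCA M S).bad ((tmCA M S).step^[n]
      (initc (tmCA M S).b (some ⟨default, hS.1⟩, a) (none, b) k) i)) ↔ (TM0.eval M l).Dom := by
  subst hl
  have key := tm_halt M S hS (TM0.init (a :: List.replicate (2*k) b)) hS.1 1
  rw [tenc_init S a b k hS.1] at key
  exact key
end
end Rfa

namespace Rfa
section
open Turing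

theorem trInit_gen {K : Type} [DecidableEq K] {Γ : K → Type} (k : K) (a b : Γ k) (n : ℕ) (L : List (Γ k)) (hL : L = List.replicate n b ++ [a]) :
    TM2to1.trInit k L = (true, update (fun _ => none) k (some a)) ::
      List.replicate n (false, update (fun _ => none) k (some b)) := by
  subst hL
  simp only [TM2to1.trInit, List.reverse_append, List.reverse_replicate, List.reverse_singleton]
  rw [List.singleton_append]
  exact congrArg (List.cons _) List.map_replicate

theorem trNat_pow (k : ℕ) : PartrecToTM2.trNat (2^k - 1) = List.replicate k PartrecToTM2.Γ'.bit1 := by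
  have pos : ∀ k, PartrecToTM2.trNat (2^k - 1) = List.replicate k PartrecToTM2.Γ'.bit1 := by
    intro k
    induction k with
    | zero => simp [PartrecToTM2.trNat, PartrecToTM2.trNum]
    | succ k ih =>
      have e : 2^(k+1) - 1 = Nat.bit true (2^k-1) := by
        have := Nat.one_le_two_pow (n := k)
        simp [Nat.bit]; omega
      rw [e, List.replicate_succ, ← ih]
      unfold PartrecToTM2.trNat
      rw [← Num.ofNat'_eq, ← Num.ofNat'_eq, Num.ofNat'_bit]
      simp only [cond_true]
      cases (Num.ofNat' (2^k-1)) <;> rfl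
  exact pos k

/-- the diagonal function -/
theorem psi_exists : ∃ ψ : ℕ →. ℕ, Partrec ψ ∧ ¬ ComputablePred (fun k : ℕ => (ψ (2^(2*k) - 1)).Dom) := by
  have hpow : Primrec (fun k : ℕ => 2^(2*k)) := by
    have : Primrec (fun k : ℕ => (Nat.rec 1 (fun _ y => 4 * y) k : ℕ)) :=
      Primrec.nat_rec₁ 1 (Primrec.nat_mul.comp (Primrec.const 4) Primrec.snd)
    refine this.of_eq fun k => ?_
    induction k with
    | zero => rfl
    | succ k ih => simp only [ih]; ring
  let fd : ℕ →. ℕ := fun n => Nat.rfind (fun k => Part.some (decide (2^(2*k) = n+1)))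
  have hfd : Partrec fd := by
    have : Partrec₂ (fun n k : ℕ => (Part.some (decide (2^(2*k) = n+1)))) := by
      have : Computable₂ (fun n k : ℕ => (decide (2^(2*k) = n+1))) := by
        have h := (Primrec.eq (α := ℕ)).comp (f := fun x : ℕ × ℕ => 2^(2*x.2)) (g := fun x : ℕ × ℕ => x.1 + 1) (hpow.comp Primrec.snd) (Primrec.succ.comp Primrec.fst)
        exact (PrimrecPred.decide h).to_comp
      exact this.partrec₂
    exact Partrec.rfind this
  have fd_eq : ∀ k, fd (2^(2*k) - 1) = Part.some k := by
    intro k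
    refine Part.eq_some_iff.2 (Nat.mem_rfind.2 ?_)
    have := Nat.one_le_two_pow (n := 2*k)
    constructor
    · simp; omega
    · intro m hm
      simp
      have : 2^(2*m) < 2^(2*k) := Nat.pow_lt_pow_right (by norm_num) (by omega)
      omega
  refine ⟨fun n => (fd n).bind fun k => Nat.Partrec.Code.eval (Denumerable.ofNat Nat.Partrec.Code k) 0, ?_, ?_⟩
  · refine hfd.bind ?_
    exact Nat.Partrec.Code.eval_part.comp ((Computable.ofNat _).comp Computable.snd) (Computable.const 0)
  · intro h
    refine ComputablePred.halting_problem 0 ?_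
    obtain ⟨hd, h⟩ := h
    refine ComputablePred.computable_iff.2 ⟨fun c => decide (((fd (2^(2*(Encodable.encode c)) - 1)).bind fun k => Nat.Partrec.Code.eval (Denumerable.ofNat Nat.Partrec.Code k) 0).Dom), ?_, ?_⟩
    · exact h.comp Computable.encode
    · funext c
      simp [fd_eq]

theorem ca_undec : ∃ (G : Type) (_ : Finite G) (K : CA G) (A B : G),
    ¬ ComputablePred (fun k : ℕ => ∃ n i, K.bad (K.step^[n] (initc K.b A B k) i)) := by
  obtain ⟨ψ, h1, h2⟩ := psi_exists
  obtain ⟨c, hc⟩ := ToPartrec.Code.exists_code (Nat.Partrec'.part_iff₁.2 h1)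
  let i1 : Inhabited PartrecToTM2.Λ' := ⟨PartrecToTM2.trNormal c PartrecToTM2.Cont'.halt⟩
  have s1 := PartrecToTM2.tr_supports c PartrecToTM2.Cont'.halt
  classical
  have s2 := TM2to1.tr_supports _ s1
  let M := TM1to0.tr (TM2to1.tr PartrecToTM2.tr)
  have s3 := TM1to0.tr_supports _ s2
  let S := TM1to0.trStmts (TM2to1.tr PartrecToTM2.tr) (TM2to1.trSupp PartrecToTM2.tr (PartrecToTM2.codeSupp c PartrecToTM2.Cont'.halt))
  let sy (z : PartrecToTM2.Γ') : (k : PartrecToTM2.K') → Option PartrecToTM2.Γ' := update (fun _ => none) PartrecToTM2.K'.main (some z)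
  refine ⟨CAG (TM2to1.Γ' PartrecToTM2.K' fun _ => PartrecToTM2.Γ') S, ?_, tmCA M S, (some ⟨default, s3.1⟩, (true, sy .cons)), (none, (false, sy .bit1)), ?_⟩
  · have : Finite PartrecToTM2.K' := Finite.of_injective
      (fun x => match x with | .main => (0 : Fin 4) | .rev => 1 | .aux => 2 | .stack => 3) (by
        intro x y; cases x <;> cases y <;> simp)
    have : Finite (TM2to1.Γ' PartrecToTM2.K' fun _ => PartrecToTM2.Γ') := by
      unfold TM2to1.Γ'; infer_instance
    infer_instance
  convert h2 using 3 with k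
  refine (tm_halt_init M S s3 (true, sy .cons) (false, sy .bit1) k (TM2to1.trInit PartrecToTM2.K'.main (PartrecToTM2.trList [2^(2*k)-1])) ?_).trans ?_
  · exact trInit_gen _ _ _ _ _ (by simp [PartrecToTM2.trList, trNat_pow])
  rw [TM1to0.tr_eval]
  refine (TM2to1.tr_eval_dom _ _ _).trans ?_
  have e3 : (TM2.eval PartrecToTM2.tr PartrecToTM2.K'.main (PartrecToTM2.trList [2^(2*k)-1])).Dom ↔ (StateTransition.eval (TM2.step PartrecToTM2.tr) (PartrecToTM2.init c [2^(2*k)-1])).Dom := by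
    have : (TM2.init PartrecToTM2.K'.main (PartrecToTM2.trList [2^(2*k)-1])) = PartrecToTM2.init c [2^(2*k)-1] := by
      simp only [TM2.init, PartrecToTM2.init]
      congr 1
      funext z; cases z <;> simp [PartrecToTM2.K'.elim]
    rw [← this]; rfl
  refine e3.trans ?_
  rw [PartrecToTM2.tr_eval]
  have := hc ⟨[2^(2*k)-1], rfl⟩
  dsimp at this
  rw [this]
  rfl
end
end Rfa

namespace Rfa
section cp
variable {A : Type} [AddCommGroup A] (sl : Fin 5 → A)

def Cross (P Q : A → Prop) : Prop :=
  ∀ v v' o o', P v → Q v' → v + sl o = v' + sl o' → v = v' ∧ o = o'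

open Classical in
noncomputable def cfun (P : A → Prop) (q : Equiv.Perm (Fin 5)) (w : A) : A :=
  if h : ∃ o, P (w - sl o) then w - sl h.choose + sl (q h.choose) else w

variable {sl} {P Q C : A → Prop}

theorem Cross.mono {P' Q' : A → Prop} (h : Cross sl P Q) (hp : ∀ v, P' v → P v) (hq : ∀ v, Q' v → Q v) : Cross sl P' Q' :=
  fun v v' o o' a b c => h v v' o o' (hp _ a) (hq _ b) c

theorem cfun_in (h : Cross sl P P) {v : A} (hv : P v) (q : Equiv.Perm (Fin 5)) (o : Fin 5) :
    cfun sl P q (v + sl o) = v + sl (q o) := by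
  have hex : ∃ o', P (v + sl o - sl o') := ⟨o, by simpa using hv⟩
  obtain ⟨e1, e2⟩ := h v _ o hex.choose hv hex.choose_spec (by abel)
  rw [cfun, dif_pos hex, ← e2]; simp

theorem cfun_out {w : A} (h : ∀ o, ¬ P (w - sl o)) (q : Equiv.Perm (Fin 5)) : cfun sl P q w = w := by
  rw [cfun, dif_neg (by push Not; exact h)]

theorem cases_slot (sl : Fin 5 → A) (P : A → Prop) (w : A) : (∃ v o, P v ∧ w = v + sl o) ∨ ∀ o, ¬ P (w - sl o) := by
  by_cases h : ∃ o, P (w - sl o)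
  · obtain ⟨o, h⟩ := h; exact Or.inl ⟨_, o, h, by simp⟩
  · push Not at h; exact Or.inr h

theorem cfun_comp (h : Cross sl P P) (q q' : Equiv.Perm (Fin 5)) (w : A) :
    cfun sl P q (cfun sl P q' w) = cfun sl P (q * q') w := by
  rcases cases_slot sl P w with ⟨v, o, hv, rfl⟩ | hw
  · simp [cfun_in h hv]
  · simp [cfun_out hw]

theorem cfun_one (h : Cross sl P P) (w : A) : cfun sl P 1 w = w := by
  rcases cases_slot sl P w with ⟨v, o, hv, rfl⟩ | hw
  · simp [cfun_in h hv]
  · simp [cfun_out hw]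

variable (sl P) in
open Classical in
noncomputable def cp (q : Equiv.Perm (Fin 5)) : Equiv.Perm A :=
  if h : Cross sl P P then
    ⟨cfun sl P q, cfun sl P q⁻¹, fun w => by rw [cfun_comp h]; simp [cfun_one h],
      fun w => by rw [cfun_comp h]; simp [cfun_one h]⟩
  else 1

theorem cp_apply (h : Cross sl P P) (q : Equiv.Perm (Fin 5)) (w : A) : cp sl P q w = cfun sl P q w := by
  rw [cp, dif_pos h]; rfl

theorem cp_symm_apply (h : Cross sl P P) (q : Equiv.Perm (Fin 5)) (w : A) : (cp sl P q).symm w = cfun sl P q⁻¹ w := by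
  rw [cp, dif_pos h]; rfl

theorem cp_inv (h : Cross sl P P) (q : Equiv.Perm (Fin 5)) : (cp sl P q)⁻¹ = cp sl P q⁻¹ := by
  ext w
  rw [cp_apply h]; exact cp_symm_apply h q w

theorem cp_in (h : Cross sl P P) {v : A} (hv : P v) (q : Equiv.Perm (Fin 5)) (o : Fin 5) :
    cp sl P q (v + sl o) = v + sl (q o) := by rw [cp_apply h, cfun_in h hv]

theorem cp_out {w : A} (h : ∀ o, ¬ P (w - sl o)) (q : Equiv.Perm (Fin 5)) : cp sl P q w = w := by
  rw [cp]; split_ifs with h'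
  · exact cfun_out h q
  · rfl

theorem out_of_cross (h : Cross sl P Q) {v : A} (hv : P v) (hq : ¬ Q v) (o : Fin 5) : ∀ o', ¬ Q (v + sl o - sl o') := by
  intro o' hQ
  obtain ⟨e, -⟩ := h v _ o o' hv hQ (by abel)
  exact hq (e ▸ hQ)

theorem Cross.symm (h : Cross sl P Q) : Cross sl Q P := fun v v' o o' a b c => by
  obtain ⟨h1, h2⟩ := h v' v o' o b a c.symm
  exact ⟨h1.symm, h2.symm⟩

theorem cp_comm (hP : Cross sl P P) (hQ : Cross sl Q Q) (hx : Cross sl P Q) (q q' : Equiv.Perm (Fin 5)) :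
    cp sl P q * cp sl Q q' * (cp sl P q)⁻¹ * (cp sl Q q')⁻¹ = cp sl (fun v => P v ∧ Q v) (q * q' * q⁻¹ * q'⁻¹) := by
  have hPQ : Cross sl (fun v => P v ∧ Q v) (fun v => P v ∧ Q v) := hP.mono (fun _ h => h.1) (fun _ h => h.1)
  rw [cp_inv hP, cp_inv hQ]
  ext w
  simp only [Equiv.Perm.mul_apply]
  rcases cases_slot sl P w with ⟨v, o, hv, rfl⟩ | hw
  · by_cases hq : Q v
    · simp [cp_in hP hv, cp_in hQ hq, cp_in (P := fun v => P v ∧ Q v) hPQ ⟨hv, hq⟩]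
    · have := fun o q' => cp_out (out_of_cross hx hv hq o) q'
      have h2 : ∀ o', ¬ (P (v + sl o - sl o') ∧ Q (v + sl o - sl o')) := fun o' h => out_of_cross hx hv hq o o' h.2
      simp [this, cp_in hP hv, cp_out (P := fun v => P v ∧ Q v) h2]
  · have h2 : ∀ o', ¬ (P (w - sl o') ∧ Q (w - sl o')) := fun o' h => hw _ h.1
    rw [cp_out (P := fun v => P v ∧ Q v) h2]
    rcases cases_slot sl Q w with ⟨v, o, hv, rfl⟩ | hw'
    · have hp : ¬ P v := fun h => hw o (by simpa using h)
      have := fun o q' => cp_out (out_of_cross hx.symm hv hp o) q'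
      simp [this, cp_in hQ hv]
    · simp [cp_out hw, cp_out hw']

theorem cp_conj (hC : Cross sl C C) (hP : ∀ v, P v → C v) (q r : Equiv.Perm (Fin 5)) :
    cp sl C q * cp sl P r * (cp sl C q)⁻¹ = cp sl P (q * r * q⁻¹) := by
  have hPP := hC.mono hP hP
  rw [cp_inv hC]
  ext w
  simp only [Equiv.Perm.mul_apply]
  rcases cases_slot sl C w with ⟨v, o, hv, rfl⟩ | hw
  · by_cases hp : P v
    · simp [cp_in hC hv, cp_in hPP hp]
    · have := fun o q' => cp_out (out_of_cross (hC.mono (fun _ h => h) hP) hv hp o) q'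
      simp [this, cp_in hC hv]
  · have h2 : ∀ o', ¬ P (w - sl o') := fun o' h => hw _ (hP _ h)
    simp [cp_out hw, cp_out h2]

theorem cp_shift (hP : Cross sl P P) (t : A) (q : Equiv.Perm (Fin 5)) :
    Equiv.addRight t * cp sl P q * (Equiv.addRight t)⁻¹ = cp sl (fun v => P (v - t)) q := by
  have h2 : Cross sl (fun v => P (v - t)) (fun v => P (v - t)) := by
    intro v v' o o' a b c
    obtain ⟨h1, h2⟩ := hP _ _ o o' a b (by rw [sub_add_eq_add_sub, c, sub_add_eq_add_sub])
    exact ⟨by simpa using h1, h2⟩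
  ext w
  have e : (Equiv.addRight t)⁻¹ w = w - t := by simp [Equiv.Perm.inv_def, sub_eq_add_neg]
  simp only [Equiv.Perm.mul_apply, e]
  rcases cases_slot sl (fun v => P (v - t)) w with ⟨v, o, hv, rfl⟩ | hw
  · rw [cp_in h2 hv, show v + sl o - t = (v - t) + sl o by abel, cp_in hP hv]; simp only [Equiv.coe_addRight]; abel
  · rw [cp_out (P := fun v => P (v - t)) hw, cp_out (fun o h => hw o (by rwa [sub_right_comm]))]; simp

theorem cp_or (hC : Cross sl C C) (hP : ∀ v, P v → C v) (hQ : ∀ v, Q v → C v) (hx : ∀ v, P v → ¬ Q v) (q : Equiv.Perm (Fin 5)) :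
    cp sl P q * cp sl Q q = cp sl (fun v => P v ∨ Q v) q := by
  have hPP := hC.mono hP hP
  have hQQ := hC.mono hQ hQ
  have hPQ := hC.mono hP hQ
  have hO : Cross sl (fun v => P v ∨ Q v) (fun v => P v ∨ Q v) :=
    hC.mono (fun v h => h.elim (hP v) (hQ v)) (fun v h => h.elim (hP v) (hQ v))
  ext w
  simp only [Equiv.Perm.mul_apply]
  rcases cases_slot sl (fun v => P v ∨ Q v) w with ⟨v, o, hv, rfl⟩ | hw
  · rw [cp_in hO hv]
    rcases hv with hv | hv
    · have := fun o q' => cp_out (out_of_cross hPQ hv (hx _ hv) o) q'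
      rw [this, cp_in hPP hv]
    · have := fun o q' => cp_out (out_of_cross hPQ.symm hv (fun h => hx _ h hv) o) q'
      rw [cp_in hQQ hv, this]
  · rw [cp_out (P := fun v => P v ∨ Q v) hw, cp_out (fun o h => hw o (Or.inr h)), cp_out (fun o h => hw o (Or.inl h))]

theorem cp_false (q : Equiv.Perm (Fin 5)) (h : ∀ v, ¬ P v) : cp sl P q = 1 := by
  ext w; rw [cp_out (fun o => h _)]; rfl
end cp
end Rfa

namespace Rfa

section words
variable {α H : Type} [Group H] (π : α → H)

abbrev Wrd (α : Type) := List (α × Bool)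

def ev (w : Wrd α) : H := (w.map fun p => if p.2 then π p.1 else (π p.1)⁻¹).prod
def wInv (w : Wrd α) : Wrd α := (w.map fun p => (p.1, !p.2)).reverse
def wConj (a b : Wrd α) : Wrd α := a ++ b ++ wInv a
def wComm (a b : Wrd α) : Wrd α := a ++ b ++ wInv a ++ wInv b
def wStep (a t w : Wrd α) : Wrd α := wComm a (wConj (wInv t) w)
def wWin (t a0 a1 a2 a3 : Wrd α) (k : ℕ) : Wrd α := wStep a0 t (wStep a1 t ((wStep a2 t)^[2*k] a3))
def wHor (t a0 a1 a2 a3 : Wrd α) (k : ℕ) : Wrd α :=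
  (fun S => wWin t a0 a1 a2 a3 k ++ wConj t S)^[2*k+3] []

theorem ev_append (a b : Wrd α) : ev π (a ++ b) = ev π a * ev π b := by simp [ev]
theorem ev_nil : ev π ([] : Wrd α) = 1 := rfl
theorem ev_single (a : α) : ev π [(a, true)] = π a := by simp [ev]
theorem ev_inv (w : Wrd α) : ev π (wInv w) = (ev π w)⁻¹ := by
  induction w with
  | nil => simp [ev, wInv]
  | cons p w ih =>
    have h1 : wInv (p :: w) = wInv w ++ [(p.1, !p.2)] := by simp [wInv]
    have h2 : ev π (p :: w) = ev π [p] * ev π w := ev_append π [p] w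
    rw [h1, ev_append, ih, h2, mul_inv_rev]
    rcases p with ⟨a, _ | _⟩ <;> simp [ev]
theorem ev_conj (a b : Wrd α) : ev π (wConj a b) = ev π a * ev π b * (ev π a)⁻¹ := by
  simp [wConj, ev_append, ev_inv, mul_assoc]
theorem ev_comm (a b : Wrd α) : ev π (wComm a b) = ev π a * ev π b * (ev π a)⁻¹ * (ev π b)⁻¹ := by
  simp [wComm, ev_append, ev_inv, mul_assoc]
theorem ev_step (a t w : Wrd α) : ev π (wStep a t w) =
    ev π a * ((ev π t)⁻¹ * ev π w * ev π t) * (ev π a)⁻¹ * ((ev π t)⁻¹ * ev π w * ev π t)⁻¹ := by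
  simp [wStep, ev_comm, ev_conj, ev_inv]
theorem ev_hom {H' : Type} [Group H'] (f : H →* H') (w : Wrd α) : f (ev π w) = ev (fun a => f (π a)) w := by
  simp only [ev, map_list_prod, List.map_map]
  congr 2
  funext p
  simp only [comp]
  split_ifs <;> simp
end words

def pr : Equiv.Perm (Fin 5) := Equiv.swap 0 1 * Equiv.swap 1 2
def ps : Equiv.Perm (Fin 5) := Equiv.swap 0 1
def pq : Equiv.Perm (Fin 5) := Equiv.swap 0 1 * Equiv.swap 0 3
def p2 : Equiv.Perm (Fin 5) := Equiv.swap 0 1 * Equiv.swap 2 3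

theorem ps_pr : ps * pr * ps⁻¹ * pr⁻¹ = pr := by decide
theorem pr_pq : pr * (pq * pr * pq⁻¹) * pr⁻¹ * (pq * pr * pq⁻¹)⁻¹ = p2 := by decide
theorem p2_p2 : p2 * p2 = 1 := by decide

section win
variable {A L : Type} [AddCommGroup A] {sl : Fin 5 → A} (t s : A) (C : A → Prop) (fl : A → Option L)

/-- the local window predicate -/
def Asg (σ : Option L) (v : A) : Prop :=
  C v ∧ C (v + t) ∧ fl v = σ ∧ fl (v + s) = σ ∧ fl (v - s) = σ

def Qw (m : ℕ) (ol : ℕ → Option L) (j : ℕ) (v : A) : Prop := ∀ i ≤ j, Asg t s C fl (ol (m - j + i)) (v + i • t)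

theorem Qw_succ {m j : ℕ} {ol : ℕ → Option L} (h : j < m) (v : A) :
    Qw t s C fl m ol (j+1) v ↔ Asg t s C fl (ol (m - (j+1))) v ∧ Qw t s C fl m ol j (v + t) := by
  constructor
  · intro H
    refine ⟨by simpa using H 0 (by omega), fun i hi => ?_⟩
    have := H (i+1) (by omega)
    rwa [show m - (j+1) + (i+1) = m - j + i by omega, succ_nsmul', ← add_assoc] at this
  · rintro ⟨H1, H2⟩ i hi
    rcases i with - | i
    · simpa using H1
    · have := H2 i (by omega)
      rwa [show m - (j+1) + (i+1) = m - j + i by omega, succ_nsmul', ← add_assoc]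

variable {t s C fl}

theorem Qw_C {m j : ℕ} {ol : ℕ → Option L} {v : A} (h : Qw t s C fl m ol j v) : C v := by
  simpa using (h 0 (by omega)).1

theorem ev_wStep {α : Type} {π : α → Equiv.Perm A} {a tw w : Wrd α} {m j : ℕ} {ol : ℕ → Option L}
    (hC : Cross sl C C) (h : j < m)
    (ht : ev π tw = Equiv.addRight t) (ha : ev π a = cp sl (Asg t s C fl (ol (m - (j+1)))) ps)
    (hw : ev π w = cp sl (Qw t s C fl m ol j) pr) :
    ev π (wStep a tw w) = cp sl (Qw t s C fl m ol (j+1)) pr := by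
  have hQ := hC.mono (fun _ => Qw_C (m := m) (j := j) (ol := ol) (t := t) (s := s) (fl := fl)) (fun _ => Qw_C (m := m) (j := j) (ol := ol) (t := t) (s := s) (fl := fl))
  have key : (Equiv.addRight t)⁻¹ * cp sl (Qw t s C fl m ol j) pr * Equiv.addRight t =
      cp sl (fun v => Qw t s C fl m ol j (v + t)) pr := by
    have := cp_shift hQ (-t) pr
    simp only [sub_neg_eq_add] at this
    rw [← this]
    congr 1 <;> [congr 1; skip] <;> ext w <;> simp [Equiv.Perm.inv_def]
  have hx : Cross sl (Asg t s C fl (ol (m - (j+1)))) (fun v => Qw t s C fl m ol j (v + t)) := by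
    intro v v' o o' h1 h2 h3
    obtain ⟨h4, h5⟩ := hC (v + t) (v' + t) o o' h1.2.1 (Qw_C h2) (by rw [add_right_comm, h3, add_right_comm])
    exact ⟨by simpa using h4, h5⟩
  have hA : Cross sl (Asg t s C fl (ol (m - (j+1)))) (Asg t s C fl (ol (m - (j+1)))) :=
    hC.mono (fun _ h => h.1) (fun _ h => h.1)
  have hQ' : Cross sl (fun v => Qw t s C fl m ol j (v + t)) (fun v => Qw t s C fl m ol j (v + t)) := by
    intro v v' o o' h1 h2 h3
    obtain ⟨h4, h5⟩ := hC (v + t) (v' + t) o o' (Qw_C h1) (Qw_C h2) (by rw [add_right_comm, h3, add_right_comm])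
    exact ⟨by simpa using h4, h5⟩
  rw [ev_step, ht, ha, hw, key, cp_comm hA hQ' hx, ps_pr]
  congr 1
  funext v
  exact propext (Qw_succ t s C fl h v).symm

/-- the window -/
abbrev Wn (t s : A) (C : A → Prop) (fl : A → Option L) (m : ℕ) (ol : ℕ → Option L) : A → Prop := Qw t s C fl m ol m

theorem ev_wWin {α : Type} {π : α → Equiv.Perm A} {tw a0 a1 a2 a3 : Wrd α} {k : ℕ} {ol : ℕ → Option L}
    (hC : Cross sl C C) (ht : ev π tw = Equiv.addRight t)
    (h0 : ev π a0 = cp sl (Asg t s C fl (ol 0)) ps)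
    (h1 : ev π a1 = cp sl (Asg t s C fl (ol 1)) ps)
    (h2 : ∀ i, 2 ≤ i → i < 2*k+2 → ev π a2 = cp sl (Asg t s C fl (ol i)) ps)
    (h3 : ev π a3 = cp sl (Asg t s C fl (ol (2*k+2))) pr) :
    ev π (wWin tw a0 a1 a2 a3 k) = cp sl (Wn t s C fl (2*k+2) ol) pr := by
  have it : ∀ j ≤ 2*k, ev π ((wStep a2 tw)^[j] a3) = cp sl (Qw t s C fl (2*k+2) ol j) pr := by
    intro j
    induction j with
    | zero =>
      intro _
      rw [iterate_zero_apply, h3]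
      congr 1; funext v
      simp [Qw]
    | succ j ih =>
      intro hj
      rw [iterate_succ_apply']
      exact ev_wStep hC (by omega) ht (h2 _ (by omega) (by omega)) (ih (by omega))
  refine ev_wStep hC (by omega) ht ?_ (ev_wStep hC (by omega) ht ?_ (it _ le_rfl))
  · rw [h0]; congr 3; omega
  · rw [h1]; congr 3; omega

/-- phase -/
def Ph (t s : A) (C : A → Prop) (fl : A → Option L) (m : ℕ) (ol : ℕ → Option L) (v : A) (i : ℕ) : Prop :=
  i ≤ m ∧ Wn t s C fl m ol (v - i • t)

section ph
variable {m : ℕ} {ol : ℕ → Option L} {v : A} {i j : ℕ}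

theorem Ph.asg (h : Ph t s C fl m ol v i) {l : ℕ} (hl : l ≤ m) : Asg t s C fl (ol l) (v - i • t + l • t) := by
  have := h.2 l hl
  rwa [show m - m + l = l by omega] at this

theorem Ph.asg0 (h : Ph t s C fl m ol v i) : Asg t s C fl (ol i) v := by
  simpa using h.asg h.1

theorem Ph.code (h : Ph t s C fl m ol v i) : C v := h.asg0.1

theorem Ph.le (h0 : ol 0 = none) (h1 : ∀ i, 1 ≤ i → i ≤ m → ol i ≠ none)
    (h : Ph t s C fl m ol v i) (h' : Ph t s C fl m ol v j) : j ≤ i := by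
  by_contra hh
  have a := (h.asg (Nat.zero_le m)).2.2.1
  have b := (h'.asg (l := j - i) (by have := h'.1; omega)).2.2.1
  have e : v - j • t + (j - i) • t = v - i • t + 0 • t := by
    obtain ⟨c, rfl⟩ := Nat.exists_eq_add_of_le (show i ≤ j by omega)
    simp [add_nsmul]; abel
  rw [e, a, h0] at b
  exact h1 _ (by omega) (by have := h'.1; omega) b.symm

theorem Ph.unique (h0 : ol 0 = none) (h1 : ∀ i, 1 ≤ i → i ≤ m → ol i ≠ none)
    (h : Ph t s C fl m ol v i) (h' : Ph t s C fl m ol v j) : i = j :=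
  le_antisymm (h'.le h0 h1 h) (h.le h0 h1 h')

theorem Ph.up (h0 : ol 0 = none) (h1 : ∀ i, 1 ≤ i → i ≤ m → ol i ≠ none)
    (h : Ph t s C fl m ol v i) (h' : Ph t s C fl m ol (v + s) j) : i = j := by
  rcases lt_trichotomy i j with hh | hh | hh
  · exfalso
    have a := (h.asg (Nat.zero_le m)).2.2.2.1
    have b := (h'.asg (l := j - i) (by have := h'.1; omega)).2.2.1
    have e : v + s - j • t + (j - i) • t = v - i • t + 0 • t + s := by
      obtain ⟨c, rfl⟩ := Nat.exists_eq_add_of_le (show i ≤ j by omega)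
      simp [add_nsmul]; abel
    rw [e, a, h0] at b
    exact h1 _ (by omega) (by have := h'.1; omega) b.symm
  · exact hh
  · exfalso
    have a := (h'.asg (Nat.zero_le m)).2.2.1
    have b := (h.asg (l := i - j) (by have := h.1; omega)).2.2.2.1
    have e : v - i • t + (i - j) • t + s = v + s - j • t + 0 • t := by
      obtain ⟨c, rfl⟩ := Nat.exists_eq_add_of_le (show j ≤ i by omega)
      simp [add_nsmul]; abel
    rw [e, a, h0] at b
    exact h1 _ (by omega) (by have := h.1; omega) b.symm

theorem Ph.right (h0 : ol 0 = none) (h1 : ∀ i, 1 ≤ i → i ≤ m → ol i ≠ none)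
    (h : Ph t s C fl m ol v i) (h' : Ph t s C fl m ol (v + t) j) : j = if i = m then 0 else i + 1 := by
  split_ifs with hi
  · by_contra hj
    have : Ph t s C fl m ol v (j - 1) := by
      refine ⟨by have := h'.1; omega, ?_⟩
      have := h'.2
      obtain ⟨c, rfl⟩ := Nat.exists_eq_add_of_le' (show 1 ≤ j by omega)
      rw [succ_nsmul] at this
      simpa using this
    have := this.unique h0 h1 h
    have := h'.1
    omega
  · have : Ph t s C fl m ol (v + t) (i+1) := by
      refine ⟨by have := h.1; omega, ?_⟩
      have := h.2
      rw [succ_nsmul]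
      simpa using this
    exact h'.unique h0 h1 this
end ph

theorem ev_wHor {α : Type} {π : α → Equiv.Perm A} {tw a0 a1 a2 a3 : Wrd α} {k : ℕ} {ol : ℕ → Option L}
    (g0 : ol 0 = none) (g1 : ∀ i, 1 ≤ i → i ≤ 2*k+2 → ol i ≠ none)
    (hC : Cross sl C C) (ht : ev π tw = Equiv.addRight t)
    (h0 : ev π a0 = cp sl (Asg t s C fl (ol 0)) ps)
    (h1 : ev π a1 = cp sl (Asg t s C fl (ol 1)) ps)
    (h2 : ∀ i, 2 ≤ i → i < 2*k+2 → ev π a2 = cp sl (Asg t s C fl (ol i)) ps)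
    (h3 : ev π a3 = cp sl (Asg t s C fl (ol (2*k+2))) pr) :
    ev π (wHor tw a0 a1 a2 a3 k) = cp sl (fun v => ∃ i, Ph t s C fl (2*k+2) ol v i) pr := by
  have it : ∀ j ≤ 2*k+3, ev π ((fun S => wWin tw a0 a1 a2 a3 k ++ wConj tw S)^[j] []) =
      cp sl (fun v => ∃ i < j, Ph t s C fl (2*k+2) ol v i) pr := by
    intro j
    induction j with
    | zero =>
      intro _
      rw [cp_false _ (by simp)]; rfl
    | succ j ih =>
      intro hj
      have hP : ∀ v, (∃ i < j, Ph t s C fl (2*k+2) ol v i) → C v := fun v ⟨i, _, h⟩ => h.code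
      have sh : ∀ v i, i < j → Ph t s C fl (2*k+2) ol (v - t) i → Ph t s C fl (2*k+2) ol v (i+1) := by
        intro v i hi h
        refine ⟨by omega, ?_⟩
        rw [show v - (i+1) • t = v - t - i • t by rw [succ_nsmul]; abel]; exact h.2
      rw [iterate_succ_apply', ev_append, ev_conj, ev_wWin hC ht h0 h1 h2 h3, ih (by omega), ht,
        cp_shift (hC.mono hP hP), cp_or hC (fun _ => Qw_C)]
      · congr 1
        funext v
        refine propext ⟨?_, ?_⟩
        · rintro (h | ⟨i, hi, h⟩)
          · exact ⟨0, by omega, by omega, by simpa using h⟩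
          · exact ⟨i+1, by omega, sh _ _ hi h⟩
        · rintro ⟨i, hi, h⟩
          rcases i with - | i
          · left; simpa using h.2
          · right
            refine ⟨i, by omega, by omega, ?_⟩
            have := h.2
            rwa [show v - (i+1) • t = v - t - i • t by rw [succ_nsmul]; abel] at this
      · rintro v ⟨i, hi, h⟩
        exact (sh _ _ hi h).code
      · rintro v h ⟨i, hi, h'⟩
        have := (sh _ _ hi h').unique (j := 0) g0 g1 ⟨by omega, by simpa using h⟩
        omega
  rw [wHor, it _ le_rfl]
  congr 1; funext v
  refine propext ⟨fun ⟨i, _, h⟩ => ⟨i, h⟩, fun ⟨i, h⟩ => ⟨i, by have := h.1; omega, h⟩⟩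
end win
end Rfa

namespace Rfa

theorem grp_lemma {A : Type} {τ ρ : Equiv.Perm A} (hτ : τ * τ = 1) (hρ : ρ * ρ = 1) (N : ℕ)
    (h : ∀ y, ∃ a ≤ N, τ (((ρ * τ) ^ a) y) = ((ρ * τ) ^ a) y ∨ ρ (τ (((ρ * τ) ^ a) y)) = τ (((ρ * τ) ^ a) y)) :
    (ρ * τ) ^ (4 * N + 3).factorial = 1 := by
  set g := ρ * τ with hg
  have hgi : τ * g * τ = g⁻¹ := by
    rw [eq_inv_iff_mul_eq_one, hg]
    calc τ * (ρ * τ) * τ * (ρ * τ) = τ * ρ * (τ * τ) * ρ * τ := by group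
      _ = τ * (ρ * ρ) * τ := by rw [hτ]; group
      _ = 1 := by rw [hρ]; simpa using hτ
  have hgz : ∀ a : ℤ, τ * g ^ a = g ^ (-a) * τ := by
    intro a
    have h1 : τ⁻¹ = τ := by rw [inv_eq_iff_mul_eq_one]; exact hτ
    have : (τ * g * τ⁻¹) ^ a = τ * g ^ a * τ⁻¹ := conj_zpow
    rw [h1, hgi] at this
    rw [zpow_neg, ← inv_zpow, this, mul_assoc, hτ, mul_one]
  have hgz' : ∀ (a : ℤ) y, τ ((g ^ a) y) = (g ^ (-a)) (τ y) := fun a y => by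
    rw [← Equiv.Perm.mul_apply, hgz, Equiv.Perm.mul_apply]
  have hc : ∀ y, ∃ c : ℕ, c ≤ 2 * N + 1 ∧ τ y = (g ^ (c : ℤ)) y := by
    intro y
    obtain ⟨a, ha, h⟩ := h y
    have e : y = (g ^ (-(a:ℤ))) ((g ^ a) y) := by
      rw [← zpow_natCast, ← Equiv.Perm.mul_apply, ← zpow_add]; simp
    rcases h with h | h
    · refine ⟨2 * a, by omega, ?_⟩
      conv_lhs => rw [e]
      rw [hgz', h, ← zpow_natCast, ← Equiv.Perm.mul_apply, ← zpow_add]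
      congr 2; push_cast; ring
    · refine ⟨2 * a + 1, by omega, ?_⟩
      conv_lhs => rw [e]
      rw [hgz', ← h, ← Equiv.Perm.mul_apply ρ τ, ← hg, ← zpow_natCast, ← Equiv.Perm.mul_apply g, ← Equiv.Perm.mul_apply]
      rw [← zpow_one_add, ← zpow_add]
      congr 2; push_cast; ring
  ext y
  obtain ⟨c0, h0, e0⟩ := hc y
  obtain ⟨c1, h1, e1⟩ := hc ((g ^ ((N+1 : ℕ) : ℤ)) y)
  rw [hgz', e0, ← Equiv.Perm.mul_apply, ← Equiv.Perm.mul_apply, ← zpow_add, ← zpow_add] at e1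
  have e2 : (g ^ (c1 + 2 * (N+1) - c0)) y = y := by
    have := congrArg (g ^ (((N+1 : ℕ) : ℤ) - c0)) e1
    rw [← Equiv.Perm.mul_apply, ← Equiv.Perm.mul_apply, ← zpow_add, ← zpow_add] at this
    rw [← zpow_natCast]
    have h3 : ((c1 + 2 * (N+1) - c0 : ℕ) : ℤ) = ((N+1 : ℕ) : ℤ) - c0 + (c1 + ((N+1 : ℕ):ℤ)) := by omega
    rw [h3, ← this]
    simp
  have hd : (c1 + 2 * (N+1) - c0) ∣ (4 * N + 3).factorial := Nat.dvd_factorial (by omega) (by omega)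
  obtain ⟨q, hq⟩ := hd
  rw [hq, pow_mul]
  generalize g ^ (c1 + 2 * (N+1) - c0) = f at e2
  rw [Equiv.Perm.one_apply]
  clear hq
  have ih' : ∀ q : ℕ, (f ^ q) y = y := fun q => by
    induction q with
    | zero => rfl
    | succ q ih => rw [pow_succ, Equiv.Perm.mul_apply, e2, ih]
  exact ih' q

structure Dat (A G : Type) where
  C : A → Prop
  tl : A → Tile G
  cf : A → Option (Lab G)
  rf : A → Option (Lab G)
  ss : A → Bool
  tt : A → Bool

section tau
variable {A G : Type} [AddCommGroup A] (K : CA G) (D : Dat A G) (u e : A) (sl : Fin 5 → A)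

namespace Dat
def mvx (v : A) : Prop := (D.tl (v + on1 (D.ss v) • u + on1 (D.tt v) • e)).ty = .CU
open Classical in
noncomputable def nxt (v : A) : A := if D.mvx u e v then v + sg (D.ss v) • u else v + sg (D.tt v) • e
open Classical in
noncomputable def ns (v : A) : Bool := if D.mvx u e v then D.ss v else !D.ss v
open Classical in
noncomputable def nt (v : A) : Bool := if D.mvx u e v then !D.tt v else D.tt v
def FOK (v : A) : Prop := FaceV K (D.tl v) (D.tl (v + u)) (D.tl (v + e)) (D.tl (v + u + e)) (D.cf v) (D.rf v)
def Lk (v : A) : Prop := D.C v ∧ D.C (D.nxt u e v) ∧ D.FOK K u e v ∧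
  D.ss (D.nxt u e v) = D.ns u e v ∧ D.tt (D.nxt u e v) = D.nt u e v
open Classical in
noncomputable def prv (w : A) : A :=
  if (D.tl (w + on1 (!D.ss w) • u + on1 (!D.tt w) • e)).ty = .CU then w - sg (D.ss w) • u else w - sg (D.tt w) • e

open Classical in
noncomputable def tauF (w : A) : A :=
  if D.Lk K u e (w - sl 0) then D.nxt u e (w - sl 0) + sl 1
  else if D.Lk K u e (D.prv u e (w - sl 1)) ∧ D.nxt u e (D.prv u e (w - sl 1)) = w - sl 1 then D.prv u e (w - sl 1) + sl 0
  else w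

variable {K D u e sl}

theorem prv_nxt {v : A} (h : D.Lk K u e v) : D.prv u e (D.nxt u e v) = v := by
  obtain ⟨-, -, -, h1, h2⟩ := h
  have c : D.nxt u e v + on1 (!D.ss (D.nxt u e v)) • u + on1 (!D.tt (D.nxt u e v)) • e = v + on1 (D.ss v) • u + on1 (D.tt v) • e := by
    rw [h1, h2]
    simp only [nxt, ns, nt]
    split_ifs
    · cases D.ss v <;> simp [sg, on1]
    · cases D.tt v <;> simp [sg, on1, add_right_comm]
  have hm : ((D.tl (D.nxt u e v + on1 (!D.ss (D.nxt u e v)) • u + on1 (!D.tt (D.nxt u e v)) • e)).ty = .CU) ↔ D.mvx u e v := by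
    rw [c]; rfl
  classical
  have : D.prv u e (D.nxt u e v) = if D.mvx u e v then D.nxt u e v - sg (D.ss (D.nxt u e v)) • u else D.nxt u e v - sg (D.tt (D.nxt u e v)) • e :=
    if_congr hm rfl rfl
  rw [this, h1, h2]
  simp only [nxt, ns, nt]
  split_ifs <;> simp


theorem tau0 (_hC : Cross sl D.C D.C) {v : A} (h : D.Lk K u e v) : D.tauF K u e sl (v + sl 0) = D.nxt u e v + sl 1 := by
  simp [tauF, h]

theorem tau1 (hC : Cross sl D.C D.C) {v : A} (h : D.Lk K u e v) : D.tauF K u e sl (D.nxt u e v + sl 1) = v + sl 0 := by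
  have : ¬ D.Lk K u e (D.nxt u e v + sl 1 - sl 0) := fun h' => by
    have := (hC (D.nxt u e v) _ 1 0 h.2.1 h'.1 (by abel)).2
    exact absurd this (by decide)
  rw [tauF, if_neg this]
  simp [prv_nxt h, h]

theorem tau_cases (_hC : Cross sl D.C D.C) (w : A) : (∃ v, D.Lk K u e v ∧ w = v + sl 0) ∨ (∃ v, D.Lk K u e v ∧ w = D.nxt u e v + sl 1) ∨
    D.tauF K u e sl w = w := by
  rw [tauF]; split_ifs with h1 h2
  · left; exact ⟨_, h1, by simp⟩
  · right; left; exact ⟨_, h2.1, by rw [h2.2]; simp⟩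
  · right; right; rfl

theorem tau_inv (hC : Cross sl D.C D.C) : Involutive (D.tauF K u e sl) := by
  intro w
  rcases tau_cases (K := K) (u := u) (e := e) hC w with ⟨v, h, rfl⟩ | ⟨v, h, rfl⟩ | h
  · rw [tau0 hC h, tau1 hC h]
  · rw [tau1 hC h, tau0 hC h]
  · rw [h, h]

variable (K D u e sl) in
open Classical in
noncomputable def tau : Equiv.Perm A := if h : Involutive (D.tauF K u e sl) then h.toPerm else 1

theorem tau_apply (hC : Cross sl D.C D.C) (w : A) : D.tau K u e sl w = D.tauF K u e sl w := by
  rw [tau, dif_pos (tau_inv hC)]; rfl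

theorem tau_sq (hC : Cross sl D.C D.C) : D.tau K u e sl * D.tau K u e sl = 1 := by
  ext w
  rw [Equiv.Perm.mul_apply, tau_apply hC, tau_apply hC, tau_inv hC]; rfl

variable (K D u e) in
def Ch (Cert : A → Prop) (N : ℕ) (v : A) : Prop :=
  ∀ a < N, D.Lk K u e ((D.nxt u e)^[a] v) ∧ Cert ((D.nxt u e)^[a] v)

variable {Cert : A → Prop}

theorem fin_order (hC : Cross sl D.C D.C) (hcert : ∀ v, Cert v → D.C v) (N : ℕ)
    (hN : ∀ v, ¬ D.Ch K u e Cert N v) : (cp sl Cert p2 * D.tau K u e sl) ^ (4 * N + 3).factorial = 1 := by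
  have hCt := hC.mono hcert hcert
  refine grp_lemma (tau_sq hC) ?_ N ?_
  · have := cp_inv hCt p2
    rw [inv_eq_iff_mul_eq_one, show p2⁻¹ = p2 by decide] at this
    exact this
  set g := cp sl Cert p2 * D.tau K u e sl with hg
  have rho : ∀ v o, D.C v → cp sl Cert p2 (v + sl o) ≠ v + sl o → Cert v := by
    intro v o h h'
    by_contra hc
    exact h' (cp_out (out_of_cross (hC.mono (fun _ h => h) hcert) h hc o) p2)
  have A1 : ∀ v, D.C v → D.tau K u e sl (v + sl 0) ≠ v + sl 0 →
      cp sl Cert p2 (D.tau K u e sl (v + sl 0)) ≠ D.tau K u e sl (v + sl 0) →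
      D.Lk K u e v ∧ Cert (D.nxt u e v) ∧ g (v + sl 0) = D.nxt u e v + sl 0 := by
    intro v hv h1 h2
    have hL : D.Lk K u e v := by
      rcases tau_cases (K := K) (u := u) (e := e) hC (v + sl 0) with ⟨v', h, h'⟩ | ⟨v', h, h'⟩ | h
      · rwa [(hC _ _ _ _ hv h.1 h').1]
      · exact absurd (hC _ _ _ _ hv h.2.1 h').2 (by decide)
      · rw [tau_apply hC] at h1; exact absurd h h1
    rw [tau_apply hC, tau0 hC hL] at h2
    have hc := rho _ _ hL.2.1 h2
    refine ⟨hL, hc, ?_⟩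
    rw [hg, Equiv.Perm.mul_apply, tau_apply hC, tau0 hC hL, cp_in hCt hc]
    rfl
  have B1 : ∀ w, D.C w → D.tau K u e sl (w + sl 1) ≠ w + sl 1 →
      cp sl Cert p2 (D.tau K u e sl (w + sl 1)) ≠ D.tau K u e sl (w + sl 1) →
      ∃ v, D.Lk K u e v ∧ Cert v ∧ w = D.nxt u e v ∧ g (w + sl 1) = v + sl 1 := by
    intro v hv h1 h2
    have hL : ∃ v', D.Lk K u e v' ∧ v = D.nxt u e v' := by
      rcases tau_cases (K := K) (u := u) (e := e) hC (v + sl 1) with ⟨v', h, h'⟩ | ⟨v', h, h'⟩ | h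
      · exact absurd (hC _ _ _ _ hv h.1 h').2 (by decide)
      · exact ⟨v', h, (hC _ _ _ _ hv h.2.1 h').1⟩
      · rw [tau_apply hC] at h1; exact absurd h h1
    obtain ⟨v', hL, rfl⟩ := hL
    rw [tau_apply hC, tau1 hC hL] at h2
    have hc := rho _ _ hL.1 h2
    refine ⟨v', hL, hc, rfl, ?_⟩
    rw [hg, Equiv.Perm.mul_apply, tau_apply hC, tau1 hC hL, cp_in hCt hc]
    rfl
  intro y
  by_contra hno
  push Not at hno
  have hno' : ∀ a ≤ N, D.tau K u e sl ((g ^ a) y) ≠ (g ^ a) y ∧ cp sl Cert p2 (D.tau K u e sl ((g ^ a) y)) ≠ D.tau K u e sl ((g ^ a) y) := hno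
  rcases tau_cases (K := K) (u := u) (e := e) hC y with ⟨v, h, rfl⟩ | ⟨v, h, rfl⟩ | h
  · have it : ∀ a ≤ N, D.Lk K u e ((D.nxt u e)^[a] v) ∧ Cert ((D.nxt u e)^[a+1] v) ∧
        (g ^ a) (v + sl 0) = (D.nxt u e)^[a] v + sl 0 := by
      intro a
      induction a with
      | zero =>
        intro _
        have := hno' 0 (by omega)
        obtain ⟨h1, h2, h3⟩ := A1 v h.1 this.1 this.2
        exact ⟨h1, h2, rfl⟩
      | succ a ih =>
        intro ha
        obtain ⟨i1, i2, i3⟩ := ih (by omega)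
        have e1 : (g ^ (a+1)) (v + sl 0) = (D.nxt u e)^[a+1] v + sl 0 := by
          have := hno' a (by omega)
          rw [i3] at this
          obtain ⟨h1, h2, h3⟩ := A1 _ i1.1 this.1 this.2
          rw [pow_succ', Equiv.Perm.mul_apply, i3, h3, iterate_succ_apply']
        have := hno' (a+1) ha
        rw [e1] at this
        obtain ⟨h1, h2, h3⟩ := A1 _ (hcert _ i2) this.1 this.2
        exact ⟨h1, by rwa [iterate_succ_apply'], e1⟩
    refine hN (D.nxt u e v) fun a ha => ?_
    rw [← iterate_succ_apply]
    exact ⟨(it (a+1) (by omega)).1, (it a (by omega)).2.1⟩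
  · have it : ∀ M w, D.C w → (∀ a < M, D.tau K u e sl ((g ^ a) (w + sl 1)) ≠ (g ^ a) (w + sl 1) ∧ cp sl Cert p2 (D.tau K u e sl ((g ^ a) (w + sl 1))) ≠ D.tau K u e sl ((g ^ a) (w + sl 1))) →
        ∃ v, D.Ch K u e Cert M v ∧ (D.nxt u e)^[M] v = w := by
      intro M
      induction M with
      | zero => intro w _ _; exact ⟨w, fun a ha => by omega, rfl⟩
      | succ M ih =>
        intro w hw H
        have := H 0 (by omega)
        obtain ⟨v, h1, h2, h3, h4⟩ := B1 w hw this.1 this.2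
        obtain ⟨v', h5, h6⟩ := ih v h1.1 (fun a ha => by
          have := H (a+1) (by omega)
          rwa [pow_succ, Equiv.Perm.mul_apply, h4] at this)
        refine ⟨v', fun a ha => ?_, by rw [iterate_succ_apply', h6, h3]⟩
        rcases Nat.lt_succ_iff_lt_or_eq.1 ha with h | rfl
        · exact h5 a h
        · rw [h6]; exact ⟨h1, h2⟩
    obtain ⟨v', h1, -⟩ := it N _ h.2.1 (fun a ha => hno' a (by omega))
    exact hN _ h1
  · have := (hno' 0 (by omega)).1
    rw [tau_apply hC] at this
    exact this h

end Dat
end tau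
end Rfa

namespace Rfa
section phz
variable {A L : Type} [AddCommGroup A] {t s : A} {C : A → Prop} {fl : A → Option L} {m : ℕ} {ol : ℕ → Option L} {v : A}

theorem Ph.zr (hm : 1 ≤ m) (h0 : ol 0 = none) (h1 : ∀ i, 1 ≤ i → i ≤ m → ol i ≠ none) {X : ℤ}
    (h : Ph t s C fl m ol v (X % (m+1)).toNat) (h' : ∃ j, Ph t s C fl m ol (v + t) j) :
    Ph t s C fl m ol (v + t) ((X+1) % (m+1)).toNat := by
  obtain ⟨j, hj⟩ := h'
  have e := h.right h0 h1 hj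
  have a1 := Int.emod_nonneg X (show (m:ℤ)+1 ≠ 0 by omega)
  have : j = ((X+1) % (m+1)).toNat := by
    rw [e, emod_succ (by omega)]
    split_ifs <;> omega
  rwa [← this]

theorem Ph.zl (hm : 1 ≤ m) (h0 : ol 0 = none) (h1 : ∀ i, 1 ≤ i → i ≤ m → ol i ≠ none) {X : ℤ}
    (h : Ph t s C fl m ol (v + t) (X % (m+1)).toNat) (h' : ∃ j, Ph t s C fl m ol v j) :
    Ph t s C fl m ol v ((X-1) % (m+1)).toNat := by
  obtain ⟨j, hj⟩ := h'
  have e := hj.right h0 h1 h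
  have a1 := Int.emod_nonneg X (show (m:ℤ)+1 ≠ 0 by omega)
  have : j = ((X-1) % (m+1)).toNat := by
    rw [emod_pred (by omega)]
    have := hj.1
    split_ifs at e ⊢ <;> omega
  rwa [← this]

theorem Ph.mvt (hm : 1 ≤ m) (h0 : ol 0 = none) (h1 : ∀ i, 1 ≤ i → i ≤ m → ol i ≠ none) {X : ℤ} (b : Bool)
    (h : Ph t s C fl m ol v (X % (m+1)).toNat) (h' : ∃ j, Ph t s C fl m ol (v + sg b • t) j) :
    Ph t s C fl m ol (v + sg b • t) ((X + sg b) % (m+1)).toNat := by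
  cases b
  · have e : v + sg false • t = v - t := by simp [sg, sub_eq_add_neg]
    rw [e] at h' ⊢
    rw [show v = v - t + t by simp] at h
    exact Ph.zl hm h0 h1 h h'
  · have e : v + sg true • t = v + t := by simp [sg]
    rw [e] at h' ⊢
    exact Ph.zr hm h0 h1 h h'

theorem Ph.mvs (h0 : ol 0 = none) (h1 : ∀ i, 1 ≤ i → i ≤ m → ol i ≠ none) {i : ℕ} (b : Bool)
    (h : Ph t s C fl m ol v i) (h' : ∃ j, Ph t s C fl m ol (v + sg b • s) j) :
    Ph t s C fl m ol (v + sg b • s) i := by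
  obtain ⟨j, hj⟩ := h'
  cases b
  · have e : v + sg false • s = v - s := by simp [sg, sub_eq_add_neg]
    rw [e] at hj ⊢
    rw [show v = v - s + s by simp] at h
    rwa [← hj.up h0 h1 h]
  · have e : v + sg true • s = v + s := by simp [sg]
    rw [e] at hj ⊢
    rwa [h.up h0 h1 hj]
end phz

namespace Dat
variable {A G : Type} [AddCommGroup A] {K : CA G} {D : Dat A G} {u e : A} {sl : Fin 5 → A}

variable (D u e) in
def Cert (m : ℕ) (ol : ℕ → Option (Lab G)) (v : A) : Prop :=
  (∃ i, Ph u e D.C D.cf m ol v i) ∧ ∃ j, Ph e u D.C D.rf m ol v j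

theorem no_chain {m : ℕ} {γ : ℤ → G} (hm : 2 ≤ m) (N : ℕ)
    (hN : ∀ x σ, ¬ Path K m γ x σ N) (v : A) : ¬ D.Ch K u e (D.Cert u e m (fun i => olab m γ i)) N v := by
  intro hc
  rcases Nat.eq_zero_or_pos N with rfl | hpos
  · exact hN (fun _ _ => D.tl v) ⟨0,0,true,true⟩ (fun r hr => by omega)
  set ol : ℕ → Option (Lab G) := fun i => olab m γ i with hol
  have h0 : ol 0 = none := by simp [hol, olab_zero]
  have h1 : ∀ i, 1 ≤ i → i ≤ m → ol i ≠ none := fun i hi _ => by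
    simp only [hol]; rw [olab_pos (by omega)]; simp
  obtain ⟨⟨i0, hi⟩, ⟨j0, hj⟩⟩ := (hc 0 hpos).2
  set x : ℤ → ℤ → Tile G := fun X Y => D.tl (v + (X - i0) • u + (Y - j0) • e) with hx
  set σ0 : St := ⟨i0, j0, D.ss v, D.tt v⟩ with hσ0
  let At : St → A → Prop := fun σ w => w = v + (σ.X - i0) • u + (σ.Y - j0) • e ∧ D.ss w = σ.s ∧ D.tt w = σ.t ∧
    Ph u e D.C D.cf m ol w (σ.X % (m+1)).toNat ∧ Ph e u D.C D.rf m ol w (σ.Y % (m+1)).toNat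
  have step : ∀ σ w, At σ w → D.Lk K u e w → D.Cert u e m ol (D.nxt u e w) → At (nx (cuOf x) σ) (D.nxt u e w) := by
    rintro ⟨X, Y, s, t⟩ w ⟨a1, a2, a3, a4, a5⟩ hL ⟨c1, c2⟩
    simp only at a1 a2 a3 a4 a5
    obtain ⟨-, -, -, b1, b2⟩ := hL
    have hcu : cuOf x (X + on1 s) (Y + on1 t) ↔ D.mvx u e w := by
      simp only [cuOf, hx, mvx, a2, a3]
      rw [show v + (X + on1 s - i0) • u + (Y + on1 t - j0) • e = w + on1 s • u + on1 t • e by rw [a1]; simp only [add_smul, sub_smul]; abel]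
    by_cases hmv : D.mvx u e w
    · have e1 : D.nxt u e w = w + sg s • u := by simp [nxt, hmv, a2]
      have e2 : nx (cuOf x) ⟨X, Y, s, t⟩ = ⟨X + sg s, Y, s, !t⟩ := by
        rw [nx, if_pos (hcu.2 hmv)]
      rw [e2]
      refine ⟨?_, ?_, ?_, ?_, ?_⟩
      · rw [e1]; simp only; rw [a1]; simp only [add_smul, sub_smul]; abel
      · rw [b1]; simp [ns, hmv, a2]
      · rw [b2]; simp [nt, hmv, a3]
      · rw [e1] at c1 ⊢; exact Ph.mvt (by omega) h0 h1 s a4 c1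
      · rw [e1] at c2 ⊢; exact Ph.mvs h0 h1 s a5 c2
    · have e1 : D.nxt u e w = w + sg t • e := by simp [nxt, hmv, a3]
      have e2 : nx (cuOf x) ⟨X, Y, s, t⟩ = ⟨X, Y + sg t, !s, t⟩ := by
        rw [nx, if_neg (fun h => hmv (hcu.1 h))]
      rw [e2]
      refine ⟨?_, ?_, ?_, ?_, ?_⟩
      · rw [e1]; simp only; rw [a1]; simp only [add_smul, sub_smul]; abel
      · rw [b1]; simp [ns, hmv, a2]
      · rw [b2]; simp [nt, hmv, a3]
      · rw [e1] at c1 ⊢; exact Ph.mvs h0 h1 t a4 c1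
      · rw [e1] at c2 ⊢; exact Ph.mvt (by omega) h0 h1 t a5 c2
  have it : ∀ r < N, At ((nx (cuOf x))^[r] σ0) ((D.nxt u e)^[r] v) := by
    intro r
    induction r with
    | zero =>
      intro _
      have f : ∀ i : ℕ, i ≤ m → ((i:ℤ) % (m+1)).toNat = i := fun i hi => by
        rw [Int.emod_eq_of_lt (by omega) (by omega)]; simp
      refine ⟨by simp [hσ0], rfl, rfl, ?_, ?_⟩
      · simp only [hσ0, iterate_zero_apply]; rw [f _ hi.1]; exact hi
      · simp only [hσ0, iterate_zero_apply]; rw [f _ hj.1]; exact hj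
    | succ r ih =>
      intro hr
      rw [iterate_succ_apply', iterate_succ_apply']
      refine step _ _ (ih (by omega)) (hc r (by omega)).1 ?_
      rw [← iterate_succ_apply' (D.nxt u e)]; exact (hc (r+1) hr).2
  refine hN x σ0 fun r hr => ?_
  obtain ⟨a1, -, -, a4, a5⟩ := it r hr
  have hF := (hc r hr).1.2.2.1
  generalize (nx (cuOf x))^[r] σ0 = σ at *
  generalize (D.nxt u e)^[r] v = w at *
  have g1 := a4.asg0.2.2.1
  have g2 := a5.asg0.2.2.1
  simp only [hol] at g1 g2
  rw [Int.toNat_of_nonneg (Int.emod_nonneg _ (by omega))] at g1 g2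
  unfold FOK at hF
  rw [g1, g2] at hF
  unfold Val
  have E : ∀ a b : ℤ, x (σ.X + a) (σ.Y + b) = D.tl (w + a • u + b • e) := by
    intro a b
    simp only [hx]; rw [a1]; congr 1; simp only [add_smul, sub_smul]; abel
  have E1 := E 0 0
  have E2 := E 1 0
  have E3 := E 0 1
  have E4 := E 1 1
  simp only [add_zero, zero_smul, one_smul] at E1 E2 E3 E4
  rw [E1, E2, E3, E4]
  exact hF

theorem inf_order {m : ℕ} {γ : ℤ → G} (hm : 2 ≤ m) (hC : Cross sl D.C D.C)
    (hinj : ∀ X Y : ℤ, X • u + Y • e = 0 → X = 0 ∧ Y = 0)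
    {w : Wd G} {R : ℤ} {T : ℕ} (hR : RV K m γ R w)
    (hw : ∀ r < 9^T, ∀ σ, σ = (nx (cuOf w.tile))^[r] St0 → 0≤σ.X ∧ σ.X+1<R ∧ 0≤σ.Y ∧ σ.Y+1<R ∧ (0<r → σ.X=0 → σ.Y≠0))
    (d1 : ∀ X Y : ℤ, D.C (X • u + Y • e)) (d2 : ∀ X Y : ℤ, D.tl (X • u + Y • e) = w.tile X Y)
    (d3 : ∀ X Y : ℤ, D.cf (X • u + Y • e) = olab m γ (X % (m+1)))
    (d4 : ∀ X Y : ℤ, D.rf (X • u + Y • e) = olab m γ (Y % (m+1)))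
    (d5 : ∀ X Y : ℤ, D.ss (X • u + Y • e) = decide (Y % 2 = 0))
    (d6 : ∀ X Y : ℤ, D.tt (X • u + Y • e) = decide (X % 2 = 0)) (r : ℕ) (hr0 : 0 < r) (hr : r < 9 ^ T) :
    (cp sl (D.Cert u e m (fun i => olab m γ i)) p2 * D.tau K u e sl) ^ r ≠ 1 := by
  set ol : ℕ → Option (Lab G) := fun i => olab m γ i with hol
  have hmod : ∀ (X : ℤ) (l : ℕ), l ≤ m → (X - (X % (m+1)).toNat + l) % (m+1) = l := by
    intro X l hl
    rw [Int.toNat_of_nonneg (Int.emod_nonneg _ (by omega))]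
    have h2 := Int.emod_add_mul_ediv X (m+1)
    rw [show X - X % (m+1) + l = l + (m+1) * (X / (m+1)) by omega, Int.add_mul_emod_self_left,
      Int.emod_eq_of_lt (by omega) (by omega)]
  have hlt : ∀ X : ℤ, (X % (m+1)).toNat ≤ m := fun X => by
    have := Int.emod_lt_of_pos X (show (0:ℤ) < m+1 by omega)
    omega
  have hcert : ∀ X Y : ℤ, D.Cert u e m ol (X • u + Y • e) := by
    intro X Y
    refine ⟨⟨(X % (m+1)).toNat, hlt X, fun l hl => ?_⟩, ⟨(Y % (m+1)).toNat, hlt Y, fun l hl => ?_⟩⟩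
    · have E : ∀ a b : ℤ, X • u + Y • e - (X % (m+1)).toNat • u + l • u + a • u + b • e =
        (X - (X % (m+1)).toNat + l + a) • u + (Y + b) • e := fun a b => by
          simp only [add_smul, sub_smul, natCast_zsmul]; abel
      have E0 := E 0 0
      have E1 := E 1 0
      have E2 := E 0 1
      have E3 := E 0 (-1)
      simp only [add_zero, zero_smul, one_smul, neg_smul, ← sub_eq_add_neg] at E0 E1 E2 E3
      refine ⟨?_, ?_, ?_, ?_, ?_⟩
      · rw [E0]; exact d1 _ _
      · rw [E1]; exact d1 _ _
      · rw [E0, d3, hmod _ _ hl]; simp [hol]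
      · rw [E2, d3, hmod _ _ hl]; simp [hol]
      · rw [E3, d3, hmod _ _ hl]; simp [hol]
    · have E : ∀ a b : ℤ, X • u + Y • e - (Y % (m+1)).toNat • e + l • e + a • e + b • u =
        (X + b) • u + (Y - (Y % (m+1)).toNat + l + a) • e := fun a b => by
          simp only [add_smul, sub_smul, natCast_zsmul]; abel
      have E0 := E 0 0
      have E1 := E 1 0
      have E2 := E 0 1
      have E3 := E 0 (-1)
      simp only [add_zero, zero_smul, one_smul, neg_smul, ← sub_eq_add_neg] at E0 E1 E2 E3
      refine ⟨?_, ?_, ?_, ?_, ?_⟩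
      · rw [E0]; exact d1 _ _
      · rw [E1]; exact d1 _ _
      · rw [E0, d4, hmod _ _ hl]; simp [hol]
      · rw [E2, d4, hmod _ _ hl]; simp [hol]
      · rw [E3, d4, hmod _ _ hl]; simp [hol]
  have hCt : Cross sl (D.Cert u e m ol) (D.Cert u e m ol) :=
    hC.mono (fun v h => h.1.choose_spec.code) (fun v h => h.1.choose_spec.code)
  let pt : St → A := fun σ => σ.X • u + σ.Y • e
  let Gd : St → Prop := fun σ => σ.s = decide (σ.Y % 2 = 0) ∧ σ.t = decide (σ.X % 2 = 0)
  set g := cp sl (D.Cert u e m ol) p2 * D.tau K u e sl with hg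
  have step : ∀ σ, Gd σ → Val K m γ w.tile σ.X σ.Y → Gd (nx (cuOf w.tile) σ) ∧
      g (pt σ + sl 0) = pt (nx (cuOf w.tile) σ) + sl 0 := by
    rintro ⟨X, Y, s, t⟩ ⟨a1, a2⟩ hV
    simp only at a1 a2 hV
    have hcu : cuOf w.tile (X + on1 s) (Y + on1 t) ↔ D.mvx u e (X • u + Y • e) := by
      simp only [cuOf, mvx, d5, d6, ← a1, ← a2]
      rw [← d2, show (X + on1 s) • u + (Y + on1 t) • e = X • u + Y • e + on1 s • u + on1 t • e by simp only [add_smul]; abel]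
    have par : ∀ (b : Bool) (Z : ℤ), decide ((Z + sg b) % 2 = 0) = !decide (Z % 2 = 0) := by
      intro b Z
      rw [← decide_not, decide_eq_decide]
      cases b <;> simp only [sg] <;> simp <;> omega
    have key : Gd (nx (cuOf w.tile) ⟨X, Y, s, t⟩) ∧ D.nxt u e (X • u + Y • e) = pt (nx (cuOf w.tile) ⟨X, Y, s, t⟩) ∧
        D.ns u e (X • u + Y • e) = (nx (cuOf w.tile) ⟨X, Y, s, t⟩).s ∧ D.nt u e (X • u + Y • e) = (nx (cuOf w.tile) ⟨X, Y, s, t⟩).t := by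
      by_cases hmv : D.mvx u e (X • u + Y • e)
      · rw [nx, if_pos (hcu.2 hmv)]
        simp only [nxt, ns, nt, hmv, if_true, d5, d6, Gd, pt, par, ← a1, ← a2]
        refine ⟨⟨trivial, trivial⟩, ?_, trivial, trivial⟩
        simp only [add_smul]; abel
      · rw [nx, if_neg (fun h => hmv (hcu.1 h))]
        simp only [nxt, ns, nt, hmv, if_false, d5, d6, Gd, pt, par, ← a1, ← a2]
        refine ⟨⟨trivial, trivial⟩, ?_, trivial, trivial⟩
        simp only [add_smul]; abel
    obtain ⟨k1, k2, k3, k4⟩ := key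
    refine ⟨k1, ?_⟩
    have hL : D.Lk K u e (X • u + Y • e) := by
      refine ⟨d1 _ _, ?_, ?_, ?_, ?_⟩
      · rw [k2]; exact d1 _ _
      · unfold FOK
        unfold Val at hV
        have E : ∀ a b : ℤ, w.tile (X + a) (Y + b) = D.tl (X • u + Y • e + a • u + b • e) := by
          intro a b
          rw [← d2]; congr 1; simp only [add_smul]; abel
        have E1 := E 0 0
        have E2 := E 1 0
        have E3 := E 0 1
        have E4 := E 1 1
        simp only [add_zero, zero_smul, one_smul] at E1 E2 E3 E4
        rw [← E1, ← E2, ← E3, ← E4, d3, d4]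
        exact hV
      · rw [k3, k1.1, k2]; exact d5 _ _
      · rw [k4, k1.2, k2]; exact d6 _ _
    show g ((X • u + Y • e) + sl 0) = _
    rw [hg, Equiv.Perm.mul_apply, tau_apply hC, tau0 hC hL, k2, cp_in hCt (hcert _ _)]
    rfl
  have it : ∀ r < 9 ^ T, Gd ((nx (cuOf w.tile))^[r] St0) ∧ (g ^ r) (pt St0 + sl 0) = pt ((nx (cuOf w.tile))^[r] St0) + sl 0 := by
    intro r
    induction r with
    | zero => intro _; exact ⟨⟨rfl, rfl⟩, rfl⟩
    | succ r ih =>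
      intro hr
      obtain ⟨i1, i2⟩ := ih (by omega)
      obtain ⟨b1, b2, b3, b4, -⟩ := hw r (by omega) _ rfl
      have := step _ i1 (hR.val (by omega) b1 b2 b3 b4)
      rw [iterate_succ_apply', pow_succ', Equiv.Perm.mul_apply, i2]
      exact this
  intro h
  have := (it r hr).2
  rw [h] at this
  obtain ⟨-, -, -, -, b5⟩ := hw r hr _ rfl
  generalize (nx (cuOf w.tile))^[r] St0 = σ at *
  have e2 : σ.X • u + σ.Y • e = 0 := by
    have : pt St0 = pt σ := by simpa using this
    simpa [pt, St0] using this.symm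
  obtain ⟨h1, h2⟩ := hinj _ _ e2
  exact b5 hr0 h1 h2
end Dat
end Rfa

namespace Rfa

abbrev Gen := Bool ⊕ (Bool × Bool × Fin 4) ⊕ Bool

section full
variable {α : Type} (ι : Gen → α)

def lt (g : Gen) : Wrd α := [(ι g, true)]
def wDir (b : Bool) (k : ℕ) : Wrd α :=
  wHor (lt ι (.inl b)) (lt ι (.inr (.inl (b, false, 0)))) (lt ι (.inr (.inl (b, false, 1))))
    (lt ι (.inr (.inl (b, false, 2)))) (lt ι (.inr (.inl (b, true, 3)))) k
def wFull (k : ℕ) : Wrd α :=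
  wComm (wDir ι true k) (wConj (lt ι (.inr (.inr true))) (wDir ι false k)) ++ lt ι (.inr (.inr false))
end full

section gen
variable {A G : Type} [AddCommGroup A] (K : CA G) (gA gB : G) (D : Dat A G) (u e : A) (sl : Fin 5 → A)

def lb : Fin 4 → Option (Lab G) := ![none, some (gA, false), some (gB, false), some (K.b, true)]

noncomputable def gen : Gen → Equiv.Perm A
  | .inl true => Equiv.addRight u
  | .inl false => Equiv.addRight e
  | .inr (.inl (true, c, i)) => cp sl (Asg u e D.C D.cf (lb K gA gB i)) (bif c then pr else ps)
  | .inr (.inl (false, c, i)) => cp sl (Asg e u D.C D.rf (lb K gA gB i)) (bif c then pr else ps)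
  | .inr (.inr true) => cp sl D.C pq
  | .inr (.inr false) => D.tau K u e sl

theorem ev_full {α : Type} (ι : Gen → α) (π : α → Equiv.Perm A) (hπ : ∀ g, π (ι g) = gen K gA gB D u e sl g)
    (hC : Cross sl D.C D.C) (k : ℕ) :
    ev π (wFull ι k) = cp sl (D.Cert u e (2*k+2) (fun i => olab ((2*k+2 : ℕ) : ℤ) (initc K.b gA gB k) i)) p2 * D.tau K u e sl := by
  set ol : ℕ → Option (Lab G) := fun i => olab ((2*k+2 : ℕ) : ℤ) (initc K.b gA gB k) i with hol
  have g0 : ol 0 = none := by simp [hol, olab_zero]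
  have g1 : ∀ i, 1 ≤ i → i ≤ 2*k+2 → ol i ≠ none := fun i hi _ => by
    simp only [hol]; rw [olab_pos (by omega)]; simp
  have o1 : ol 1 = some (gA, false) := by
    simp only [hol]; rw [olab_pos (by omega)]
    simp [initc]; omega
  have o2 : ∀ i, 2 ≤ i → i < 2*k+2 → ol i = some (gB, false) := fun i h1 h2 => by
    simp only [hol]; rw [olab_pos (by omega), initc, if_neg (by omega), if_pos (by omega)]
    simp; omega
  have o3 : ol (2*k+2) = some (K.b, true) := by
    simp only [hol]; rw [olab_pos (by omega), initc, if_neg (by omega), if_neg (by push_cast; omega)]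
    simp
  have hl : ∀ g, ev π (lt ι g) = gen K gA gB D u e sl g := fun g => by rw [lt, ev_single, hπ]
  have H : ev π (wDir ι true k) = cp sl (fun v => ∃ i, Ph u e D.C D.cf (2*k+2) ol v i) pr := by
    refine ev_wHor g0 g1 hC (hl _) ?_ ?_ (fun i h1 h2 => ?_) ?_
    · rw [hl, g0]; rfl
    · rw [hl, o1]; rfl
    · rw [hl, o2 i h1 h2]; rfl
    · rw [hl, o3]; rfl
  have W : ev π (wDir ι false k) = cp sl (fun v => ∃ i, Ph e u D.C D.rf (2*k+2) ol v i) pr := by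
    refine ev_wHor g0 g1 hC (hl _) ?_ ?_ (fun i h1 h2 => ?_) ?_
    · rw [hl, g0]; rfl
    · rw [hl, o1]; rfl
    · rw [hl, o2 i h1 h2]; rfl
    · rw [hl, o3]; rfl
  have c1 : ∀ v, (∃ i, Ph u e D.C D.cf (2*k+2) ol v i) → D.C v := fun v h => h.choose_spec.code
  have c2 : ∀ v, (∃ i, Ph e u D.C D.rf (2*k+2) ol v i) → D.C v := fun v h => h.choose_spec.code
  rw [wFull, ev_append, ev_comm, ev_conj, H, W, hl, hl]
  simp only [gen]
  rw [cp_conj hC c2, cp_comm (hC.mono c1 c1) (hC.mono c2 c2) (hC.mono c1 c2), pr_pq]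
  rfl
end gen

/-! ### computability of the word -/
section comp
variable {m : ℕ}

theorem pr_inv : Primrec (wInv : Wrd (Fin m) → Wrd (Fin m)) := by
  refine Primrec.list_reverse.comp (Primrec.list_map Primrec.id ?_)
  exact (Primrec.pair (Primrec.fst.comp Primrec.snd) (Primrec.not.comp (Primrec.snd.comp Primrec.snd))).to₂

theorem pr_conj {β : Type} [Primcodable β] {f g : β → Wrd (Fin m)} (hf : Primrec f) (hg : Primrec g) :
    Primrec (fun b => wConj (f b) (g b)) :=
  Primrec.list_append.comp (Primrec.list_append.comp hf hg) (pr_inv.comp hf)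

theorem pr_comm {β : Type} [Primcodable β] {f g : β → Wrd (Fin m)} (hf : Primrec f) (hg : Primrec g) :
    Primrec (fun b => wComm (f b) (g b)) :=
  Primrec.list_append.comp (Primrec.list_append.comp (Primrec.list_append.comp hf hg) (pr_inv.comp hf)) (pr_inv.comp hg)

theorem pr_step {β : Type} [Primcodable β] (a t : Wrd (Fin m)) {f : β → Wrd (Fin m)} (hf : Primrec f) :
    Primrec (fun b => wStep a t (f b)) :=
  pr_comm (Primrec.const a) (pr_conj (Primrec.const (wInv t)) hf)

theorem pr_win (t a0 a1 a2 a3 : Wrd (Fin m)) : Primrec (fun k => wWin t a0 a1 a2 a3 k) := by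
  refine pr_step _ _ (pr_step _ _ ?_)
  exact Primrec.nat_iterate (Primrec.nat_mul.comp (Primrec.const 2) Primrec.id) (Primrec.const a3)
    (pr_step a2 t Primrec.snd).to₂

theorem pr_hor (t a0 a1 a2 a3 : Wrd (Fin m)) : Primrec (fun k => wHor t a0 a1 a2 a3 k) := by
  refine Primrec.nat_iterate (f := fun k : ℕ => 2*k+3) (g := fun _ => [])
    (h := fun k S => wWin t a0 a1 a2 a3 k ++ wConj t S) ?_ (Primrec.const _) ?_
  · exact Primrec.nat_add.comp (Primrec.nat_mul.comp (Primrec.const 2) Primrec.id) (Primrec.const 3)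
  · exact (Primrec.list_append.comp ((pr_win t a0 a1 a2 a3).comp Primrec.fst) (pr_conj (Primrec.const t) Primrec.snd)).to₂

theorem pr_full (ι : Gen → Fin m) : Primrec (wFull ι) :=
  Primrec.list_append.comp (pr_comm (pr_hor _ _ _ _ _) (pr_conj (Primrec.const _) (pr_hor _ _ _ _ _))) (Primrec.const _)
end comp
end Rfa

namespace Rfa

section cov
variable {A G : Type} [AddCommGroup A]

theorem cp_cov {sl : Fin 5 → A} {P P' : A → Prop} (h : Cross sl P P) (h' : Cross sl P' P') (w : A)
    (hP : ∀ v, P' v ↔ P (v + w)) (q : Equiv.Perm (Fin 5)) (v : A) : cp sl P q (v + w) = cp sl P' q v + w := by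
  rcases cases_slot sl P' v with ⟨x, o, hx, rfl⟩ | hx
  · rw [cp_in h' hx, add_right_comm, cp_in h ((hP _).1 hx), add_right_comm]
  · rw [cp_out hx, cp_out]
    intro o ho
    refine hx o ((hP _).2 ?_)
    rwa [sub_add_eq_add_sub]

namespace Dat
def sh (D : Dat A G) (w : A) : Dat A G :=
  ⟨fun v => D.C (v + w), fun v => D.tl (v + w), fun v => D.cf (v + w), fun v => D.rf (v + w), fun v => D.ss (v + w), fun v => D.tt (v + w)⟩

variable {K : CA G} {D : Dat A G} {u e : A} {sl : Fin 5 → A}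

theorem sh_mvx (w v : A) : (D.sh w).mvx u e v ↔ D.mvx u e (v + w) := by
  simp only [mvx, sh]
  rw [show v + on1 (D.ss (v + w)) • u + on1 (D.tt (v + w)) • e + w = v + w + on1 (D.ss (v + w)) • u + on1 (D.tt (v + w)) • e by abel]

theorem sh_nxt (w v : A) : (D.sh w).nxt u e v + w = D.nxt u e (v + w) := by
  by_cases h : D.mvx u e (v + w)
  · rw [nxt, nxt, if_pos h, if_pos ((sh_mvx w v).2 h)]; exact add_right_comm _ _ _
  · rw [nxt, nxt, if_neg h, if_neg (fun h' => h ((sh_mvx w v).1 h'))]; exact add_right_comm _ _ _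

theorem sh_prv (w v : A) : (D.sh w).prv u e v + w = D.prv u e (v + w) := by
  have hh : ((D.sh w).tl (v + on1 (!(D.sh w).ss v) • u + on1 (!(D.sh w).tt v) • e)).ty = .CU ↔
      (D.tl (v + w + on1 (!D.ss (v + w)) • u + on1 (!D.tt (v + w)) • e)).ty = .CU := by
    simp only [sh]
    rw [show v + on1 (!D.ss (v + w)) • u + on1 (!D.tt (v + w)) • e + w = v + w + on1 (!D.ss (v + w)) • u + on1 (!D.tt (v + w)) • e by abel]
  by_cases h : (D.tl (v + w + on1 (!D.ss (v + w)) • u + on1 (!D.tt (v + w)) • e)).ty = .CU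
  · rw [prv, prv, if_pos h, if_pos (hh.2 h)]; exact sub_add_eq_add_sub _ _ _
  · rw [prv, prv, if_neg h, if_neg (fun h' => h (hh.1 h'))]; exact sub_add_eq_add_sub _ _ _

theorem sh_Lk (w v : A) : (D.sh w).Lk K u e v ↔ D.Lk K u e (v + w) := by
  have h1 : (D.sh w).FOK K u e v ↔ D.FOK K u e (v + w) := by
    simp only [FOK, sh]
    rw [add_right_comm v u w, add_right_comm v e w, show v + u + e + w = v + w + u + e by abel]
  have h2 : (D.sh w).ns u e v = D.ns u e (v + w) := by
    by_cases h : D.mvx u e (v + w)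
    · rw [ns, ns, if_pos h, if_pos ((sh_mvx w v).2 h)]; rfl
    · rw [ns, ns, if_neg h, if_neg (fun h' => h ((sh_mvx w v).1 h'))]; rfl
  have h3 : (D.sh w).nt u e v = D.nt u e (v + w) := by
    by_cases h : D.mvx u e (v + w)
    · rw [nt, nt, if_pos h, if_pos ((sh_mvx w v).2 h)]; rfl
    · rw [nt, nt, if_neg h, if_neg (fun h' => h ((sh_mvx w v).1 h'))]; rfl
  simp only [Lk, h1, h2, h3, ← sh_nxt]
  rfl

theorem sh_tauF (w v : A) : (D.sh w).tauF K u e sl v + w = D.tauF K u e sl (v + w) := by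
  have e0 : ∀ o, v + w - sl o = v - sl o + w := fun o => by abel
  have i1 : (D.sh w).Lk K u e (v - sl 0) ↔ D.Lk K u e (v + w - sl 0) := by rw [e0, sh_Lk]
  have p1 : (D.sh w).prv u e (v - sl 1) + w = D.prv u e (v + w - sl 1) := by rw [e0, sh_prv]
  have i2 : ((D.sh w).Lk K u e ((D.sh w).prv u e (v - sl 1)) ∧ (D.sh w).nxt u e ((D.sh w).prv u e (v - sl 1)) = v - sl 1) ↔
      (D.Lk K u e (D.prv u e (v + w - sl 1)) ∧ D.nxt u e (D.prv u e (v + w - sl 1)) = v + w - sl 1) := by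
    rw [← p1, sh_Lk, ← sh_nxt, e0, add_left_inj]
  by_cases h1 : D.Lk K u e (v + w - sl 0)
  · rw [tauF, tauF, if_pos h1, if_pos (i1.2 h1), e0, ← sh_nxt]; exact add_right_comm _ _ _
  rw [tauF, tauF, if_neg h1, if_neg (fun h => h1 (i1.1 h))]
  by_cases h2 : D.Lk K u e (D.prv u e (v + w - sl 1)) ∧ D.nxt u e (D.prv u e (v + w - sl 1)) = v + w - sl 1
  · rw [if_pos h2, if_pos (i2.2 h2), ← p1]; exact add_right_comm _ _ _
  · rw [if_neg h2, if_neg (fun h => h2 (i2.1 h))]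
end Dat
end cov

section lc
variable {d n : ℕ}
abbrev Tp (d n : ℕ) := V d → Fin n

/-- locally determined functions of the tape -/
def LC {β : Type} (f : Tp d n → β) : Prop :=
  ∀ z0, ∃ F : Finset (V d), ∀ z, (∀ v ∈ F, z v = z0 v) → f z = f z0

theorem LC.const {β : Type} (b : β) : LC (fun _ : Tp d n => b) := fun _ => ⟨∅, fun _ _ => rfl⟩

theorem LC.bind {β γ : Type} {f : Tp d n → β → γ} {g : Tp d n → β} (hf : ∀ b, LC (fun z => f z b)) (hg : LC g) :
    LC (fun z => f z (g z)) := by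
  classical
  intro z0
  obtain ⟨F, hF⟩ := hg z0
  obtain ⟨F', hF'⟩ := hf (g z0) z0
  refine ⟨F ∪ F', fun z hz => ?_⟩
  show f z (g z) = f z0 (g z0)
  rw [hF z fun v hv => hz v (Finset.mem_union_left _ hv)]
  exact hF' z fun v hv => hz v (Finset.mem_union_right _ hv)

theorem LC.map {β γ : Type} (φ : β → γ) {g : Tp d n → β} (hg : LC g) : LC (fun z => φ (g z)) :=
  LC.bind (f := fun _ => φ) (fun _ => LC.const _) hg

theorem LC.map2 {β γ δ : Type} (φ : β → γ → δ) {f : Tp d n → β} {g : Tp d n → γ} (hf : LC f) (hg : LC g) :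
    LC (fun z => φ (f z) (g z)) :=
  LC.bind (f := fun z => φ (f z)) (fun b => hf.map (fun x => φ x b)) hg

theorem LC.and {p q : Tp d n → Prop} (hp : LC p) (hq : LC q) : LC (fun z => p z ∧ q z) := hp.map2 And hq
theorem LC.eq {β : Type} {f g : Tp d n → β} (hp : LC f) (hq : LC g) : LC (fun z => f z = g z) := hp.map2 Eq hq

theorem LC.ite {β : Type} {p : Tp d n → Prop} {inst : ∀ z, Decidable (p z)} {f g : Tp d n → β} (hp : LC p) (hf : LC f) (hg : LC g) :
    LC (fun z => if p z then f z else g z) := by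
  classical
  have := LC.bind (f := fun z (q : Prop) => if q then f z else g z) (fun b => by by_cases b <;> simp_all) hp
  convert this

theorem LC.pi {ι β : Type} [Finite ι] {f : Tp d n → ι → β} (hf : ∀ i, LC (fun z => f z i)) : LC f := by
  classical
  have := Fintype.ofFinite ι
  intro z0
  choose F hF using fun i => hf i z0
  exact ⟨Finset.univ.biUnion F, fun z hz => funext fun i => hF i z fun v hv => hz v (Finset.mem_biUnion.2 ⟨i, Finset.mem_univ _, hv⟩)⟩

theorem LC.shift {β : Type} {f : Tp d n → β} (hf : LC f) (w : V d) : LC (fun z => f (fun x => z (x + w))) := by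
  classical
  intro z0
  obtain ⟨F, hF⟩ := hf (fun x => z0 (x + w))
  exact ⟨F.image (· + w), fun z hz => hF _ fun v hv => hz _ (Finset.mem_image_of_mem _ hv)⟩

theorem LC.unif {β : Type} {f : Tp d n → β} (hf : LC f) :
    ∃ F : Finset (V d), ∀ z z', (∀ v ∈ F, z v = z' v) → f z = f z' := by
  classical
  choose F hF using hf
  obtain ⟨t, -, ht⟩ := (isCompact_univ (X := Tp d n)).elim_nhds_subcover (fun z0 => Set.pi (F z0 : Set (V d)) (fun v => {z0 v}))
    (fun z0 _ => set_pi_mem_nhds (F z0).finite_toSet (fun v _ => by simp))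
  refine ⟨t.biUnion F, fun z z' h => ?_⟩
  obtain ⟨z0, h0, hz⟩ := Set.mem_iUnion₂.1 (ht (Set.mem_univ z))
  have hz1 : ∀ v ∈ F z0, z v = z0 v := fun v hv => by simpa using hz v (by simpa using hv)
  rw [hF z0 z hz1, hF z0 z' fun v hv => by rw [← hz1 v hv, h v (Finset.mem_biUnion.2 ⟨z0, h0, hv⟩)]]

/-- tape-dependent permutations of the positions -/
abbrev HH (d n : ℕ) := Tp d n → Equiv.Perm (V d)

def Eqv (h : HH d n) : Prop := ∀ z w v, h z (v + w) = h (fun x => z (x + w)) v + w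

theorem Eqv.inv {h : HH d n} (H : Eqv h) : Eqv h⁻¹ := by
  intro z w v
  rw [Pi.inv_apply, Pi.inv_apply, Equiv.Perm.inv_eq_iff_eq, H]; simp

structure Good (h : HH d n) : Prop where
  eqv : Eqv h
  lc : LC (fun z => h z 0)
  lci : LC (fun z => (h z)⁻¹ 0)

theorem Good.shift (t : V d) : Good (fun _ => Equiv.addRight t : HH d n) :=
  ⟨fun z w v => by simp only [Equiv.coe_addRight]; abel, LC.const _, LC.const _⟩

theorem lc_cfun {sl : Fin 5 → V d} {P : Tp d n → V d → Prop} (hP : ∀ v, LC (fun z => P z v)) (q : Equiv.Perm (Fin 5)) :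
    LC (fun z => cfun sl (P z) q 0) := by
  classical
  have : LC (fun z (o : Fin 5) => P z (0 - sl o)) := LC.pi fun o => hP _
  exact LC.map (fun p : Fin 5 → Prop => if h : ∃ o, p o then (0 : V d) - sl h.choose + sl (q h.choose) else 0) this

theorem Good.cp {sl : Fin 5 → V d} {P : Tp d n → V d → Prop} (hc : ∀ z, Cross sl (P z) (P z))
    (hP : ∀ v, LC (fun z => P z v)) (he : ∀ z w v, P (fun x => z (x + w)) v ↔ P z (v + w)) (q : Equiv.Perm (Fin 5)) :
    Good (fun z => cp sl (P z) q) := by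
  refine ⟨fun z w v => cp_cov (hc _) (hc _) w (he z w) q v, ?_, ?_⟩
  · simp only [fun z => cp_apply (hc z)]; exact lc_cfun hP q
  · simp only [fun z => cp_inv (hc z), fun z => cp_apply (hc z)]; exact lc_cfun hP q⁻¹

section tau
variable {G : Type} {K : CA G} {D : Tp d n → Dat (V d) G} {u e : V d} {sl : Fin 5 → V d}

structure LD (D : Tp d n → Dat (V d) G) : Prop where
  C : ∀ v, LC (fun z => (D z).C v)
  tl : ∀ v, LC (fun z => (D z).tl v)
  cf : ∀ v, LC (fun z => (D z).cf v)
  rf : ∀ v, LC (fun z => (D z).rf v)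
  ss : ∀ v, LC (fun z => (D z).ss v)
  tt : ∀ v, LC (fun z => (D z).tt v)
  sh : ∀ z w, D (fun x => z (x + w)) = (D z).sh w
  cr : ∀ z, Cross sl (D z).C (D z).C

theorem LD.good_tau (L : LD (sl := sl) D) : Good (fun z => (D z).tau K u e sl) := by
  have mv : ∀ v, LC (fun z => (D z).mvx u e v) := fun v => by
    have : LC (fun z => v + on1 ((D z).ss v) • u + on1 ((D z).tt v) • e) :=
      (L.ss v).map2 (fun a b => v + on1 a • u + on1 b • e) (L.tt v)
    exact (LC.bind (f := fun z x => (D z).tl x) L.tl this).map (fun t => t.ty = .CU)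
  have nx : ∀ v, LC (fun z => (D z).nxt u e v) := fun v =>
    (mv v).ite ((L.ss v).map (fun a => v + sg a • u)) ((L.tt v).map (fun a => v + sg a • e))
  have ns : ∀ v, LC (fun z => (D z).ns u e v) := fun v =>
    (mv v).ite (L.ss v) ((L.ss v).map (fun a => !a))
  have nt : ∀ v, LC (fun z => (D z).nt u e v) := fun v =>
    (mv v).ite ((L.tt v).map (fun a => !a)) (L.tt v)
  have fo : ∀ v, LC (fun z => (D z).FOK K u e v) := fun v =>
    ((((L.tl v).map2 (fun a b => fun c d e f => FaceV K a b c d e f) (L.tl (v + u))).map2 (fun a b => a b) (L.tl (v + e))).map2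
      (fun a b => a b) (L.tl (v + u + e))).map2 (fun a b => a b) (L.cf v) |>.map2 (fun a b => a b) (L.rf v)
  have lk : ∀ v, LC (fun z => (D z).Lk K u e v) := fun v =>
    (L.C v).and ((LC.bind (f := fun z x => (D z).C x) L.C (nx v)).and ((fo v).and
      (((LC.bind (f := fun z x => (D z).ss x) L.ss (nx v)).eq (ns v)).and
       ((LC.bind (f := fun z x => (D z).tt x) L.tt (nx v)).eq (nt v)))))
  have pv : ∀ v, LC (fun z => (D z).prv u e v) := fun v => by
    have : LC (fun z => v + on1 (!(D z).ss v) • u + on1 (!(D z).tt v) • e) :=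
      (L.ss v).map2 (fun a b => v + on1 (!a) • u + on1 (!b) • e) (L.tt v)
    exact ((LC.bind (f := fun z x => (D z).tl x) L.tl this).map (fun t => t.ty = .CU)).ite
      ((L.ss v).map (fun a => v - sg a • u)) ((L.tt v).map (fun a => v - sg a • e))
  have ta : ∀ v, LC (fun z => (D z).tauF K u e sl v) := fun v =>
    (lk _).ite ((nx _).map (· + sl 1))
      (((LC.bind (f := fun z x => (D z).Lk K u e x) lk (pv _)).and ((LC.bind (f := fun z x => (D z).nxt u e x) nx (pv _)).eq (LC.const _))).ite
        ((pv _).map (· + sl 0)) (LC.const _))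
  have inv : ∀ z, ((D z).tau K u e sl)⁻¹ = (D z).tau K u e sl := fun z => by
    rw [inv_eq_iff_mul_eq_one]; exact Dat.tau_sq (L.cr z)
  refine ⟨fun z w v => ?_, ?_, ?_⟩
  · rw [Dat.tau_apply (L.cr z), Dat.tau_apply (L.cr _), L.sh, Dat.sh_tauF]
  · simp only [fun z => Dat.tau_apply (K := K) (u := u) (e := e) (L.cr z)]; exact ta 0
  · simp only [inv, fun z => Dat.tau_apply (K := K) (u := u) (e := e) (L.cr z)]; exact ta 0

theorem LD.good_gen (L : LD (sl := sl) D) (gA gB : G) (g : Gen) : Good (fun z => gen K gA gB (D z) u e sl g) := by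
  have asg : ∀ (t s : V d) (fl : Tp d n → V d → Option (Lab G)) (σ : Option (Lab G)) (q), (∀ v, LC (fun z => fl z v)) →
      (∀ z w v, fl (fun x => z (x + w)) v = fl z (v + w)) → Good (fun z => Rfa.cp sl (Asg t s (D z).C (fl z) σ) q) := by
    intro t s fl σ q h1 h2
    refine Good.cp (fun z => (L.cr z).mono (fun _ h => h.1) (fun _ h => h.1)) ?_ ?_ q
    · intro v
      exact (L.C _).and ((L.C _).and (((h1 _).eq (LC.const _)).and (((h1 _).eq (LC.const _)).and ((h1 _).eq (LC.const _)))))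
    · intro z w v
      simp only [Asg, h2, L.sh]
      simp only [Dat.sh]
      rw [add_right_comm v t, add_right_comm v s, sub_add_eq_add_sub]
  match g with
  | .inl true => exact Good.shift u
  | .inl false => exact Good.shift e
  | .inr (.inl (true, c, i)) => exact asg _ _ _ _ _ L.cf (fun z w v => by rw [L.sh]; rfl)
  | .inr (.inl (false, c, i)) => exact asg _ _ _ _ _ L.rf (fun z w v => by rw [L.sh]; rfl)
  | .inr (.inr true) => exact Good.cp L.cr L.C (fun z w v => by rw [L.sh]; rfl) _
  | .inr (.inr false) => exact L.good_tau
end tau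
end lc

section real
variable {d n k : ℕ}

def PhiF (h : HH d n) (c : X d n k) : X d n k :=
  ⟨(c.val.1, fun t => c.val.2 ((h c.val.1)⁻¹ t)), fun _ _ ha hb => (h c.val.1)⁻¹.injective (c.2 _ _ ha hb)⟩

theorem PhiF_mul (h h' : HH d n) (c : X d n k) : PhiF h (PhiF h' c) = PhiF (h * h') c := by
  apply Subtype.ext
  simp [PhiF]

theorem PhiF_one (c : X d n k) : PhiF 1 c = c := by
  apply Subtype.ext
  simp [PhiF]

def Phi : HH d n →* Equiv.Perm (X d n k) where
  toFun h := ⟨PhiF h, PhiF h⁻¹, fun c => by rw [PhiF_mul]; simp [PhiF_one], fun c => by rw [PhiF_mul]; simp [PhiF_one]⟩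
  map_one' := Equiv.ext PhiF_one
  map_mul' h h' := Equiv.ext fun c => (PhiF_mul h h' c).symm

theorem Phi_inj (hk : 1 ≤ k) : Injective (Phi : HH d n →* Equiv.Perm (X d n k)) := by
  classical
  rw [injective_iff_map_eq_one]
  intro h hh
  funext z
  rw [Pi.one_apply]
  ext1 v
  rw [Equiv.Perm.one_apply]
  let c : X d n k := ⟨(z, fun t => if t = v then some ⟨0, hk⟩ else none), fun a b ha hb => by
    simp only at ha hb
    split_ifs at ha hb with h1 h2
    · rw [h1, h2]
    all_goals simp at ha hb⟩
  have h1 : PhiF h c = c := congrArg (fun f => f c) hh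
  have h2 := congrArg (fun c : X d n k => c.val.2 (h z v)) h1
  simp [PhiF, c] at h2
  by_contra h3
  simp [h3] at h2

theorem isTM_PhiF {h : HH d n} (he : Eqv h) (hl : LC (fun z => h z 0)) : IsTM (PhiF h : X d n k → X d n k) := by
  obtain ⟨F, hF⟩ := hl.unif
  refine ⟨F, ∅, fun x q => (x, q, h x 0), fun x x' q hx => ⟨by simp, by simp [hF x x' hx]⟩, fun c hc => ?_, fun c v q hv => ⟨fun t => by simp [PhiF], fun t => ?_⟩⟩
  · apply Subtype.ext
    refine Prod.ext rfl ?_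
    funext t
    simp [PhiF, hc]
  · have e := he c.val.1 v 0
    rw [zero_add] at e
    simp only [PhiF]
    rw [add_comm v, ← e]
    split_ifs with ht
    · rw [ht]; simpa using hv
    · by_contra h0
      have := c.2 _ _ (Option.isSome_iff_ne_none.2 h0) (by rw [hv]; rfl)
      rw [Equiv.Perm.inv_eq_iff_eq] at this
      exact ht this

theorem Good.rfa {h : HH d n} (H : Good h) : (Phi h : Equiv.Perm (X d n k)) ∈ RFAset d n k :=
  ⟨⟨isTM_PhiF H.eqv H.lc, isTM_PhiF (h := h⁻¹) H.eqv.inv H.lci⟩, fun _ => rfl⟩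
end real
end Rfa

namespace Rfa

theorem fin_W5 : Finite W5 :=
  Finite.of_injective (fun x : W5 => (match x with | .a0 => 0 | .a1 => 1 | .ab => 2 | .eq => 3 | .be => 4 : Fin 5))
    (by rintro ⟨⟩ ⟨⟩ h <;> simp_all)

theorem fin_Ty : Finite Ty :=
  Finite.of_injective (fun x : Ty => (match x with | .E => 0 | .RU => 1 | .CU => 2 : Fin 3))
    (by rintro ⟨⟩ ⟨⟩ h <;> simp_all)

theorem fin_Col (G : Type) [Finite G] : Finite (Col G) := by
  have := fin_W5
  refine Finite.of_injective (fun c : Col G => ((c.l, c.u, c.gs, c.w, c.g, c.kA), (c.kB, c.pb, c.pf, c.k, c.dg, c.hs))) ?_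
  rintro ⟨⟩ ⟨⟩ h
  simp only [Prod.mk.injEq] at h
  simp [h]

theorem fin_Tile (G : Type) [Finite G] : Finite (Tile G) := by
  have := fin_Col G
  have := fin_Ty
  refine Finite.of_injective (fun c : Tile G => (c.w, c.e, c.s, c.n, c.ty)) ?_
  rintro ⟨⟩ ⟨⟩ h
  simp only [Prod.mk.injEq] at h
  simp [h]

abbrev Dt (G : Type) := Tile G × Option (Lab G) × Option (Lab G) × Bool × Bool

theorem exists_code (β : Type) [Finite β] [Nonempty β] : ∃ (B : ℕ) (enc : β → Fin B → Bool) (dec : (Fin B → Bool) → β),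
    ∀ x, dec (enc x) = x := by
  classical
  obtain ⟨B, ⟨e⟩⟩ := Finite.exists_equiv_fin β
  refine ⟨B, fun x i => decide (e x = i), Function.invFun _, Function.leftInverse_invFun fun x y h => ?_⟩
  have := congrFun h (e x)
  simp at this
  exact this.symm

section enc
variable {d n B : ℕ} {G : Type} (hd : 2 ≤ d) (dec : (Fin B → Bool) → Dt G)

def ax0 : V d := Pi.single ⟨0, by omega⟩ 1
def ax1 : V d := Pi.single ⟨1, by omega⟩ 1
def bt (z : Tp d n) (v : V d) : Bool := decide ((z v).val ≠ 0)

theorem lc_bt (v : V d) : LC (fun z : Tp d n => bt z v) :=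
  fun z0 => ⟨{v}, fun z h => by simp only [bt]; rw [h v (by simp)]⟩

def C0 (z : Tp d n) : Prop := bt z 0 = true ∧ ∀ j : Fin 4, bt z ((j.val + 1) • ax0 hd) = false
def d0 (z : Tp d n) : Dt G := dec (fun i => bt z ((5 + i.val) • ax0 hd))

def DD (z : Tp d n) : Dat (V d) G where
  C v := C0 hd (fun x => z (x + v))
  tl v := (d0 hd dec (fun x => z (x + v))).1
  cf v := (d0 hd dec (fun x => z (x + v))).2.1
  rf v := (d0 hd dec (fun x => z (x + v))).2.2.1
  ss v := (d0 hd dec (fun x => z (x + v))).2.2.2.1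
  tt v := (d0 hd dec (fun x => z (x + v))).2.2.2.2

def slt (o : Fin 5) : V d := o.val • ax0 hd

theorem LD_DD : LD (sl := slt hd) (DD (n := n) hd dec) := by
  have h1 : LC (C0 (n := n) hd) := ((lc_bt 0).eq (LC.const _)).and
    ((LC.pi (f := fun z (j : Fin 4) => bt z ((j.val + 1) • ax0 hd)) (fun _ => lc_bt _)).map (fun p => ∀ j, p j = false))
  have h2 : LC (d0 (n := n) hd dec) := (LC.pi (f := fun z (i : Fin B) => bt z ((5 + i.val) • ax0 hd)) (fun _ => lc_bt _)).map dec
  refine ⟨fun v => h1.shift v, fun v => (h2.shift v).map (fun x => x.1), fun v => (h2.shift v).map (fun x => x.2.1),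
    fun v => (h2.shift v).map (fun x => x.2.2.1), fun v => (h2.shift v).map (fun x => x.2.2.2.1),
    fun v => (h2.shift v).map (fun x => x.2.2.2.2), fun z w => ?_, fun z => ?_⟩
  · simp only [DD, Dat.sh, add_assoc]
  · have key : ∀ (v v' : V d) (o o' : Fin 5), C0 hd (fun x => z (x + v)) → C0 hd (fun x => z (x + v')) →
        v + slt hd o = v' + slt hd o' → o ≤ o' → v = v' ∧ o = o' := by
      intro v v' o o' h h' e hle
      obtain ⟨c, hc⟩ := Nat.exists_eq_add_of_le (Fin.le_def.1 hle)
      have e1 : v = c • ax0 hd + v' := by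
        simp only [slt, hc, add_nsmul] at e
        have := congrArg (· - o.val • ax0 hd) e
        simp only [add_sub_cancel_right] at this
        rw [this]; abel
      rcases c with - | c
      · exact ⟨by simpa using e1, Fin.ext (by omega)⟩
      · exfalso
        have a := h.1
        have b := h'.2 ⟨c, by have := o'.2; omega⟩
        have e2 : bt (fun x => z (x + v')) ((c + 1) • ax0 hd) = bt (fun x => z (x + v)) 0 := by
          subst e1
          simp only [bt, zero_add]
        have b' : bt (fun x => z (x + v')) ((c + 1) • ax0 hd) = false := b
        rw [e2, a] at b'
        exact absurd b' (by decide)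
    intro v v' o o' h h' e
    rcases le_total o o' with hle | hle
    · exact key _ _ _ _ h h' e hle
    · obtain ⟨a, b⟩ := key _ _ _ _ h' h e.symm hle
      exact ⟨a.symm, b.symm⟩

variable {dec}

theorem exists_tape (hn : 2 ≤ n) {enc : Dt G → Fin B → Bool} (he : ∀ x, dec (enc x) = x) (δ : ℤ → ℤ → Dt G) :
    ∃ z : Tp d n, ∀ X Y : ℤ, C0 hd (fun x => z (x + (X • ((5 + B) • ax0 hd) + Y • ax1 hd))) ∧
      d0 hd dec (fun x => z (x + (X • ((5 + B) • ax0 hd) + Y • ax1 hd))) = δ X Y := by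
  let bit : ℤ → ℤ → Bool := fun a b =>
    let o := (a % (5 + B)).toNat
    if o = 0 then true else if h : 5 ≤ o ∧ o < 5 + B then enc (δ (a / (5 + B)) b) ⟨o - 5, by omega⟩ else false
  refine ⟨fun v => if bit (v ⟨0, by omega⟩) (v ⟨1, by omega⟩) then ⟨1, by omega⟩ else ⟨0, by omega⟩, fun X Y => ?_⟩
  have hb : ∀ j : ℕ, bt (n := n) (fun x => (fun v : V d => if bit (v ⟨0, by omega⟩) (v ⟨1, by omega⟩) then (⟨1, by omega⟩ : Fin n) else ⟨0, by omega⟩) (x + (X • ((5 + B) • ax0 hd) + Y • ax1 hd))) (j • ax0 hd) = bit (j + X * (5 + B)) Y := by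
    intro j
    simp only [bt]
    have q1 : (j • ax0 hd + (X • ((5 + B) • ax0 hd) + Y • ax1 hd)) ⟨0, by omega⟩ = j + X * (5 + B) := by
      simp [ax0, ax1, Pi.single_apply]
    have q2 : (j • ax0 hd + (X • ((5 + B) • ax0 hd) + Y • ax1 hd)) ⟨1, by omega⟩ = Y := by
      simp [ax0, ax1, Pi.single_apply]
    simp only [q1, q2]
    cases bit (j + X * (5 + B)) Y <;> simp
  have hbit : ∀ j : ℕ, j < 5 + B → bit (j + X * (5 + B)) Y =
      if j = 0 then true else if h : 5 ≤ j ∧ j < 5 + B then enc (δ X Y) ⟨j - 5, by omega⟩ else false := by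
    intro j hj
    have r1 : ((j:ℤ) + X * (5 + B)) % (5 + B) = j := by
      rw [Int.add_mul_emod_self_right, Int.emod_eq_of_lt (by omega) (by omega)]
    have r2 : ((j:ℤ) + X * (5 + B)) / (5 + B) = X := by
      rw [Int.add_mul_ediv_right _ _ (by omega), Int.ediv_eq_zero_of_lt (by omega) (by omega), zero_add]
    simp only [bit, r1, r2, Int.toNat_natCast]
  refine ⟨⟨?_, fun j => ?_⟩, ?_⟩
  · have := hb 0
    rw [zero_smul] at this
    rw [this, hbit 0 (by omega)]; simp
  · rw [hb, hbit _ (by omega)]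
    have := j.2
    rw [if_neg (by omega), dif_neg (by omega)]
  · rw [d0]
    have : (fun i : Fin B => bt (n := n) (fun x => (fun v : V d => if bit (v ⟨0, by omega⟩) (v ⟨1, by omega⟩) then (⟨1, by omega⟩ : Fin n) else ⟨0, by omega⟩) (x + (X • ((5 + B) • ax0 hd) + Y • ax1 hd))) ((5 + i.val) • ax0 hd)) = enc (δ X Y) := by
      funext i
      have := i.2
      rw [hb, hbit _ (by omega), if_neg (by omega), dif_pos ⟨by omega, by omega⟩]
      congr 1
      exact Fin.ext (by simp)
    rw [this, he]
end enc

theorem main_thm (d n k : ℕ) (hn : 2 ≤ n) (hk : 1 ≤ k) (hd : 2 ≤ d) :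
    ∃ (m : ℕ) (π : Fin m → Equiv.Perm (X d n k)),
      (∀ i, π i ∈ RFAset d n k) ∧
      ¬ ∃ g : ℕ → Bool, Computable g ∧
        ∀ w : List (Fin m × Bool),
          (g (Encodable.encode w) = true ↔ IsOfFinOrder (evalWord π w)) := by
  obtain ⟨G, hG, K, gA, gB, hund⟩ := ca_undec
  have := fin_Tile G
  have c0 : Col G := ⟨(K.b, true), .a0, none, .a0, none, 0, 0, true, true, 0, true, none⟩
  have : Nonempty (Dt G) := ⟨⟨⟨c0, c0, c0, c0, .E⟩, none, none, true, true⟩⟩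
  obtain ⟨B, enc, dec, hed⟩ := exists_code (Dt G)
  set u : V d := (5 + B) • ax0 hd with hu
  set e : V d := ax1 hd with he
  let ι : Gen ≃ Fin (Fintype.card Gen) := Fintype.equivFin Gen
  let π0 : Fin (Fintype.card Gen) → HH d n := fun i z => gen K gA gB (DD hd dec z) u e (slt hd) (ι.symm i)
  have L := LD_DD (n := n) hd dec
  refine ⟨Fintype.card Gen, fun i => Phi (π0 i), fun i => (L.good_gen gA gB _).rfa, ?_⟩
  rintro ⟨g, hg, hgw⟩
  apply hund
  rw [ComputablePred.computable_iff]
  refine ⟨fun j => g (Encodable.encode (wFull ι j)), hg.comp (Primrec.encode.comp (pr_full ι)).to_comp, ?_⟩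
  funext j
  refine propext (Iff.trans ?_ (hgw (wFull ι j)).symm)
  have E1 : evalWord (fun i => (Phi (π0 i) : Equiv.Perm (X d n k))) (wFull ι j) = Phi (ev π0 (wFull ι j)) := (ev_hom π0 Phi _).symm
  have E2 : ∀ z, ev π0 (wFull ι j) z = cp (slt hd) ((DD hd dec z).Cert u e (2*j+2) (fun i => olab ((2*j+2 : ℕ) : ℤ) (initc K.b gA gB j) i)) p2 * (DD hd dec z).tau K u e (slt hd) := by
    intro z
    have : ev π0 (wFull ι j) z = ev (fun i => π0 i z) (wFull ι j) := ev_hom π0 (Pi.evalMonoidHom _ z) _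
    rw [this]
    exact ev_full K gA gB (DD hd dec z) u e (slt hd) ι _ (fun g => by simp [π0]) (L.cr z) j
  have hbl : ∀ i : ℤ, i < 1 ∨ ((2*j+2 : ℕ) : ℤ) < i → initc K.b gA gB j i = K.b := by
    intro i hi
    rw [initc, if_neg (by omega), if_neg (by omega)]
  have hbo : (2*j+2).bodd = false := by simp
  rw [E1, (Phi_inj hk).isOfFinOrder_iff, isOfFinOrder_iff_pow_eq_one]
  constructor
  · rintro ⟨T, i, hb⟩
    obtain ⟨N, hN⟩ := sound_main K T (2*j+2) _ (by omega) hbo hbl ⟨i, hb⟩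
    refine ⟨(4 * N + 3).factorial, Nat.factorial_pos _, ?_⟩
    funext z
    rw [Pi.pow_apply, E2]
    exact Dat.fin_order (L.cr z) (fun v h => h.1.choose_spec.code) N (Dat.no_chain (by omega) N hN)
  · rintro ⟨r, hr, hh⟩
    by_contra hnb
    push Not at hnb
    obtain ⟨w, R, hR, hw⟩ := comp_main K r (2*j+2) _ (by omega) hbo hbl hnb
    let γ := initc K.b gA gB j
    let m : ℤ := (2*j+2 : ℕ)
    obtain ⟨z, hz⟩ := exists_tape hd hn hed
      (fun X Y => (w.tile X Y, olab m γ (X % (m+1)), olab m γ (Y % (m+1)), decide (Y % 2 = 0), decide (X % 2 = 0)))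
    have hz1 := fun X Y => (hz X Y).1
    have hz2 := fun X Y => (hz X Y).2
    have := congrFun hh z
    rw [Pi.pow_apply, E2] at this
    refine Dat.inf_order (by omega) (L.cr z) ?_ hR hw hz1 ?_ ?_ ?_ ?_ ?_ r hr (Nat.lt_pow_self (by omega)) this
    · intro X Y h
      have h1 := congrFun h ⟨0, by omega⟩
      have h2 := congrFun h ⟨1, by omega⟩
      simp [hu, he, ax0, ax1, Pi.single_apply] at h1 h2
      exact ⟨by omega, h2⟩
    all_goals
      intro X Y
      simp only [DD, hu, he]
      rw [hz2]
end Rfa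

/-- For `d ≥ 2` and `n ≥ 2`, there is a finitely generated subgroup of
`RFA(ℤ^d,n,k)` (generated by finitely many reversible finite-state automata
`π 0, …, π (m-1)`) whose torsion problem is undecidable: no algorithm decides,
given a word over the generators and their inverses, whether the represented
element has finite order. -/
theorem rfa_torsion_undecidable_dim_ge_two (d n k : ℕ)
    (hn : 2 ≤ n) (hk : 1 ≤ k) (hd : 2 ≤ d) :
    ∃ (m : ℕ) (π : Fin m → Equiv.Perm (X d n k)),
      (∀ i, π i ∈ RFAset d n k) ∧
      ¬ ∃ g : ℕ → Bool, Computable g ∧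
        ∀ w : List (Fin m × Bool),
          (g (Encodable.encode w) = true ↔ IsOfFinOrder (evalWord π w)) := by
  exact Rfa.main_thm d n k hn hk hd
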